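/- arXiv:1904.03533 — 4 statements merged into one kernel-verified Lean document; each statement's English description precedes it below -/
import Mathlib

section
/- (Alon–Boppana) For every integer k ≥ 3 and every ε > 0 there exists N such that every finite connected k-regular graph X with more than N vertices has an adjacency eigenvalue λ with λ ≠ k and λ > 2√(k−1) − ε. -/
open Matrix

/-!
With `t = √(k - 1)`, the spherical function of the `k`-regular tree at the edge `2t` of its spectrum
is positive and decreasing in the radius. Being decreasing, it transplants to any `k`-regular graph,
as a function of the distance to a fixed vertex `v`, with `A f ≥ 2t f`: a vertex at distance `i + 1`
from `v` has a neighbour at distance `i`, and all others lie at distance at most `i + 2`. A linear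
cutoff at radius `r` costs only a factor `1 - 1 / (r + 1)`. The resulting test function lives on a
ball whose size depends only on `k` and `r`, so by Cauchy–Schwarz its component along the constants
is negligible once the graph is large. After that component is removed, the Rayleigh quotient is
still close to `2t`, and it is witnessed by an eigenvector that is not constant, hence not in the
eigenspace of `k`.
-/

open Finset

/-- The spherical function of the `(t² + 1)`-regular tree for the eigenvalue `2t`, as a function of
the radius, scaled to take the value `t² + 1` at the root. -/
noncomputable def treeSpherical (t : ℝ) (i : ℕ) : ℝ :=
  (t ^ 2 + 1 + (t ^ 2 - 1) * i) / t ^ i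

section TreeSpherical

variable {t : ℝ}

lemma treeSpherical_zero_recurrence (ht : t ≠ 0) :
    2 * t * treeSpherical t 0 = (t ^ 2 + 1) * treeSpherical t 1 := by
  simp only [treeSpherical, Nat.cast_zero, Nat.cast_one, pow_zero, pow_one]
  field_simp
  ring

lemma treeSpherical_recurrence (ht : t ≠ 0) (i : ℕ) :
    2 * t * treeSpherical t (i + 1) = treeSpherical t i + t ^ 2 * treeSpherical t (i + 2) := by
  simp only [treeSpherical, Nat.cast_add, Nat.cast_one, Nat.cast_ofNat]
  field_simp
  ring

lemma treeSpherical_pos (ht : 1 ≤ t) (i : ℕ) : 0 < treeSpherical t i := by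
  have hsq : 0 ≤ t ^ 2 - 1 := sub_nonneg.2 (one_le_pow₀ ht)
  unfold treeSpherical
  positivity

lemma treeSpherical_antitone (ht : 1 ≤ t) : Antitone (treeSpherical t) := by
  refine antitone_nat_of_succ_le fun i ↦ ?_
  have : 0 < t := by positivity
  have hsq : 0 ≤ t ^ 2 - 1 := sub_nonneg.2 (one_le_pow₀ ht)
  have hnum : t ^ 2 + 1 + (t ^ 2 - 1) * (i + 1) ≤ (t ^ 2 + 1 + (t ^ 2 - 1) * i) * t := by
    have hroot : 0 ≤ t * (t - 1) ^ 2 := by positivity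
    have hslope : 0 ≤ (t - 1) * (t ^ 2 - 1) * i :=
      mul_nonneg (mul_nonneg (sub_nonneg.2 ht) hsq) i.cast_nonneg
    linarith
  rw [treeSpherical, treeSpherical, pow_succ' t i, div_le_div_iff₀ (by positivity) (by positivity),
    ← mul_assoc, Nat.cast_succ]
  gcongr

lemma treeSpherical_sub_le (ht : 1 ≤ t) (i : ℕ) :
    t ^ 2 * treeSpherical t (i + 2) - treeSpherical t i ≤
      2 * t * treeSpherical t (i + 1) / (i + 2) := by
  have : 0 < t := by positivity
  calc t ^ 2 * treeSpherical t (i + 2) - treeSpherical t i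
      = 2 * (t ^ 2 - 1) / t ^ i := by
        simp only [treeSpherical, Nat.cast_add, Nat.cast_ofNat]
        field_simp
        ring
    _ ≤ 2 * (t ^ 2 - 1) / t ^ i + 4 / ((i + 2) * t ^ i) := le_add_of_nonneg_right (by positivity)
    _ = 2 * t * treeSpherical t (i + 1) / (i + 2) := by
        simp only [treeSpherical, Nat.cast_add, Nat.cast_one]
        field_simp
        ring

end TreeSpherical

/-- The radial test function: the spherical function `treeSpherical t` times a linear cutoff,
supported on radii at most `r`. The subtraction `r + 1 - i` is truncated on purpose. -/
noncomputable def radialProfile (t : ℝ) (r i : ℕ) : ℝ :=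
  (r + 1 - i : ℕ) * treeSpherical t i

section RadialProfile

variable {t : ℝ}

lemma radialProfile_eq_zero (t : ℝ) {r i : ℕ} (h : r < i) : radialProfile t r i = 0 := by
  rw [radialProfile, Nat.sub_eq_zero_of_le h, Nat.cast_zero, zero_mul]

lemma radialProfile_nonneg (ht : 1 ≤ t) (r i : ℕ) : 0 ≤ radialProfile t r i :=
  mul_nonneg (Nat.cast_nonneg _) (treeSpherical_pos ht i).le

lemma radialProfile_zero_pos (ht : 1 ≤ t) (r : ℕ) : 0 < radialProfile t r 0 :=
  mul_pos (Nat.cast_pos.2 r.succ_pos) (treeSpherical_pos ht 0)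

lemma radialProfile_antitone (ht : 1 ≤ t) (r : ℕ) : Antitone (radialProfile t r) := fun _ j hij ↦
  mul_le_mul (Nat.cast_le.2 (Nat.sub_le_sub_left hij (r + 1))) (treeSpherical_antitone ht hij)
    (treeSpherical_pos ht j).le (Nat.cast_nonneg _)

lemma radialProfile_zero_recurrence (ht : t ≠ 0) (r : ℕ) :
    2 * t * (1 - 1 / (r + 1)) * radialProfile t r 0 = (t ^ 2 + 1) * radialProfile t r 1 := by
  calc 2 * t * (1 - 1 / (r + 1)) * radialProfile t r 0
      = r * (2 * t * treeSpherical t 0) := by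
        simp only [radialProfile, Nat.sub_zero, Nat.cast_succ]
        field_simp
        ring
    _ = (t ^ 2 + 1) * radialProfile t r 1 := by
        rw [treeSpherical_zero_recurrence ht, radialProfile, Nat.add_sub_cancel]
        ring

lemma radialProfile_recurrence_le (ht : 1 ≤ t) (r i : ℕ) :
    2 * t * (1 - 1 / (r + 1)) * radialProfile t r (i + 1) ≤
      radialProfile t r i + t ^ 2 * radialProfile t r (i + 2) := by
  have ht₀ : 0 < t := by positivity
  obtain hi | hi := lt_or_ge r (i + 1)
  · rw [radialProfile_eq_zero t hi, mul_zero]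
    exact add_nonneg (radialProfile_nonneg ht r i)
      (mul_nonneg (sq_nonneg t) (radialProfile_nonneg ht r (i + 2)))
  obtain ⟨d, rfl⟩ := Nat.exists_eq_add_of_le hi
  have hφ := (treeSpherical_pos ht (i + 1)).le
  have hdrop : t ^ 2 * treeSpherical t (i + 2) - treeSpherical t i ≤
      2 * t * treeSpherical t (i + 1) * ((d + 1) / (i + 1 + d + 1)) := by
    refine (treeSpherical_sub_le ht i).trans ?_
    rw [div_eq_mul_one_div]
    gcongr ?_ * ?_
    rw [div_le_div_iff₀ (by positivity) (by positivity)]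
    have : (0 : ℝ) ≤ d * (i + 1) := by positivity
    linarith
  have hrec := treeSpherical_recurrence ht₀.ne' i
  simp only [radialProfile, show i + 1 + d + 1 - (i + 1) = d + 1 by lia,
    show i + 1 + d + 1 - i = d + 2 by lia, show i + 1 + d + 1 - (i + 2) = d by lia]
  push_cast
  linear_combination hdrop + (d + 1) * hrec

end RadialProfile

section Metric

variable {V : Type*} {G : SimpleGraph V}

lemma exists_adj_dist_eq_of_dist_eq_succ {v x : V} {i : ℕ} (h : G.dist v x = i + 1) :
    ∃ y, G.Adj x y ∧ G.dist v y = i := by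
  obtain ⟨p, hp⟩ := G.exists_walk_of_dist_ne_zero (u := x) (v := v) (by rw [G.dist_comm]; lia)
  rw [G.dist_comm, h] at hp
  cases p with
  | nil => simp at hp
  | @cons _ y _ hxy p =>
    have hle : G.dist v y ≤ i := G.dist_comm.trans_le <| (G.dist_le p).trans (by simpa using hp.le)
    exact ⟨y, hxy, by have := hxy.diff_dist_adj (u := v); lia⟩

variable [Fintype V] [DecidableRel G.Adj]

lemma card_dist_le_le_pow (hG : G.Connected) {d : ℕ} (hd : ∀ x, G.degree x ≤ d) (v : V) (r : ℕ) :
    #{x | G.dist v x ≤ r} ≤ (d + 1) ^ r := by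
  classical
  induction r with
  | zero => simp [hG.dist_eq_zero_iff, filter_eq]
  | succ r ih =>
    have hsub : ({x | G.dist v x ≤ r + 1} : Finset V) ⊆
        ({x | G.dist v x ≤ r} : Finset V).biUnion fun y ↦ insert y (G.neighborFinset y) := by
      intro x hx
      simp only [mem_filter_univ, mem_biUnion, mem_insert, SimpleGraph.mem_neighborFinset] at hx ⊢
      obtain hx | hx := Nat.le_succ_iff.1 hx
      · exact ⟨x, hx, Or.inl rfl⟩
      · obtain ⟨y, hxy, hy⟩ := exists_adj_dist_eq_of_dist_eq_succ hx
        exact ⟨y, hy.le, Or.inr hxy.symm⟩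
    calc #{x | G.dist v x ≤ r + 1}
        ≤ #{x | G.dist v x ≤ r} * (d + 1) :=
          (card_le_card hsub).trans <| card_biUnion_le_card_mul _ _ _ fun y _ ↦
            (card_insert_le _ _).trans <| Nat.succ_le_succ <|
              (G.card_neighborFinset_eq_degree y).trans_le (hd y)
      _ ≤ (d + 1) ^ (r + 1) := by
          rw [pow_succ]
          gcongr

lemma adjMatrix_mulVec_radial_center (f : ℕ → ℝ) (v : V) :
    (G.adjMatrix ℝ *ᵥ fun y ↦ f (G.dist v y)) v = G.degree v * f 1 := by
  rw [G.adjMatrix_mulVec_apply, ← G.card_neighborFinset_eq_degree, ← nsmul_eq_mul]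
  refine sum_eq_card_nsmul fun y hy ↦ ?_
  rw [SimpleGraph.dist_eq_one_iff_adj.2 ((G.mem_neighborFinset v y).1 hy)]

lemma le_adjMatrix_mulVec_radial {f : ℕ → ℝ} (hf : Antitone f) {v x : V} {i : ℕ}
    (h : G.dist v x = i + 1) :
    f i + (G.degree x - 1) * f (i + 2) ≤ (G.adjMatrix ℝ *ᵥ fun y ↦ f (G.dist v y)) x := by
  classical
  obtain ⟨y, hxy, hy⟩ := exists_adj_dist_eq_of_dist_eq_succ h
  have hmem : y ∈ G.neighborFinset x := (G.mem_neighborFinset x y).2 hxy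
  rw [G.adjMatrix_mulVec_apply, ← add_sum_erase _ _ hmem, hy, ← G.card_neighborFinset_eq_degree,
    ← cast_card_erase_of_mem hmem, ← nsmul_eq_mul]
  gcongr
  refine card_nsmul_le_sum _ _ _ fun z hz ↦ hf ?_
  have := ((G.mem_neighborFinset x z).1 (mem_of_mem_erase hz)).diff_dist_adj (u := v)
  lia

end Metric

section RayleighQuotient

variable {n : Type*} [Fintype n]

lemma sum_dotProduct_mul_dotProduct {ι : Type*} [Fintype ι]
    (b : OrthonormalBasis ι ℝ (EuclideanSpace ℝ n)) (f g : n → ℝ) :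
    ∑ i, (⇑(b i) ⬝ᵥ f) * (⇑(b i) ⬝ᵥ g) = f ⬝ᵥ g := by
  have h := b.sum_inner_mul_inner (WithLp.toLp 2 f) (WithLp.toLp 2 g)
  simp only [EuclideanSpace.inner_eq_star_dotProduct, star_trivial] at h
  simpa only [dotProduct_comm g] using h

lemma exists_eigenvector_gt_of_lt_dotProduct_mulVec {M : Matrix n n ℝ} (hM : M.IsHermitian)
    {c : ℝ} {f : n → ℝ} (hf : c * (f ⬝ᵥ f) < f ⬝ᵥ (M *ᵥ f)) :
    ∃ (lam : ℝ) (x : n → ℝ), M *ᵥ x = lam • x ∧ x ⬝ᵥ f ≠ 0 ∧ lam > c := by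
  classical
  set u : n → n → ℝ := fun i ↦ ⇑(hM.eigenvectorBasis i)
  have hu (i : n) : M *ᵥ u i = hM.eigenvalues i • u i := hM.mulVec_eigenvectorBasis i
  have huM (i : n) : u i ⬝ᵥ (M *ᵥ f) = hM.eigenvalues i * (u i ⬝ᵥ f) := by
    rw [dotProduct_mulVec, ← mulVec_transpose, ← conjTranspose_eq_transpose_of_trivial, hM.eq, hu,
      smul_dotProduct, smul_eq_mul]
  contrapose! hf
  calc f ⬝ᵥ (M *ᵥ f) = ∑ i, hM.eigenvalues i * (u i ⬝ᵥ f) ^ 2 := by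
        rw [← sum_dotProduct_mul_dotProduct hM.eigenvectorBasis]
        exact sum_congr rfl fun i _ ↦ by rw [huM]; ring
    _ ≤ ∑ i, c * (u i ⬝ᵥ f) ^ 2 := by
        refine sum_le_sum fun i _ ↦ ?_
        obtain h | h := eq_or_ne (u i ⬝ᵥ f) 0
        · simp [h]
        · exact mul_le_mul_of_nonneg_right (hf _ _ (hu i) h) (sq_nonneg _)
    _ = c * (f ⬝ᵥ f) := by
        simp only [← sum_dotProduct_mul_dotProduct hM.eigenvectorBasis f f, mul_sum, sq, u]

lemma sq_sum_le_card_mul_dotProduct {s : Finset n} {f : n → ℝ} (hf : ∀ x ∉ s, f x = 0) :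
    (∑ x, f x) ^ 2 ≤ #s * (f ⬝ᵥ f) := by
  have hs (g : n → ℝ) (hg : ∀ x ∉ s, g x = 0) : ∑ x, g x = ∑ x ∈ s, g x :=
    (sum_subset (subset_univ s) fun x _ ↦ hg x).symm
  calc (∑ x, f x) ^ 2 = (∑ x ∈ s, f x) ^ 2 := by rw [hs f hf]
    _ ≤ #s * ∑ x ∈ s, f x ^ 2 := sq_sum_le_card_mul_sum_sq
    _ = #s * (f ⬝ᵥ f) := by
      rw [← hs _ fun x hx ↦ by rw [hf x hx, zero_pow two_ne_zero]]
      simp only [dotProduct, sq]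

end RayleighQuotient

section RegularGraph

variable {V : Type*} [Fintype V] {G : SimpleGraph V} [DecidableRel G.Adj] {k : ℕ}

lemma eq_of_adjMatrix_mulVec_eq_degree_smul (hk : G.IsRegularOfDegree k) {x : V → ℝ}
    (hx : G.adjMatrix ℝ *ᵥ x = (k : ℝ) • x) {u v : V} (huv : G.Reachable u v) : x u = x v := by
  classical
  refine G.lapMatrix_mulVec_eq_zero_iff_forall_reachable.1 ?_ u v huv
  ext w
  rw [G.lapMatrix_mulVec_apply, ← G.adjMatrix_mulVec_apply, hx, hk w, Pi.smul_apply, smul_eq_mul,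
    sub_self, Pi.zero_apply]

lemma exists_adjMatrix_eigenvalue_gt_of_sum_eq_zero (hG : G.Connected) (hk : G.IsRegularOfDegree k)
    {c : ℝ} {f : V → ℝ} (hsum : ∑ v, f v = 0)
    (hf : c * (f ⬝ᵥ f) < f ⬝ᵥ (G.adjMatrix ℝ *ᵥ f)) :
    ∃ lam : ℝ, (∃ x : V → ℝ, x ≠ 0 ∧ G.adjMatrix ℝ *ᵥ x = lam • x) ∧ lam ≠ k ∧ lam > c := by
  obtain ⟨lam, x, hx, hxf, hlam⟩ :=
    exists_eigenvector_gt_of_lt_dotProduct_mulVec (G.isHermitian_adjMatrix ℝ) hf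
  refine ⟨lam, ⟨x, fun hx₀ ↦ hxf (by rw [hx₀, zero_dotProduct]), hx⟩, ?_, hlam⟩
  rintro rfl
  obtain ⟨v⟩ := hG.nonempty
  apply hxf
  calc x ⬝ᵥ f = ∑ u, x v * f u := sum_congr rfl fun u _ ↦ by
        rw [eq_of_adjMatrix_mulVec_eq_degree_smul hk hx (hG.preconnected u v)]
    _ = 0 := by rw [← mul_sum, hsum, mul_zero]

lemma exists_adjMatrix_eigenvalue_gt_of_lt_dotProduct_mulVec (hG : G.Connected)
    (hk : G.IsRegularOfDegree k) {c : ℝ} {f : V → ℝ}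
    (hf : c * (f ⬝ᵥ f) + (k - c) / Fintype.card V * (∑ v, f v) ^ 2 <
      f ⬝ᵥ (G.adjMatrix ℝ *ᵥ f)) :
    ∃ lam : ℝ, (∃ x : V → ℝ, x ≠ 0 ∧ G.adjMatrix ℝ *ᵥ x = lam • x) ∧ lam ≠ k ∧ lam > c := by
  have := hG.nonempty
  have hn : (Fintype.card V : ℝ) ≠ 0 := by positivity
  set m : ℝ := (∑ v, f v) / Fintype.card V with hm
  set e : V → ℝ := Function.const V m with he
  have hfe : f ⬝ᵥ e = m * ∑ v, f v := by
    simp only [he, dotProduct, Function.const_apply, ← sum_mul, mul_comm]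
  have hee : e ⬝ᵥ e = m * ∑ v, f v := by
    simp only [he, dotProduct, Function.const_apply, sum_const, card_univ, nsmul_eq_mul]
    rw [hm]
    field_simp
  have hAe : G.adjMatrix ℝ *ᵥ e = (k : ℝ) • e := by
    ext v
    exact G.adjMatrix_mulVec_const_apply_of_regular hk
  have heA : e ⬝ᵥ (G.adjMatrix ℝ *ᵥ f) = k * (m * ∑ v, f v) := by
    rw [dotProduct_mulVec, ← mulVec_transpose, G.transpose_adjMatrix, hAe, smul_dotProduct,
      dotProduct_comm, hfe, smul_eq_mul]
  refine exists_adjMatrix_eigenvalue_gt_of_sum_eq_zero hG hk (f := f - e) ?_ ?_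
  · simp only [he, Pi.sub_apply, Function.const_apply, sum_sub_distrib, sum_const, card_univ,
      nsmul_eq_mul, hm, mul_div_cancel₀ _ hn, sub_self]
  · have hmean : (k - c) / Fintype.card V * (∑ v, f v) ^ 2 = (k - c) * (m * ∑ v, f v) := by
      rw [hm]
      ring
    simp only [mulVec_sub, sub_dotProduct, dotProduct_sub, hAe, dotProduct_smul, smul_eq_mul,
      dotProduct_comm e f, hfe, hee, heA]
    linarith

variable {t : ℝ}

lemma le_adjMatrix_mulVec_radialProfile (hG : G.Connected) (hk : G.IsRegularOfDegree k)
    (ht : 1 ≤ t) (hkt : (k : ℝ) = t ^ 2 + 1) (r : ℕ) (v x : V) :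
    2 * t * (1 - 1 / (r + 1)) * radialProfile t r (G.dist v x) ≤
      (G.adjMatrix ℝ *ᵥ fun y ↦ radialProfile t r (G.dist v y)) x := by
  rcases h : G.dist v x with _ | i
  · obtain rfl : v = x := hG.dist_eq_zero_iff.1 h
    rw [adjMatrix_mulVec_radial_center, hk v, hkt,
      radialProfile_zero_recurrence (zero_lt_one.trans_le ht).ne']
  · calc _ ≤ radialProfile t r i + t ^ 2 * radialProfile t r (i + 2) :=
          radialProfile_recurrence_le ht r i
      _ = radialProfile t r i + (G.degree x - 1) * radialProfile t r (i + 2) := by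
          rw [hk x, hkt, add_sub_cancel_right]
      _ ≤ _ := le_adjMatrix_mulVec_radial (radialProfile_antitone ht r) h

lemma exists_adjMatrix_eigenvalue_gt_of_lt (hG : G.Connected) (hk : G.IsRegularOfDegree k)
    (ht : 1 ≤ t) (hkt : (k : ℝ) = t ^ 2 + 1) (r : ℕ) {c : ℝ} (hc : c ≤ k)
    (h : c + (k - c) * (k + 1) ^ r / Fintype.card V < 2 * t * (1 - 1 / (r + 1))) :
    ∃ lam : ℝ, (∃ x : V → ℝ, x ≠ 0 ∧ G.adjMatrix ℝ *ᵥ x = lam • x) ∧ lam ≠ k ∧ lam > c := by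
  obtain ⟨v⟩ := hG.nonempty
  set f : V → ℝ := fun x ↦ radialProfile t r (G.dist v x) with hf
  have hf_nonneg : 0 ≤ f := fun x ↦ radialProfile_nonneg ht r (G.dist v x)
  have hff : 0 < f ⬝ᵥ f := by
    refine sum_pos' (fun x _ ↦ mul_nonneg (hf_nonneg x) (hf_nonneg x)) ⟨v, mem_univ v, ?_⟩
    simpa only [hf, G.dist_self] using mul_self_pos.2 (radialProfile_zero_pos ht r).ne'
  have hsum : (∑ x, f x) ^ 2 ≤ (k + 1) ^ r * (f ⬝ᵥ f) := by
    refine (sq_sum_le_card_mul_dotProduct (s := {x | G.dist v x ≤ r}) fun x hx ↦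
      radialProfile_eq_zero t (by simpa using hx)).trans ?_
    gcongr
    exact_mod_cast card_dist_le_le_pow hG (fun x ↦ (hk x).le) v r
  refine exists_adjMatrix_eigenvalue_gt_of_lt_dotProduct_mulVec hG hk (f := f) ?_
  have : 0 ≤ (k : ℝ) - c := sub_nonneg.2 hc
  calc c * (f ⬝ᵥ f) + (k - c) / Fintype.card V * (∑ x, f x) ^ 2
      ≤ c * (f ⬝ᵥ f) + (k - c) / Fintype.card V * ((k + 1) ^ r * (f ⬝ᵥ f)) := by gcongr
    _ = (c + (k - c) * (k + 1) ^ r / Fintype.card V) * (f ⬝ᵥ f) := by ring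
    _ < 2 * t * (1 - 1 / (r + 1)) * (f ⬝ᵥ f) := by gcongr
    _ = f ⬝ᵥ ((2 * t * (1 - 1 / (r + 1))) • f) := by rw [dotProduct_smul, smul_eq_mul]
    _ ≤ f ⬝ᵥ (G.adjMatrix ℝ *ᵥ f) := dotProduct_le_dotProduct_of_nonneg_left
        (le_adjMatrix_mulVec_radialProfile hG hk ht hkt r v) hf_nonneg

end RegularGraph

theorem alon_boppana_general (k : ℕ) (hk : 2 ≤ k) (ε : ℝ) (hε : 0 < ε) :
    ∃ N : ℕ, ∀ (V : Type*) [Fintype V] (G : SimpleGraph V) [DecidableRel G.Adj],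
      G.Connected → G.IsRegularOfDegree k → Fintype.card V > N →
      ∃ lam : ℝ, (∃ x : V → ℝ, x ≠ 0 ∧ G.adjMatrix ℝ *ᵥ x = lam • x) ∧
        lam ≠ (k : ℝ) ∧ lam > 2 * Real.sqrt ((k : ℝ) - 1) - ε := by
  have hk' : (2 : ℝ) ≤ k := by exact_mod_cast hk
  set t := Real.sqrt ((k : ℝ) - 1) with ht_def
  have ht : 1 ≤ t := Real.one_le_sqrt.2 (by linarith)
  have hkt : (k : ℝ) = t ^ 2 + 1 := by
    rw [ht_def, Real.sq_sqrt (by linarith), sub_add_cancel]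
  obtain ⟨r, hr⟩ := exists_nat_one_div_lt (show 0 < ε / (4 * t) by positivity)
  set C : ℝ := (k - (2 * t - ε)) * (k + 1) ^ r
  obtain ⟨N, hN⟩ := exists_nat_gt (C / (ε / 2))
  refine ⟨N, fun V _ G _ hG hreg hcard ↦ ?_⟩
  have hcard' : (N : ℝ) < Fintype.card V := Nat.cast_lt.2 hcard
  refine exists_adjMatrix_eigenvalue_gt_of_lt hG hreg ht hkt r ?_ ?_
  · linarith [sq_nonneg (t - 1)]
  · have hcutoff : 2 * t * (1 / (r + 1)) < ε / 2 := by
      rw [lt_div_iff₀ (by positivity)] at hr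
      linarith
    have hmean : C / Fintype.card V < ε / 2 :=
      (div_lt_comm₀ (N.cast_nonneg.trans_lt hcard') (half_pos hε)).2 (hN.trans hcard')
    linarith

/-- **Alon–Boppana**: for every `k ≥ 3` and `ε > 0` there is `N` such that every finite
connected `k`-regular graph on more than `N` vertices has an adjacency eigenvalue `λ ≠ k`
with `λ > 2√(k−1) − ε`. -/
theorem alon_boppana (k : ℕ) (hk : 3 ≤ k) (ε : ℝ) (hε : 0 < ε) :
    ∃ N : ℕ, ∀ (V : Type) [Fintype V] [DecidableEq V]
      (G : SimpleGraph V) [DecidableRel G.Adj],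
      G.Connected → G.IsRegularOfDegree k → Fintype.card V > N →
      ∃ lam : ℝ, (∃ x : V → ℝ, x ≠ 0 ∧ G.adjMatrix ℝ *ᵥ x = lam • x) ∧
        lam ≠ (k : ℝ) ∧ lam > 2 * Real.sqrt ((k : ℝ) - 1) - ε := by
  obtain ⟨N, hN⟩ := alon_boppana_general k (Nat.le_of_succ_le hk) ε hε
  exact ⟨N, fun V _ _ G _ ↦ hN V G⟩
end

section
/- (Kesten) Let k ≥ 2 and let W be the free product of k copies of ℤ/2ℤ, with the canonical involutive generators s₁, …, s_k (so that the Cayley graph of W with respect to {s₁,…,s_k} is the k-regular tree T_k). The adjacency operator A on ℓ²(W), defined by (Af)(x) = Σ_{i=1}^{k} f(s_i x), is a bounded self-adjoint operator whose spectrum equals the interval [−2√(k−1), 2√(k−1)]. -/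
open Matrix

/-- The free product of `k` copies of `ℤ/2ℤ`; its Cayley graph with respect to the
canonical involutive generators is the `k`-regular tree `T_k`. -/
abbrev KestenGroup (k : ℕ) : Type :=
  Monoid.CoprodI (fun _ : Fin k => Multiplicative (ZMod 2))

/-- The canonical generator of the `i`-th free factor. -/
def kestenGen (k : ℕ) (i : Fin k) : KestenGroup k :=
  Monoid.CoprodI.of (i := i) (Multiplicative.ofAdd (1 : ZMod 2))

/-!
Upper bound. With `|x|` the word length, the positive function `φ x = (k - 1) ^ (-|x| / 2)`
satisfies `A φ ≤ 2 √(k - 1) φ` pointwise, so the Schur test gives `‖A‖ ≤ 2 √(k - 1)`, and the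
spectrum of a self-adjoint operator is real and bounded by the norm.

Lower bound. The indicators of the spheres about `1`, rescaled to `e 1, e 2, …`, are orthogonal of
equal norm, and `A (e n) = √(k - 1) • (e (n - 1) + e (n + 1))` for `n ≥ 2`. For `‖z‖ = 1` the sums
`f N = ∑ n < N, z ^ n • e (n + 2)` have norm proportional to `√N`, whereas
`(A - √(k - 1) * (z + z⁻¹)) (f N)` telescopes to boundary terms of bounded norm. Hence
`√(k - 1) * (z + z⁻¹)` lies in the spectrum, and `z + z⁻¹` runs through `[-2, 2]`.
-/

section Lp

variable {α β E : Type*} [NormedAddCommGroup E] {p : ENNReal}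

theorem memℓp_comp_equiv {f : β → E} (hf : Memℓp f p) (σ : α ≃ β) : Memℓp (f ∘ σ) p := by
  rcases p.trichotomy with rfl | rfl | hp
  · exact memℓp_zero (hf.finite_dsupport.preimage σ.injective.injOn)
  · refine memℓp_infty (hf.bddAbove.mono ?_)
    exact Set.range_comp_subset_range σ fun b => ‖f b‖
  · exact memℓp_gen (σ.summable_iff.2 (hf.summable hp))

/-- Reindexing along a bijection of the index types, as an isometry of `ℓᵖ` spaces. -/
noncomputable def lpCongrLeft (𝕜 : Type*) [NormedField 𝕜] [NormedSpace 𝕜 E] [Fact (1 ≤ p)]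
    (σ : α ≃ β) : lp (fun _ : β => E) p ≃ₗᵢ[𝕜] lp (fun _ : α => E) p where
  toFun f := ⟨f ∘ σ, memℓp_comp_equiv (lp.memℓp f) σ⟩
  invFun g := ⟨g ∘ σ.symm, memℓp_comp_equiv (lp.memℓp g) σ.symm⟩
  map_add' _ _ := rfl
  map_smul' _ _ := rfl
  left_inv f := by ext b; exact congrArg f (σ.apply_symm_apply b)
  right_inv g := by ext a; exact congrArg g (σ.symm_apply_apply a)
  norm_map' f := by
    rcases p.dichotomy with rfl | hp
    · rw [lp.norm_eq_ciSup, lp.norm_eq_ciSup]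
      exact σ.iSup_comp (g := fun b => ‖f b‖)
    · have hp : 0 < p.toReal := zero_lt_one.trans_le hp
      rw [lp.norm_eq_tsum_rpow hp, lp.norm_eq_tsum_rpow hp]
      exact congrArg (· ^ (1 / p.toReal)) (σ.tsum_eq fun b => ‖f b‖ ^ p.toReal)

theorem lpCongrLeft_symm (𝕜 : Type*) [NormedField 𝕜] [NormedSpace 𝕜 E] [Fact (1 ≤ p)]
    (σ : α ≃ β) : (lpCongrLeft 𝕜 σ : lp (fun _ : β => E) p ≃ₗᵢ[𝕜] _).symm = lpCongrLeft 𝕜 σ.symm :=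
  rfl

theorem summable_norm_sq_lp_two (f : lp (fun _ : α => E) 2) : Summable fun x => ‖f x‖ ^ 2 := by
  simpa using (lp.memℓp f).summable (by norm_num)

theorem norm_sq_lp_two (f : lp (fun _ : α => E) 2) : ‖f‖ ^ 2 = ∑' x, ‖f x‖ ^ 2 := by
  simpa using lp.norm_rpow_eq_tsum (by norm_num) f

end Lp

section AdjacencyOperator

variable (𝕜 : Type*) [RCLike 𝕜] {α ι : Type*} [Fintype ι]

/-- The adjacency operator `f ↦ ∑ i, f (σ i ·)` on `ℓ²(α)` of the graph in which the neighbours of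
a vertex `x` are the points `σ i x`, counted with multiplicity. -/
noncomputable def adjacencyOp (σ : ι → Equiv.Perm α) :
    lp (fun _ : α => 𝕜) 2 →L[𝕜] lp (fun _ : α => 𝕜) 2 :=
  ∑ i, (lpCongrLeft 𝕜 (σ i)).toContinuousLinearEquiv.toContinuousLinearMap

variable {𝕜}

theorem adjacencyOp_apply (σ : ι → Equiv.Perm α) (f : lp (fun _ : α => 𝕜) 2) (x : α) :
    adjacencyOp 𝕜 σ f x = ∑ i, f (σ i x) := by
  rw [adjacencyOp, _root_.sum_apply, lp.coeFn_sum, Finset.sum_apply]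
  rfl

theorem star_adjacencyOp (σ : ι → Equiv.Perm α) :
    star (adjacencyOp 𝕜 σ) = adjacencyOp 𝕜 fun i => (σ i).symm := by
  simp only [adjacencyOp, star_sum, LinearIsometryEquiv.star_eq_symm, lpCongrLeft_symm]

theorem isSelfAdjoint_adjacencyOp {σ : ι → Equiv.Perm α} (hσ : ∀ i, (σ i).symm = σ i) :
    IsSelfAdjoint (adjacencyOp 𝕜 σ) := by
  simp only [isSelfAdjoint_iff, star_adjacencyOp, hσ]

theorem summable_and_tsum_le_of_sum_le (σ : ι → Equiv.Perm α) {G : ι → α → ℝ} {H : α → ℝ}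
    (hG : ∀ i x, 0 ≤ G i x) (hGH : ∀ x, ∑ i, G i x ≤ H x) (hH : Summable H) :
    (Summable fun x => ∑ i, G i (σ i x)) ∧ ∑' x, ∑ i, G i (σ i x) ≤ ∑' x, H x := by
  have hGi (i : ι) : Summable (G i) := hH.of_nonneg_of_le (hG i) fun x =>
    (Finset.single_le_sum (fun j _ => hG j x) (Finset.mem_univ i)).trans (hGH x)
  have hGσ (i : ι) : Summable fun x => G i (σ i x) := (σ i).summable_iff.2 (hGi i)
  refine ⟨summable_sum fun i _ => hGσ i, ?_⟩
  calc ∑' x, ∑ i, G i (σ i x) = ∑ i, ∑' x, G i (σ i x) := Summable.tsum_finsetSum fun i _ => hGσ i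
    _ = ∑ i, ∑' x, G i x := Finset.sum_congr rfl fun i _ => (σ i).tsum_eq (G i)
    _ = ∑' x, ∑ i, G i x := (Summable.tsum_finsetSum fun i _ => hGi i).symm
    _ ≤ ∑' x, H x := (summable_sum fun i _ => hGi i).tsum_le_tsum hGH hH

theorem norm_sum_sq_le_of_sum_le {E : Type*} [SeminormedAddCommGroup E] (v : ι → E) {φ : ι → ℝ}
    (hφ : ∀ i, 0 < φ i) {C : ℝ} (hC : ∑ i, φ i ≤ C) :
    ‖∑ i, v i‖ ^ 2 ≤ C * ∑ i, ‖v i‖ ^ 2 / φ i := by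
  have hnonneg : 0 ≤ ∑ i, ‖v i‖ ^ 2 / φ i :=
    Finset.sum_nonneg fun i _ => div_nonneg (sq_nonneg _) (hφ i).le
  calc ‖∑ i, v i‖ ^ 2 ≤ (∑ i, ‖v i‖) ^ 2 := by gcongr; exact norm_sum_le _ _
    _ ≤ (∑ i, φ i) * ∑ i, ‖v i‖ ^ 2 / φ i :=
      Finset.sum_sq_le_sum_mul_sum_of_sq_le_mul _ (fun i _ => (hφ i).le)
        (fun i _ => div_nonneg (sq_nonneg _) (hφ i).le)
        (fun i _ => (mul_div_cancel₀ _ (hφ i).ne').ge)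
    _ ≤ C * ∑ i, ‖v i‖ ^ 2 / φ i := by gcongr

/-- The Schur test: Cauchy–Schwarz with weight `φ` at every point, then reindexing along each `σ i`
to sum over all points. -/
theorem norm_adjacencyOp_le (σ : ι → Equiv.Perm α) {φ : α → ℝ} (hφ : ∀ x, 0 < φ x) {c d : ℝ}
    (hc : 0 ≤ c) (hσ : ∀ x, ∑ i, φ (σ i x) ≤ c * φ x)
    (hσ_symm : ∀ x, ∑ i, φ ((σ i).symm x) ≤ d * φ x) :
    ‖adjacencyOp 𝕜 σ‖ ≤ √(c * d) := by
  refine ContinuousLinearMap.opNorm_le_bound _ (Real.sqrt_nonneg _) fun f => ?_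
  let G : ι → α → ℝ := fun i x => φ ((σ i).symm x) / φ x * ‖f x‖ ^ 2
  have hG (i : ι) (x : α) : 0 ≤ G i x :=
    mul_nonneg (div_nonneg (hφ _).le (hφ x).le) (sq_nonneg _)
  have hsumG (x : α) : ∑ i, G i x ≤ d * ‖f x‖ ^ 2 := by
    rw [← Finset.sum_mul, ← Finset.sum_div]
    gcongr
    exact (div_le_iff₀ (hφ x)).2 (hσ_symm x)
  obtain ⟨hsummable, htsum⟩ :=
    summable_and_tsum_le_of_sum_le σ hG hsumG ((summable_norm_sq_lp_two f).mul_left d)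
  have hpointwise (x : α) : ‖adjacencyOp 𝕜 σ f x‖ ^ 2 ≤ c * ∑ i, G i (σ i x) := by
    rw [adjacencyOp_apply]
    refine (norm_sum_sq_le_of_sum_le _ (fun i => hφ (σ i x)) (hσ x)).trans_eq ?_
    simp only [G, Equiv.symm_apply_apply, mul_assoc, Finset.mul_sum]
    exact Finset.sum_congr rfl fun i _ => by ring
  rw [← Real.sqrt_sq (norm_nonneg f), ← Real.sqrt_mul' _ (sq_nonneg _)]
  refine Real.le_sqrt_of_sq_le ?_
  calc ‖adjacencyOp 𝕜 σ f‖ ^ 2 = ∑' x, ‖adjacencyOp 𝕜 σ f x‖ ^ 2 := norm_sq_lp_two _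
    _ ≤ ∑' x, c * ∑ i, G i (σ i x) :=
      (summable_norm_sq_lp_two _).tsum_le_tsum hpointwise (hsummable.mul_left c)
    _ = c * ∑' x, ∑ i, G i (σ i x) := tsum_mul_left
    _ ≤ c * ∑' x, d * ‖f x‖ ^ 2 := by gcongr
    _ = c * d * ‖f‖ ^ 2 := by rw [tsum_mul_left, norm_sq_lp_two, mul_assoc]

end AdjacencyOperator

section Spectrum

theorem spectrum_subset_image_Icc_of_isSelfAdjoint {A : Type*} [CStarAlgebra A] {a : A}
    (ha : IsSelfAdjoint a) :
    spectrum ℂ a ⊆ (fun r : ℝ => (r : ℂ)) '' Set.Icc (-‖a‖) ‖a‖ := by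
  nontriviality A
  intro z hz
  exact ⟨z.re, abs_le.1 ((Complex.abs_re_le_norm z).trans (spectrum.norm_le_norm_of_mem hz)),
    (ha.mem_spectrum_eq_re hz).symm⟩

theorem mem_spectrum_of_tendsto_norm_atTop {𝕜 E ι : Type*} [NontriviallyNormedField 𝕜]
    [NormedAddCommGroup E] [NormedSpace 𝕜 E] {T : E →L[𝕜] E} {μ : 𝕜} {l : Filter ι} [l.NeBot]
    {x : ι → E} (hx : Filter.Tendsto (fun n => ‖x n‖) l Filter.atTop) {C : ℝ}
    (hC : ∀ n, ‖T (x n) - μ • x n‖ ≤ C) : μ ∈ spectrum 𝕜 T := by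
  rintro ⟨u, hu⟩
  have hu_apply (n : ι) : (u : E →L[𝕜] E) (x n) = μ • x n - T (x n) := by
    rw [hu]; rfl
  have hle (n : ι) : ‖x n‖ ≤ ‖(↑u⁻¹ : E →L[𝕜] E)‖ * C := by
    calc ‖x n‖ = ‖(↑u⁻¹ : E →L[𝕜] E) ((u : E →L[𝕜] E) (x n))‖ := by
          rw [← mul_apply_eq_comp, Units.inv_mul, one_apply_eq_self]
      _ ≤ ‖(↑u⁻¹ : E →L[𝕜] E)‖ * C := ContinuousLinearMap.le_opNorm_of_le _ <| by
          rw [hu_apply, norm_sub_rev]; exact hC n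
  obtain ⟨n, hn⟩ := (hx.eventually_gt_atTop (‖(↑u⁻¹ : E →L[𝕜] E)‖ * C)).exists
  exact hn.not_ge (hle n)

variable {𝕜 E : Type*} [RCLike 𝕜] [NormedAddCommGroup E] [InnerProductSpace 𝕜 E]

theorem norm_sum_smul_of_orthonormal {ι : Type*} {e : ι → E} (he : Orthonormal 𝕜 e)
    {s : Finset ι} {c : ι → 𝕜} (hc : ∀ i ∈ s, ‖c i‖ = 1) : ‖∑ i ∈ s, c i • e i‖ = √s.card := by
  have hterm (i : ι) (hi : i ∈ s) : (starRingEnd 𝕜) (c i) * c i = 1 := by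
    rw [RCLike.conj_mul, hc i hi, RCLike.ofReal_one, one_pow]
  rw [norm_eq_sqrt_re_inner (𝕜 := 𝕜), he.inner_sum, Finset.sum_congr rfl hterm]
  simp

theorem mem_spectrum_of_orthonormal_chain {T : E →L[𝕜] E} {a z : 𝕜} (hz : ‖z‖ = 1) {e : ℕ → E}
    (he : Orthonormal 𝕜 e) (hT : ∀ n, T (e (n + 1)) = a • (e n + e (n + 2))) :
    a * (z + z⁻¹) ∈ spectrum 𝕜 T := by
  have hz0 : z ≠ 0 := norm_ne_zero_iff.1 (hz.trans_ne one_ne_zero)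
  let f : ℕ → E := fun N => ∑ n ∈ Finset.range N, z ^ n • e (n + 1)
  have hf_norm (N : ℕ) : ‖f N‖ = √N :=
    (norm_sum_smul_of_orthonormal (he.comp _ (add_left_injective 1))
      fun n _ => by rw [norm_pow, hz, one_pow]).trans (by rw [Finset.card_range])
  have hf_boundary (N : ℕ) : T (f N) - (a * (z + z⁻¹)) • f N =
      a • ((e 0 - z ^ N • e N) + z⁻¹ • (z ^ N • e (N + 1) - e 1)) := by
    induction N with
    | zero => simp [f]
    | succ N ih =>
      have hsucc : f (N + 1) = f N + z ^ N • e (N + 1) := Finset.sum_range_succ _ _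
      rw [hsucc, map_add, map_smul, smul_add, add_sub_add_comm, ih, hT]
      match_scalars <;> field_simp <;> ring
  refine mem_spectrum_of_tendsto_norm_atTop (l := Filter.atTop) (x := f)
    (C := ‖a‖ * ((1 + 1) + (1 + 1))) ?_ fun N => ?_
  · simp only [hf_norm]
    exact Real.tendsto_sqrt_atTop.comp tendsto_natCast_atTop_atTop
  · rw [hf_boundary, norm_smul]
    gcongr
    refine norm_add_le_of_le (norm_sub_le_of_le ?_ ?_) ?_
    · exact (he.1 0).le
    · simp [norm_smul, hz, he.1]
    · rw [norm_smul, norm_inv, hz, inv_one, one_mul]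
      refine norm_sub_le_of_le ?_ (he.1 1).le
      simp [norm_smul, hz, he.1]

theorem norm_succ_eq_of_symmetric_chain {T : E →ₗ[𝕜] E} (hT : T.IsSymmetric) {a : 𝕜} (ha : a ≠ 0)
    {v : ℕ → E} (hv : Pairwise fun m n => inner 𝕜 (v m) (v n) = 0)
    (hTv : ∀ n, T (v (n + 1)) = a • (v n + v (n + 2))) (n : ℕ) : ‖v (n + 1)‖ = ‖v 1‖ := by
  induction n with
  | zero => rfl
  | succ n ih =>
    -- Both sides pick out a single norm: `conj a * ‖v (n + 2)‖ ^ 2 = a * ‖v (n + 1)‖ ^ 2`.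
    have h := hT (v (n + 1)) (v (n + 2))
    rw [hTv, hTv, inner_smul_left, inner_smul_right, inner_add_left, inner_add_right,
      hv (show n ≠ n + 2 by lia), hv (show n + 1 ≠ n + 3 by lia), zero_add, add_zero] at h
    have hsq := congrArg norm h
    simp only [norm_mul, RCLike.norm_conj, inner_self_eq_norm_sq_to_K, norm_pow,
      RCLike.norm_ofReal, abs_norm] at hsq
    rw [mul_right_inj' (norm_ne_zero_iff.2 ha), sq_eq_sq₀ (norm_nonneg _) (norm_nonneg _)] at hsq
    exact hsq.trans ih

theorem mem_spectrum_of_symmetric_chain {T : E →L[𝕜] E} (hT : (T : E →ₗ[𝕜] E).IsSymmetric)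
    {a z : 𝕜} (ha : a ≠ 0) (hz : ‖z‖ = 1) {v : ℕ → E}
    (hv : Pairwise fun m n => inner 𝕜 (v m) (v n) = 0) (hv1 : v 1 ≠ 0)
    (hTv : ∀ n, T (v (n + 1)) = a • (v n + v (n + 2))) : a * (z + z⁻¹) ∈ spectrum 𝕜 T := by
  have hnorm : ∀ n, ‖v (n + 1)‖ = ‖v 1‖ := norm_succ_eq_of_symmetric_chain hT ha hv hTv
  refine mem_spectrum_of_orthonormal_chain (e := fun n => (‖v 1‖ : 𝕜)⁻¹ • v (n + 1)) hz
    ⟨fun n => ?_, fun m n hmn => ?_⟩ fun n => ?_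
  · rw [norm_smul, norm_inv, RCLike.norm_ofReal, abs_norm, hnorm n,
      inv_mul_cancel₀ (norm_ne_zero_iff.2 hv1)]
  · change inner 𝕜 (_ • v (m + 1)) (_ • v (n + 1)) = 0
    rw [inner_smul_left, inner_smul_right, hv (by lia), mul_zero, mul_zero]
  · rw [map_smul, hTv, ← smul_add, smul_comm]

theorem exists_norm_eq_one_add_inv_eq {t : ℝ} (ht : |t| ≤ 1) :
    ∃ z : ℂ, ‖z‖ = 1 ∧ z + z⁻¹ = 2 * t := by
  refine ⟨Complex.exp (Real.arccos t * Complex.I), Complex.norm_exp_ofReal_mul_I _, ?_⟩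
  rw [← Complex.exp_neg, ← neg_mul, ← Complex.two_cos, ← Complex.ofReal_cos,
    Real.cos_arccos (abs_le.1 ht).1 (abs_le.1 ht).2]

end Spectrum

namespace KestenGroup

open Monoid (CoprodI)

variable {k : ℕ}

/-- The index of the first letter of the reduced word of an element, if there is one. -/
abbrev firstLetter (x : KestenGroup k) : Option (Fin k) := (CoprodI.Word.equiv x).fstIdx

/-- The length of the reduced word of an element, i.e. its distance from `1` in the tree. -/
def length (x : KestenGroup k) : ℕ := (CoprodI.Word.equiv x).toList.length

theorem gen_mul_gen (i : Fin k) : kestenGen k i * kestenGen k i = 1 := by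
  rw [kestenGen, ← map_mul, ← map_one CoprodI.of]
  rfl

theorem gen_mul_gen_mul (i : Fin k) (x : KestenGroup k) :
    kestenGen k i * (kestenGen k i * x) = x := by
  rw [← mul_assoc, gen_mul_gen, one_mul]

theorem equiv_gen_mul {i : Fin k} {x : KestenGroup k} (h : firstLetter x ≠ some i) :
    CoprodI.Word.equiv (kestenGen k i * x) =
      .cons (Multiplicative.ofAdd (1 : ZMod 2)) (CoprodI.Word.equiv x) h (by decide) :=
  (mul_smul (kestenGen k i) x CoprodI.Word.empty).trans CoprodI.Word.cons_eq_smul.symm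

theorem firstLetter_gen_mul {i : Fin k} {x : KestenGroup k} (h : firstLetter x ≠ some i) :
    firstLetter (kestenGen k i * x) = some i := by
  rw [firstLetter, equiv_gen_mul h, CoprodI.Word.fstIdx_cons]

theorem length_gen_mul {i : Fin k} {x : KestenGroup k} (h : firstLetter x ≠ some i) :
    length (kestenGen k i * x) = length x + 1 := by
  rw [length, equiv_gen_mul h, CoprodI.Word.cons_toList, List.length_cons, length]

theorem equiv_one : CoprodI.Word.equiv (1 : KestenGroup k) = .empty :=
  one_smul (KestenGroup k) CoprodI.Word.empty

theorem firstLetter_one : firstLetter (1 : KestenGroup k) = none := by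
  rw [firstLetter, equiv_one]; rfl

theorem length_one : length (1 : KestenGroup k) = 0 := by
  rw [length, equiv_one]; rfl

theorem eq_one_or_exists_eq_gen_mul (x : KestenGroup k) :
    x = 1 ∨ ∃ i y, firstLetter y ≠ some i ∧ x = kestenGen k i * y := by
  obtain ⟨w, rfl⟩ := CoprodI.Word.equiv.symm.surjective x
  cases w using CoprodI.Word.consRecOn with
  | empty => exact .inl rfl
  | cons i m w hw hm _ =>
    have hgen : ∀ m : Multiplicative (ZMod 2), m ≠ 1 → m = Multiplicative.ofAdd 1 := by decide
    refine .inr ⟨i, CoprodI.Word.equiv.symm w, ?_, ?_⟩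
    · rwa [firstLetter, Equiv.apply_symm_apply]
    · rw [kestenGen, ← hgen m hm]
      exact CoprodI.Word.prod_cons i m w hm hw

theorem exists_eq_gen_mul_of_length_eq_succ {x : KestenGroup k} {n : ℕ} (hx : length x = n + 1) :
    ∃ i y, firstLetter y ≠ some i ∧ length y = n ∧ x = kestenGen k i * y := by
  obtain rfl | ⟨i, y, hy, rfl⟩ := eq_one_or_exists_eq_gen_mul x
  · rw [length_one] at hx; lia
  · exact ⟨i, y, hy, by rw [length_gen_mul hy] at hx; lia, rfl⟩

theorem eq_one_of_length_eq_zero {x : KestenGroup k} (hx : length x = 0) : x = 1 := by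
  obtain rfl | ⟨i, y, hy, rfl⟩ := eq_one_or_exists_eq_gen_mul x
  · rfl
  · rw [length_gen_mul hy] at hx; lia

theorem finite_setOf_length_eq (k n : ℕ) : {x : KestenGroup k | length x = n}.Finite :=
  (List.finite_length_eq (Σ _ : Fin k, Multiplicative (ZMod 2)) n).preimage
    fun _ _ _ _ h => CoprodI.Word.equiv.injective (CoprodI.Word.ext h)

theorem length_surjective (hk : 2 ≤ k) : Function.Surjective (length (k := k)) := by
  intro n
  induction n with
  | zero => exact ⟨1, length_one⟩
  | succ n ih =>
    obtain ⟨x, rfl⟩ := ih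
    have : Nontrivial (Fin k) := Fin.nontrivial_iff_two_le.2 hk
    obtain ⟨i, hi⟩ : ∃ i : Fin k, firstLetter x ≠ some i := by
      cases firstLetter x with
      | none => exact ⟨⟨0, by lia⟩, nofun⟩
      | some j => exact (exists_ne j).imp fun i hi h => hi (Option.some.inj h).symm
    exact ⟨kestenGen k i * x, length_gen_mul hi⟩

section RadialSums

variable {M : Type*} [AddCommMonoid M] (g : ℕ → M)

theorem sum_length_gen : ∑ i : Fin k, g (length (kestenGen k i * 1)) = k • g 1 := by
  have hlen (i : Fin k) : length (kestenGen k i * 1) = 1 := by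
    rw [length_gen_mul (by rw [firstLetter_one]; exact nofun), length_one]
  simp only [hlen, Finset.sum_const, Finset.card_univ, Fintype.card_fin]

theorem sum_length_gen_mul {x : KestenGroup k} {n : ℕ} (hx : length x = n + 1) :
    ∑ i : Fin k, g (length (kestenGen k i * x)) = g n + (k - 1) • g (n + 2) := by
  obtain ⟨j, y, hy, hlen, rfl⟩ := exists_eq_gen_mul_of_length_eq_succ hx
  rw [← Finset.add_sum_erase _ _ (Finset.mem_univ j), gen_mul_gen_mul, hlen]
  have hfar (i : Fin k) (hi : i ∈ Finset.univ.erase j) :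
      g (length (kestenGen k i * (kestenGen k j * y))) = g (n + 2) := by
    rw [length_gen_mul, hx]
    rw [firstLetter_gen_mul hy]
    exact fun h => Finset.ne_of_mem_erase hi (Option.some.inj h).symm
  rw [Finset.sum_congr rfl hfar, Finset.sum_const, Finset.card_erase_of_mem (Finset.mem_univ j),
    Finset.card_univ, Fintype.card_fin]

end RadialSums

/-- The square root of the branching number `k - 1` of the `k`-regular tree. -/
noncomputable def sqrtBranching (k : ℕ) : ℝ := √((k : ℝ) - 1)

theorem sqrtBranching_pos (hk : 2 ≤ k) : 0 < sqrtBranching k :=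
  Real.sqrt_pos.2 (sub_pos.2 (by exact_mod_cast hk))

theorem natCast_sub_one_eq_sq (hk : 1 ≤ k) : ((k - 1 : ℕ) : ℝ) = sqrtBranching k ^ 2 := by
  rw [Nat.cast_sub hk, Nat.cast_one, sqrtBranching, Real.sq_sqrt]
  exact sub_nonneg.2 (by exact_mod_cast hk)

/-- The adjacency operator of the Cayley graph of `KestenGroup k`. -/
noncomputable def adjacency (k : ℕ) :
    lp (fun _ : KestenGroup k => ℂ) 2 →L[ℂ] lp (fun _ : KestenGroup k => ℂ) 2 :=
  adjacencyOp ℂ fun i : Fin k => Equiv.mulLeft (kestenGen k i)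

theorem adjacency_apply (f : lp (fun _ : KestenGroup k => ℂ) 2) (x : KestenGroup k) :
    adjacency k f x = ∑ i : Fin k, f (kestenGen k i * x) :=
  adjacencyOp_apply _ f x

theorem mulLeft_gen_symm (i : Fin k) :
    (Equiv.mulLeft (kestenGen k i)).symm = Equiv.mulLeft (kestenGen k i) := by
  rw [Equiv.mulLeft_symm, inv_eq_of_mul_eq_one_left (gen_mul_gen i)]

theorem isSelfAdjoint_adjacency : IsSelfAdjoint (adjacency k) :=
  isSelfAdjoint_adjacencyOp mulLeft_gen_symm

theorem sum_inv_sqrtBranching_pow_length_le (hk : 2 ≤ k) (x : KestenGroup k) :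
    ∑ i : Fin k, (sqrtBranching k)⁻¹ ^ length (kestenGen k i * x) ≤
      2 * sqrtBranching k * (sqrtBranching k)⁻¹ ^ length x := by
  have hs := sqrtBranching_pos hk
  have hsq := natCast_sub_one_eq_sq (k := k) (by lia)
  cases hx : length x with
  | zero =>
    obtain rfl := eq_one_of_length_eq_zero hx
    have hk_le : (k : ℝ) ≤ 2 * sqrtBranching k ^ 2 := by
      rw [← hsq]; exact_mod_cast (by lia : k ≤ 2 * (k - 1))
    rw [sum_length_gen, nsmul_eq_mul, pow_one, pow_zero, mul_one, ← div_eq_mul_inv,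
      div_le_iff₀ hs]
    linarith
  | succ n =>
    rw [sum_length_gen_mul _ hx, nsmul_eq_mul, hsq]
    refine le_of_eq ?_
    simp only [inv_pow]
    field_simp
    ring

theorem norm_adjacency_le (hk : 2 ≤ k) : ‖adjacency k‖ ≤ 2 * sqrtBranching k := by
  have hs := sqrtBranching_pos hk
  have hsuper := sum_inv_sqrtBranching_pow_length_le hk
  have h : ‖adjacency k‖ ≤ √((2 * sqrtBranching k) * (2 * sqrtBranching k)) :=
    norm_adjacencyOp_le (fun i : Fin k => Equiv.mulLeft (kestenGen k i))
      (φ := fun x => (sqrtBranching k)⁻¹ ^ length x) (fun x => by positivity) (by positivity)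
      hsuper (fun x => by simpa only [mulLeft_gen_symm, Equiv.coe_mulLeft] using hsuper x)
  rwa [Real.sqrt_mul_self (by positivity)] at h

/-- The indicator function of the sphere of radius `n` about `1`, rescaled by `(k - 1) ^ (-n / 2)`
so that all spheres of positive radius get the same norm. -/
noncomputable def sphereVec (k n : ℕ) : lp (fun _ : KestenGroup k => ℂ) 2 :=
  ⟨fun x => if length x = n then (sqrtBranching k : ℂ)⁻¹ ^ n else 0, memℓp_gen <|
    summable_of_hasFiniteSupport <| (finite_setOf_length_eq k n).subset fun x hx => by
      by_contra h
      exact hx (by simp [show length x ≠ n from h])⟩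

theorem sphereVec_apply (n : ℕ) (x : KestenGroup k) :
    sphereVec k n x = if length x = n then (sqrtBranching k : ℂ)⁻¹ ^ n else 0 :=
  rfl

theorem inner_sphereVec {m n : ℕ} (h : m ≠ n) : inner ℂ (sphereVec k m) (sphereVec k n) = 0 := by
  rw [lp.inner_eq_tsum]
  refine (tsum_congr fun x => ?_).trans tsum_zero
  rw [sphereVec_apply, sphereVec_apply]
  by_cases hm : length x = m
  · rw [if_neg (show length x ≠ n by lia), inner_zero_right]
  · rw [if_neg hm, inner_zero_left]

theorem sphereVec_ne_zero (hk : 2 ≤ k) (n : ℕ) : sphereVec k n ≠ 0 := by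
  obtain ⟨x, hx⟩ := length_surjective hk n
  have hs : (sqrtBranching k : ℂ) ≠ 0 := by exact_mod_cast (sqrtBranching_pos hk).ne'
  intro h
  have hval : (sqrtBranching k : ℂ)⁻¹ ^ n = 0 := by
    rw [← if_pos (c := length x = n) hx (t := (sqrtBranching k : ℂ)⁻¹ ^ n) (e := 0),
      ← sphereVec_apply, h, lp.coeFn_zero, Pi.zero_apply]
  exact pow_ne_zero n (inv_ne_zero hs) hval

theorem adjacency_sphereVec (hk : 2 ≤ k) (n : ℕ) :
    adjacency k (sphereVec k (n + 2)) =
      (sqrtBranching k : ℂ) • (sphereVec k (n + 1) + sphereVec k (n + 3)) := by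
  have hs : (sqrtBranching k : ℂ) ≠ 0 := by exact_mod_cast (sqrtBranching_pos hk).ne'
  have hsq : ((k - 1 : ℕ) : ℂ) = (sqrtBranching k : ℂ) ^ 2 := by
    exact_mod_cast natCast_sub_one_eq_sq (by lia)
  ext x
  rw [adjacency_apply, lp.coeFn_smul, Pi.smul_apply, lp.coeFn_add, Pi.add_apply, smul_eq_mul]
  simp only [sphereVec_apply]
  cases hx : length x with
  | zero =>
    obtain rfl := eq_one_of_length_eq_zero hx
    rw [sum_length_gen fun m => if m = n + 2 then (sqrtBranching k : ℂ)⁻¹ ^ (n + 2) else 0]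
    simp
  | succ m =>
    rw [sum_length_gen_mul (fun m => if m = n + 2 then (sqrtBranching k : ℂ)⁻¹ ^ (n + 2) else 0) hx,
      nsmul_eq_mul, hsq]
    obtain rfl | rfl | ⟨hmn, hmn'⟩ : m = n ∨ m = n + 2 ∨ m ≠ n ∧ m ≠ n + 2 := by lia
    · simp only [Nat.left_eq_add, OfNat.ofNat_ne_zero, ↓reduceIte, Nat.add_left_cancel_iff,
        inv_pow, zero_add, OfNat.one_ne_ofNat, add_zero]
      field_simp
      ring
    · simp only [↓reduceIte, inv_pow, Nat.add_eq_left, OfNat.ofNat_ne_zero, mul_zero, add_zero,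
        Nat.add_right_cancel_iff, zero_add]
      field_simp
      ring
    · simp [hmn, hmn']

theorem mul_add_inv_mem_spectrum_adjacency (hk : 2 ≤ k) {z : ℂ} (hz : ‖z‖ = 1) :
    (sqrtBranching k : ℂ) * (z + z⁻¹) ∈ spectrum ℂ (adjacency k) :=
  mem_spectrum_of_symmetric_chain isSelfAdjoint_adjacency.isSymmetric
    (by exact_mod_cast (sqrtBranching_pos hk).ne') hz (v := fun n => sphereVec k (n + 1))
    (fun _ _ h => inner_sphereVec (by lia)) (sphereVec_ne_zero hk 2) (adjacency_sphereVec hk)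

theorem spectrum_adjacency (hk : 2 ≤ k) :
    spectrum ℂ (adjacency k) = (fun r : ℝ => (r : ℂ)) ''
      Set.Icc (-(2 * sqrtBranching k)) (2 * sqrtBranching k) := by
  refine Set.Subset.antisymm ?_ ?_
  · refine (spectrum_subset_image_Icc_of_isSelfAdjoint isSelfAdjoint_adjacency).trans
      (Set.image_mono (Set.Icc_subset_Icc ?_ (norm_adjacency_le hk)))
    exact neg_le_neg (norm_adjacency_le hk)
  · rintro _ ⟨r, hr, rfl⟩
    have hs := sqrtBranching_pos hk
    have hs_ne : (sqrtBranching k : ℂ) ≠ 0 := by exact_mod_cast hs.ne'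
    obtain ⟨z, hz, hzr⟩ : ∃ z : ℂ, ‖z‖ = 1 ∧ z + z⁻¹ = 2 * (r / (2 * sqrtBranching k) : ℝ) := by
      refine exists_norm_eq_one_add_inv_eq ?_
      rw [abs_div, abs_of_pos (by positivity : 0 < 2 * sqrtBranching k),
        div_le_one (by positivity)]
      exact abs_le.2 hr
    convert mul_add_inv_mem_spectrum_adjacency hk hz using 1
    rw [hzr]
    push_cast
    field_simp

end KestenGroup

/-- **Kesten**: the adjacency operator of the `k`-regular tree, realized on `ℓ²(W)` where
`W` is the free product of `k` copies of `ℤ/2ℤ`, by `(Af)(x) = ∑ᵢ f(sᵢx)`, is a bounded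
self-adjoint operator whose spectrum is the interval `[−2√(k−1), 2√(k−1)]`. -/
theorem kesten_spectrum (k : ℕ) (hk : 2 ≤ k) :
    ∃ A : lp (fun _ : KestenGroup k => ℂ) 2 →L[ℂ] lp (fun _ : KestenGroup k => ℂ) 2,
      (∀ (f : lp (fun _ : KestenGroup k => ℂ) 2) (x : KestenGroup k),
        (A f : ∀ _ : KestenGroup k, ℂ) x
          = ∑ i : Fin k, (f : ∀ _ : KestenGroup k, ℂ) (kestenGen k i * x)) ∧
      IsSelfAdjoint A ∧
      spectrum ℂ A = (fun r : ℝ => (r : ℂ)) ''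
        Set.Icc (-(2 * Real.sqrt ((k : ℝ) - 1))) (2 * Real.sqrt ((k : ℝ) - 1)) := by
  exact ⟨KestenGroup.adjacency k, KestenGroup.adjacency_apply, KestenGroup.isSelfAdjoint_adjacency,
    KestenGroup.spectrum_adjacency hk⟩
end

section
/- (Marcus–Spielman–Srivastava) For every integer k ≥ 3 and every N there exists a finite connected bipartite k-regular graph X with more than N vertices such that every eigenvalue λ of the adjacency matrix of X satisfies |λ| = k or |λ| ≤ 2√(k−1); that is, there exist infinitely many k-regular bipartite Ramanujan graphs. -/
open Matrix
open scoped Classical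

/-!
A signing `σ` of the edges of a graph `G` with adjacency matrix `A` prescribes a 2-lift, whose
spectrum is the union of the spectra of `A` and of the signed adjacency matrix `A_σ`
(Bilu–Linial). If `G` is bipartite, so are the lift and the support of `A_σ`; the spectrum of `A_σ`
is then symmetric and only its largest eigenvalue has to be controlled. Starting from the complete
bipartite graph, it therefore suffices to find, for every graph of maximal degree `d + 1`, a signing
for which this eigenvalue is at most `2 √d`.

The average of the characteristic polynomials of `A_σ` over all `σ` is the matching polynomial
(Godsil–Gutman), whose vertex-deletion recursion shows that it is positive on `(2 √d, ∞)`
(Heilmann–Lieb). The signs are then chosen edge by edge, without losing positivity. Up to the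
diagonal degree matrix, `A_σ` is a sum of independent random rank one matrices `a_e a_eᵀ`, and the
averages over the signs still to be drawn do not vanish at matrices with positive definite imaginary
part. So adding a summand `a aᵀ` multiplies such an averaged polynomial by a rational function
mapping the upper half-plane to its closure, i.e. the polynomials with one more sign fixed all
interlace their average; one of them must then inherit its bound on the largest root.
-/

open Finset Function
open scoped BigOperators

section Sign

variable {ι Ω R : Type*}

/-- The nontrivial character of the group `{1, -1}`, with values in the ring `R`. -/
def signChar (R : Type*) [Ring R] : ℤˣ →* R :=
  (Int.castRingHom R : ℤ →* R).comp (Units.coeHom ℤ)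

@[simp]
theorem signChar_neg [Ring R] (s : ℤˣ) : signChar R (-s) = -signChar R s := by
  simp [signChar]

@[simp]
theorem signChar_mul_self [Ring R] (s : ℤˣ) : signChar R s * signChar R s = 1 := by
  rw [← map_mul, Int.units_mul_self, map_one]

variable [DecidableEq ι] [Fintype ι]

-- Resampling swaps `(ω, a)` with `(update ω i a, ω i)`, which is an involution.
theorem expect_update [Fintype Ω] [Nonempty Ω] [AddCommMonoid R] [Module ℚ≥0 R] (i : ι)
    (f : (ι → Ω) → R) : 𝔼 a : Ω, 𝔼 ω : ι → Ω, f (update ω i a) = 𝔼 ω, f ω := by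
  have resample : Involutive fun p : (ι → Ω) × Ω => (update p.1 i p.2, p.1 i) := fun p => by simp
  calc 𝔼 a : Ω, 𝔼 ω : ι → Ω, f (update ω i a)
      = 𝔼 p : (ι → Ω) × Ω, f (update p.1 i p.2) := by
        rw [expect_comm, ← univ_product_univ, expect_product]
    _ = 𝔼 p : (ι → Ω) × Ω, f p.1 := Fintype.expect_equiv resample.toPerm _ _ fun _ => rfl
    _ = 𝔼 ω, f ω := by
        rw [← univ_product_univ, expect_product]
        simp

theorem expect_comp_sum_insert [Fintype Ω] [Nonempty Ω] [AddCommMonoid R] [Module ℚ≥0 R]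
    {A : Type*} [AddCommMonoid A] (g : ι → Ω → A) (F : A → R) {E : Finset ι} {i : ι} (hi : i ∉ E) :
    𝔼 ω : ι → Ω, F (∑ j ∈ insert i E, g j (ω j)) =
      𝔼 a, 𝔼 ω : ι → Ω, F (g i a + ∑ j ∈ E, g j (ω j)) := by
  rw [← expect_update i]
  refine expect_congr rfl fun a _ => expect_congr rfl fun ω _ => ?_
  rw [sum_insert hi, update_self]
  congr 2
  exact sum_congr rfl fun j hj => by rw [update_of_ne (ne_of_mem_of_not_mem hj hi)]

theorem expect_signChar_mul_eq_zero [Ring R] [Algebra ℚ≥0 R] (i : ι) (f : (ι → ℤˣ) → R)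
    (hf : ∀ σ, f (update σ i (-σ i)) = f σ) : 𝔼 σ : ι → ℤˣ, signChar R (σ i) * f σ = 0 := by
  have flip : Involutive fun σ : ι → ℤˣ => update σ i (-σ i) := fun σ => by simp
  have expect_eq_neg : 𝔼 σ : ι → ℤˣ, signChar R (σ i) * f σ =
      -𝔼 σ : ι → ℤˣ, signChar R (σ i) * f σ := by
    rw [← expect_neg_distrib]
    exact Fintype.expect_equiv flip.toPerm _ _ fun σ => by simp [Involutive.toPerm, hf]
  have two_smul_eq_zero : (2 : ℚ≥0) • 𝔼 σ : ι → ℤˣ, signChar R (σ i) * f σ = 0 := by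
    rw [two_smul]
    nth_rw 1 [expect_eq_neg]
    exact neg_add_cancel _
  simpa using two_smul_eq_zero

end Sign

section PinRows

variable {V R : Type*} [DecidableEq V]

/-- The matrix `N` with its rows in `T` replaced by the corresponding rows of the identity. Its
determinant is the principal minor of `N` on the complement of `T`. -/
def pinRows [Zero R] [One R] (T : Finset V) (N : Matrix V V R) : Matrix V V R :=
  of fun i => if i ∈ T then Pi.single i 1 else N i

theorem pinRows_apply_of_mem [Zero R] [One R] {T : Finset V} {i : V} (hi : i ∈ T)
    (N : Matrix V V R) : pinRows T N i = Pi.single i 1 :=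
  if_pos hi

theorem pinRows_apply_of_notMem [Zero R] [One R] {T : Finset V} {i : V} (hi : i ∉ T)
    (N : Matrix V V R) : pinRows T N i = N i :=
  if_neg hi

theorem pinRows_empty [Zero R] [One R] (N : Matrix V V R) : pinRows ∅ N = N := by
  ext i j
  simp [pinRows_apply_of_notMem]

theorem pinRows_insert [Zero R] [One R] (v : V) (T : Finset V) (N : Matrix V V R) :
    pinRows (insert v T) N = (pinRows T N).updateRow v (Pi.single v 1) := by
  ext i j
  by_cases hi : i = v <;> simp [pinRows, hi, Pi.single_apply]

theorem pinRows_congr [Zero R] [One R] {T : Finset V} {M N : Matrix V V R}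
    (h : ∀ i ∉ T, M i = N i) : pinRows T M = pinRows T N := by
  ext i j
  by_cases hi : i ∈ T <;> simp [pinRows, hi, h]

variable [Fintype V]

theorem pinRows_univ [Zero R] [One R] (N : Matrix V V R) : pinRows univ N = 1 := by
  ext i j
  simp [pinRows_apply_of_mem, Pi.single_apply, one_apply, eq_comm]

theorem det_eq_det_updateRow_add [CommRing R] (N : Matrix V V R) (i j : V) :
    N.det = (N.updateRow i (update (N i) j 0)).det +
      N i j * (N.updateRow i (Pi.single j 1)).det := by
  rw [← det_updateRow_smul, ← det_updateRow_add, ← Pi.single_smul', smul_eq_mul, mul_one]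
  congr 1
  ext k l
  by_cases hk : k = i <;> by_cases hl : l = j <;> simp [updateRow_apply, hk, hl]

theorem det_eq_sum_mul_det_updateRow_single [CommRing R] (N : Matrix V V R) (i : V) :
    N.det = ∑ j, N i j * (N.updateRow i (Pi.single j 1)).det := by
  simp_rw [← adjugate_apply]
  exact N.det_eq_sum_mul_adjugate_row i

theorem det_updateRow_single_updateRow_single [CommRing R] (N : Matrix V V R) {i j : V}
    (h : i ≠ j) :
    ((N.updateRow i (Pi.single j 1)).updateRow j (Pi.single i 1)).det =
      -((N.updateRow i (Pi.single i 1)).updateRow j (Pi.single j 1)).det := by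
  have swap_rows : (N.updateRow i (Pi.single j 1)).updateRow j (Pi.single i 1) =
      ((N.updateRow i (Pi.single i 1)).updateRow j (Pi.single j 1)).submatrix
        (Equiv.swap i j) id := by
    ext k l
    rcases eq_or_ne k i with rfl | hi
    · simp [h]
    rcases eq_or_ne k j with rfl | hj
    · simp [h]
    · simp [Equiv.swap_apply_of_ne_of_ne hi hj, hi, hj]
  rw [swap_rows, det_permute, Equiv.Perm.sign_swap h]
  simp

theorem det_pinRows_updateRow_single_of_mem [CommRing R] {T : Finset V} {u v : V} (hu : u ∈ T)
    (hv : v ∉ T) (N : Matrix V V R) : ((pinRows T N).updateRow v (Pi.single u 1)).det = 0 := by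
  have huv : u ≠ v := ne_of_mem_of_not_mem hu hv
  apply det_zero_of_row_eq huv
  rw [updateRow_self, updateRow_ne huv, pinRows_apply_of_mem hu]

theorem det_pinRows_eq_add_sum [CommRing R] {T : Finset V} {v : V} (hv : v ∉ T)
    (N : Matrix V V R) :
    (pinRows T N).det = N v v * (pinRows (insert v T) N).det +
      ∑ u ∈ (insert v T)ᶜ, N v u * ((pinRows T N).updateRow v (Pi.single u 1)).det := by
  rw [det_eq_sum_mul_det_updateRow_single _ v, pinRows_apply_of_notMem hv,
    ← sum_add_sum_compl (insert v T), sum_insert hv, pinRows_insert,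
    sum_eq_zero fun u hu => by rw [det_pinRows_updateRow_single_of_mem hu hv, mul_zero], add_zero]

theorem det_pinRows_updateRow_single_of_notMem [CommRing R] {T : Finset V} {u v : V}
    (hu : u ∉ insert v T) (N : Matrix V V R) :
    ((pinRows T N).updateRow v (Pi.single u 1)).det =
      (((pinRows T N).updateRow v (Pi.single u 1)).updateRow u (update (N u) v 0)).det -
        N u v * (pinRows (insert u (insert v T)) N).det := by
  obtain ⟨huv, huT⟩ : u ≠ v ∧ u ∉ T := by simpa using hu
  rw [det_eq_det_updateRow_add _ u v, updateRow_ne huv, pinRows_apply_of_notMem huT,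
    det_updateRow_single_updateRow_single _ huv.symm, pinRows_insert, pinRows_insert]
  ring

end PinRows

section MatchingRecursion

variable {V R : Type*}

/-- The matrix `A` with its `(i, j)` entry multiplied by the weight `w s(i, j)` of the edge between
`i` and `j`. When `A` is an adjacency matrix and the weights are signs, this is the signed adjacency
matrix. -/
def edgeScale [Mul R] (w : Sym2 V → R) (A : Matrix V V R) : Matrix V V R :=
  of fun i j => w s(i, j) * A i j

@[simp]
theorem edgeScale_apply [Mul R] (w : Sym2 V → R) (A : Matrix V V R) (i j : V) :
    edgeScale w A i j = w s(i, j) * A i j :=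
  rfl

theorem edgeScale_one [MulOneClass R] (A : Matrix V V R) : edgeScale 1 A = A := by
  ext i j
  simp

variable [DecidableEq V]

theorem diagonal_sub_edgeScale_update_apply [Ring R] (D : V → R) (A : Matrix V V R)
    (σ : Sym2 V → ℤˣ) {i j : V} {e : Sym2 V} (h : s(i, j) ≠ e) (s : ℤˣ) :
    (diagonal D - edgeScale (signChar R ∘ update σ e s) A) i j =
      (diagonal D - edgeScale (signChar R ∘ σ) A) i j := by
  simp [update_of_ne h]

variable [Fintype V]

variable [CommRing R] [Algebra ℚ≥0 R]

/-- The average over all signings `σ` of the principal minor on the complement of `T` of the matrix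
`diagonal D - A_σ`, where `A_σ` is the signing of `A`. If `A` is the adjacency matrix of a graph and
`D` is constant equal to `x`, it is the value at `x` of the matching polynomial of the graph induced
on the complement of `T`. -/
noncomputable def avgMinor (D : V → R) (A : Matrix V V R) (T : Finset V) : R :=
  𝔼 σ : Sym2 V → ℤˣ, (pinRows T (diagonal D - edgeScale (signChar R ∘ σ) A)).det

theorem avgMinor_univ (D : V → R) (A : Matrix V V R) : avgMinor D A univ = 1 := by
  simp [avgMinor, pinRows_univ]

theorem expect_signChar_mul_det_pinRows_insert (D : V → R) (A : Matrix V V R) (T : Finset V)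
    (v : V) :
    𝔼 σ : Sym2 V → ℤˣ, signChar R (σ s(v, v)) *
      (pinRows (insert v T) (diagonal D - edgeScale (signChar R ∘ σ) A)).det = 0 := by
  refine expect_signChar_mul_eq_zero _ _ fun σ => congrArg det (pinRows_congr fun i hi => ?_)
  have hiv : i ≠ v := ne_of_mem_of_not_mem (mem_insert_self v T) hi |>.symm
  exact funext fun j => diagonal_sub_edgeScale_update_apply D A σ (by simp [hiv]) _

theorem expect_signChar_mul_det_updateRow_updateRow (D : V → R) (A : Matrix V V R) (T : Finset V)
    (u v : V) :
    𝔼 σ : Sym2 V → ℤˣ, signChar R (σ s(v, u)) *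
      (((pinRows T (diagonal D - edgeScale (signChar R ∘ σ) A)).updateRow v
        (Pi.single u 1)).updateRow u
          (update ((diagonal D - edgeScale (signChar R ∘ σ) A) u) v 0)).det = 0 := by
  refine expect_signChar_mul_eq_zero _ _ fun σ => congrArg det ?_
  have apply_eq := @diagonal_sub_edgeScale_update_apply V R _ _ D A σ
  ext i j
  rcases eq_or_ne i u with rfl | hiu
  · rcases eq_or_ne j v with rfl | hjv
    · simp
    · rw [updateRow_self, updateRow_self, update_of_ne hjv, update_of_ne hjv,
        apply_eq (by aesop)]
  · rcases eq_or_ne i v with rfl | hiv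
    · simp [hiu]
    · rw [updateRow_ne hiu, updateRow_ne hiv, updateRow_ne hiu, updateRow_ne hiv]
      by_cases hi : i ∈ T
      · rw [pinRows_apply_of_mem hi, pinRows_apply_of_mem hi]
      · rw [pinRows_apply_of_notMem hi, pinRows_apply_of_notMem hi, apply_eq (by aesop)]

theorem avgMinor_eq_mul_sub_sum (D : V → R) (A : Matrix V V R) {T : Finset V} {v : V}
    (hv : v ∉ T) :
    avgMinor D A T = D v * avgMinor D A (insert v T) -
      ∑ u ∈ (insert v T)ᶜ, A v u * A u v * avgMinor D A (insert u (insert v T)) := by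
  set N : (Sym2 V → ℤˣ) → Matrix V V R := fun σ => diagonal D - edgeScale (signChar R ∘ σ) A
    with hN
  set ε : (Sym2 V → ℤˣ) → V → R := fun σ u => signChar R (σ s(v, u)) with hε
  have expand (σ : Sym2 V → ℤˣ) : (pinRows T (N σ)).det =
      D v * (pinRows (insert v T) (N σ)).det - A v v * (ε σ v * (pinRows (insert v T) (N σ)).det) -
        ∑ u ∈ (insert v T)ᶜ, (A v u * (ε σ u * (((pinRows T (N σ)).updateRow v
          (Pi.single u 1)).updateRow u (update (N σ u) v 0)).det) +
            A v u * A u v * (pinRows (insert u (insert v T)) (N σ)).det) := by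
    rw [det_pinRows_eq_add_sum hv, sub_eq_add_neg (_ - _), ← sum_neg_distrib]
    congr 1
    · simp only [hN, Matrix.sub_apply, diagonal_apply_eq, edgeScale_apply, Function.comp_apply, hε]
      ring
    · refine sum_congr rfl fun u hu => ?_
      rw [mem_compl] at hu
      have huv : u ≠ v := by aesop
      have N_vu : N σ v u = -(ε σ u * A v u) := by simp [hN, hε, huv.symm]
      have N_uv : N σ u v = -(ε σ u * A u v) := by simp [hN, hε, huv, Sym2.eq_swap]
      rw [det_pinRows_updateRow_single_of_notMem hu, N_vu, N_uv]
      linear_combination -(A v u * A u v * (pinRows (insert u (insert v T)) (N σ)).det) *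
        signChar_mul_self (R := R) (σ s(v, u))
  have avgMinor_eq (S : Finset V) : avgMinor D A S = 𝔼 σ, (pinRows S (N σ)).det := rfl
  simp only [avgMinor_eq, expand, expect_sub_distrib, expect_sum_comm, expect_add_distrib,
    ← mul_expect]
  simp only [hε, hN, expect_signChar_mul_det_pinRows_insert,
    expect_signChar_mul_det_updateRow_updateRow, mul_zero, sub_zero, zero_add]

end MatchingRecursion

section HeilmannLieb

variable {V : Type*} [Fintype V] [DecidableEq V] (G : SimpleGraph V) [DecidableRel G.Adj] {d : ℕ}
  {x : ℝ}

theorem avgMinor_adjMatrix_eq_mul_sub_sum (D : V → ℝ) {T : Finset V} {v : V} (hv : v ∉ T) :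
    avgMinor D (G.adjMatrix ℝ) T = D v * avgMinor D (G.adjMatrix ℝ) (insert v T) -
      ∑ u ∈ G.neighborFinset v \ T, avgMinor D (G.adjMatrix ℝ) (insert u (insert v T)) := by
  have neighbors_eq : G.neighborFinset v \ T = (insert v T)ᶜ.filter (G.Adj v) := by
    ext u
    have := @SimpleGraph.Adj.ne _ G v u
    simp only [mem_sdiff, SimpleGraph.mem_neighborFinset, compl_insert, mem_filter, mem_erase,
      ne_eq, mem_compl]
    tauto
  rw [avgMinor_eq_mul_sub_sum D _ hv, neighbors_eq, sum_filter]
  refine congrArg _ (sum_congr rfl fun u _ => ?_)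
  by_cases h : G.Adj v u <;> simp [h, G.adj_comm u v]

theorem mul_avgMinor_insert_le {T : Finset V} {v : V} (hv : v ∉ T)
    (h : ∀ u ∈ G.neighborFinset v \ T,
      √d * avgMinor (fun _ => x) (G.adjMatrix ℝ) (insert u (insert v T)) ≤
        avgMinor (fun _ => x) (G.adjMatrix ℝ) (insert v T)) :
    (√d * x - #(G.neighborFinset v \ T)) * avgMinor (fun _ => x) (G.adjMatrix ℝ) (insert v T) ≤
      √d * avgMinor (fun _ => x) (G.adjMatrix ℝ) T := by
  have sum_le := sum_le_card_nsmul _ _ _ h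
  rw [← mul_sum, nsmul_eq_mul] at sum_le
  rw [avgMinor_adjMatrix_eq_mul_sub_sum G _ hv]
  linarith

-- Descending induction on `T`; a vertex with a neighbour in `T` has at most `d` neighbours outside,
-- which is what makes the ratio bound `√d` reproduce itself.
theorem avgMinor_pos_and_sqrt_mul_avgMinor_insert_le (hd : 1 ≤ d) (hx : 2 * √d < x)
    (hG : ∀ v, G.degree v ≤ d + 1) (T : Finset V) :
    0 < avgMinor (fun _ => x) (G.adjMatrix ℝ) T ∧ ∀ v ∉ T, (∃ u ∈ T, G.Adj v u) →
      √d * avgMinor (fun _ => x) (G.adjMatrix ℝ) (insert v T) ≤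
        avgMinor (fun _ => x) (G.adjMatrix ℝ) T := by
  induction T using WellFoundedGT.induction with
  | ind T ih =>
    have one_le_d : (1 : ℝ) ≤ d := mod_cast hd
    have sqrt_pos : 0 < √(d : ℝ) := Real.sqrt_pos.2 (by linarith)
    have two_d_lt : 2 * (d : ℝ) < √d * x := by
      nlinarith [Real.mul_self_sqrt (Nat.cast_nonneg (α := ℝ) d)]
    have insert_pos {v} (hv : v ∉ T) : 0 < avgMinor (fun _ => x) (G.adjMatrix ℝ) (insert v T) :=
      (ih _ (ssubset_insert hv)).1
    have mul_le {v} (hv : v ∉ T) := mul_avgMinor_insert_le (d := d) (x := x) G hv fun u hu => by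
      obtain ⟨hvu, huT⟩ : G.Adj v u ∧ u ∉ T := by simpa using hu
      exact (ih _ (ssubset_insert hv)).2 u (by simp [hvu.ne', huT])
        ⟨v, mem_insert_self v T, hvu.symm⟩
    refine ⟨?_, fun v hv ⟨u, huT, hvu⟩ => ?_⟩
    · rcases eq_or_ne T univ with rfl | hT
      · rw [avgMinor_univ]
        exact one_pos
      obtain ⟨v, hv⟩ : ∃ v, v ∉ T := by simpa [eq_univ_iff_forall] using hT
      have card_le : (#(G.neighborFinset v \ T) : ℝ) ≤ d + 1 :=
        mod_cast (card_le_card sdiff_subset).trans (hG v)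
      exact pos_of_mul_pos_right
        ((mul_pos (by linarith) (insert_pos hv)).trans_le (mul_le hv)) sqrt_pos.le
    · have card_lt : #(G.neighborFinset v \ T) < d + 1 :=
        (card_lt_card (ssubset_iff_of_subset sdiff_subset |>.2
          ⟨u, by simpa using hvu, by simp [huT]⟩)).trans_le (hG v)
      have card_le : (#(G.neighborFinset v \ T) : ℝ) ≤ d := mod_cast Nat.lt_succ_iff.1 card_lt
      refine le_of_mul_le_mul_left (le_trans ?_ (mul_le hv)) sqrt_pos
      rw [← mul_assoc, Real.mul_self_sqrt (Nat.cast_nonneg d)]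
      exact mul_le_mul_of_nonneg_right (by linarith) (insert_pos hv).le

end HeilmannLieb

section Interlacing

open Polynomial Filter Topology

theorem re_nonneg_of_hasDerivAt_of_im_nonneg {f : ℂ → ℂ} {f' : ℂ} {x : ℝ} (hf : HasDerivAt f f' x)
    (hx : (f x).im = 0) (h : ∀ z : ℂ, 0 < z.im → 0 ≤ (f z).im) : 0 ≤ f'.re := by
  have vertical_line : HasDerivAt (fun y : ℝ => (x : ℂ) + y * Complex.I) Complex.I 0 := by
    simpa using ((Complex.ofRealCLM.hasDerivAt (x := (0 : ℝ))).mul_const Complex.I).const_add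
      (x : ℂ)
  have im_deriv : HasDerivAt (fun y : ℝ => (f (x + y * Complex.I)).im) f'.re 0 := by
    have comp_deriv := HasDerivAt.scomp (0 : ℝ) (by simpa using hf) vertical_line
    simpa [Function.comp_def] using Complex.imCLM.hasFDerivAt.comp_hasDerivAt (0 : ℝ) comp_deriv
  refine ge_of_tendsto (hasDerivWithinAt_iff_tendsto_slope' Set.self_notMem_Ioi |>.1
    (im_deriv.hasDerivWithinAt (s := Set.Ioi 0))) ?_
  filter_upwards [self_mem_nhdsWithin] with y hy
  rw [Set.mem_Ioi] at hy
  have im_nonneg : 0 ≤ (f (x + y * Complex.I)).im := h _ (by simpa using hy)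
  rw [slope_def_field]
  simpa [hx] using div_nonneg im_nonneg hy.le

/-- Interlacing of monic polynomials of the same degree, in its function-theoretic form: the
quotient `f / g` maps the upper half-plane into its closure. For real-rooted polynomials this says
that the roots of `f` and `g` alternate, the largest being a root of `f`. -/
structure Interlaces (g f : ℝ[X]) : Prop where
  monic_left : g.Monic
  monic_right : f.Monic
  natDegree_eq : f.natDegree = g.natDegree
  im_nonneg : ∀ z : ℂ, 0 < z.im → 0 ≤ (aeval z f / aeval z g).im

namespace Interlaces

variable {f g : ℝ[X]} {c : ℝ}

theorem monotoneOn_eval_div_eval (h : Interlaces g f) (hg : ∀ x > c, 0 < g.eval x) :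
    MonotoneOn (fun x => f.eval x / g.eval x) (Set.Ioi c) := by
  set D : ℝ → ℝ := fun x =>
    (f.derivative.eval x * g.eval x - f.eval x * g.derivative.eval x) / g.eval x ^ 2
  have aeval_ofReal (p : ℝ[X]) (x : ℝ) : aeval (x : ℂ) p = (p.eval x : ℝ) :=
    aeval_algebraMap_apply_eq_algebraMap_eval x p
  have hasDerivAt_div {x} (hx : c < x) : HasDerivAt (fun x => f.eval x / g.eval x) (D x) x :=
    (f.hasDerivAt x).div (g.hasDerivAt x) (hg x hx).ne'
  have hasDerivAt_complex {x : ℝ} (hx : c < x) :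
      HasDerivAt (fun z : ℂ => aeval z f / aeval z g) (D x : ℂ) x := by
    refine ((f.hasDerivAt_aeval (x : ℂ)).div (g.hasDerivAt_aeval (x : ℂ)) ?_).congr_deriv ?_
    · rw [aeval_ofReal]
      exact_mod_cast (hg x hx).ne'
    · simp [D, aeval_ofReal]
  refine monotoneOn_of_deriv_nonneg (convex_Ioi c)
    (fun x hx => (hasDerivAt_div hx).continuousAt.continuousWithinAt) ?_ ?_ <;>
    rw [interior_Ioi] <;> intro x hx
  · exact (hasDerivAt_div hx).differentiableAt.differentiableWithinAt
  · rw [(hasDerivAt_div hx).deriv, ← Complex.ofReal_re (D x)]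
    refine re_nonneg_of_hasDerivAt_of_im_nonneg (hasDerivAt_complex hx) ?_ h.im_nonneg
    rw [aeval_ofReal, aeval_ofReal, ← Complex.ofReal_div, Complex.ofReal_im]

theorem tendsto_eval_div_eval_atTop (h : Interlaces g f) :
    Tendsto (fun x => f.eval x / g.eval x) atTop (𝓝 1) := by
  have degree_eq : f.degree = g.degree := by
    rw [degree_eq_natDegree h.monic_right.ne_zero, degree_eq_natDegree h.monic_left.ne_zero,
      h.natDegree_eq]
  simpa [h.monic_left.leadingCoeff, h.monic_right.leadingCoeff] using
    f.div_tendsto_atTop_leadingCoeff_div_of_degree_eq g degree_eq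

theorem eval_le_eval (h : Interlaces g f) (hg : ∀ x > c, 0 < g.eval x) : f.eval c ≤ g.eval c := by
  have eval_le {x} (hx : c < x) : f.eval x ≤ g.eval x := by
    rw [← div_le_one (hg x hx)]
    refine ge_of_tendsto h.tendsto_eval_div_eval_atTop ?_
    filter_upwards [eventually_ge_atTop x] with y hy
    exact h.monotoneOn_eval_div_eval hg hx (hx.trans_le hy) hy
  refine le_of_tendsto_of_tendsto (b := 𝓝[>] c) f.continuous.continuousWithinAt.tendsto
    g.continuous.continuousWithinAt.tendsto ?_
  filter_upwards [self_mem_nhdsWithin] with x hx using eval_le hx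

end Interlaces

theorem exists_greatest_eval_nonpos {g : ℝ[X]} (hg : g.Monic) {x : ℝ} (hx : g.eval x ≤ 0) :
    ∃ c ≥ x, g.eval c ≤ 0 ∧ ∀ y > c, 0 < g.eval y := by
  have degree_pos : 0 < g.degree := by
    by_contra! hd
    rw [hg.degree_le_zero_iff_eq_one.1 hd, eval_one] at hx
    exact one_pos.not_ge hx
  have tendsto_atTop := g.tendsto_atTop_of_leadingCoeff_nonneg degree_pos (by simp [hg])
  obtain ⟨B, hB⟩ := eventually_atTop.1 (tendsto_atTop.eventually_gt_atTop 0)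
  set S := {y : ℝ | g.eval y ≤ 0}
  have bddAbove : BddAbove S := ⟨B, fun y hy => not_lt.1 fun h => (hB y h.le).not_ge hy⟩
  have isClosed : IsClosed S := isClosed_le g.continuous continuous_const
  exact ⟨sSup S, le_csSup bddAbove hx, isClosed.csSup_mem ⟨x, hx⟩ bddAbove,
    fun y hy => not_le.1 fun h => (le_csSup bddAbove h).not_gt hy⟩

variable {Ω : Type*} {f : Ω → ℝ[X]} {g : ℝ[X]} {β : ℝ}

theorem eval_pos_of_interlaces (h : ∀ a, Interlaces g (f a))
    (hβ : ∀ x > β, ∃ a, 0 < (f a).eval x) : ∀ x > β, 0 < g.eval x := by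
  by_contra! ⟨x, hx, hgx⟩
  obtain ⟨a₀, -⟩ := hβ x hx
  obtain ⟨c, hxc, hgc, hc⟩ := exists_greatest_eval_nonpos (h a₀).monic_left hgx
  obtain ⟨a, ha⟩ := hβ c (hx.trans_le hxc)
  exact (ha.trans_le ((h a).eval_le_eval hc)).not_ge hgc

theorem exists_forall_eval_pos_of_interlaces [Finite Ω] (h : ∀ a, Interlaces g (f a))
    (hβ : ∀ x > β, ∃ a, 0 < (f a).eval x) : ∃ a, ∀ x > β, 0 < (f a).eval x := by
  have g_pos := eval_pos_of_interlaces h hβ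
  by_contra! hneg
  choose r hr hfr using hneg
  have : Nonempty Ω := (hβ (β + 1) (lt_add_one β)).nonempty
  obtain ⟨b, hb⟩ := Finite.exists_min r
  obtain ⟨a, ha⟩ := hβ (r b) (hr b)
  have div_le := (h a).monotoneOn_eval_div_eval g_pos (hr b) (hr a) (hb a)
  have div_nonpos := div_nonpos_of_nonpos_of_nonneg (hfr a) (g_pos _ (hr a)).le
  exact (div_pos ha (g_pos _ (hr b))).not_ge (div_le.trans div_nonpos)

end Interlacing

section PosDefIm

open scoped ComplexOrder

variable {V : Type*} [Fintype V]

theorem im_star_dotProduct_smul_mulVec {N : Matrix V V ℂ} (hN : N.IsHermitian) (t : ℂ)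
    (v : V → ℂ) : (star v ⬝ᵥ (t • N) *ᵥ v).im = t.im * (star v ⬝ᵥ N *ᵥ v).re := by
  have im_eq_zero : (star v ⬝ᵥ N *ᵥ v).im = 0 := hN.im_star_dotProduct_mulVec_self v
  rw [smul_mulVec, dotProduct_smul, smul_eq_mul, Complex.mul_im, im_eq_zero, mul_zero, zero_add]

/-- The matrices `M` for which `(M - Mᴴ) / 2i`, the matrix analogue of the imaginary part, is
positive definite. -/
def PosDefIm (M : Matrix V V ℂ) : Prop :=
  ∀ v ≠ 0, 0 < (star v ⬝ᵥ M *ᵥ v).im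

namespace PosDefIm

variable {M N : Matrix V V ℂ}

theorem add (hM : PosDefIm M) (hN : ∀ v, 0 ≤ (star v ⬝ᵥ N *ᵥ v).im) : PosDefIm (M + N) := by
  intro v hv
  rw [add_mulVec, dotProduct_add, Complex.add_im]
  exact add_pos_of_pos_of_nonneg (hM v hv) (hN v)

theorem sub_isHermitian (hM : PosDefIm M) (hN : N.IsHermitian) : PosDefIm (M - N) := by
  rw [sub_eq_add_neg]
  exact hM.add fun v => (hN.neg.im_star_dotProduct_mulVec_self v).ge

theorem add_smul_posSemidef (hM : PosDefIm M) (hN : N.PosSemidef) {t : ℂ} (ht : 0 ≤ t.im) :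
    PosDefIm (M + t • N) := by
  refine hM.add fun v => ?_
  rw [im_star_dotProduct_smul_mulVec hN.isHermitian]
  exact mul_nonneg ht (hN.re_dotProduct_nonneg v)

theorem smul_posDef (hN : N.PosDef) {t : ℂ} (ht : 0 < t.im) : PosDefIm (t • N) := by
  intro v hv
  rw [im_star_dotProduct_smul_mulVec hN.isHermitian]
  exact mul_pos ht (hN.re_dotProduct_pos hv)

theorem det_ne_zero [DecidableEq V] (hM : PosDefIm M) : M.det ≠ 0 := by
  intro h
  obtain ⟨v, hv, hMv⟩ := exists_mulVec_eq_zero_iff.2 h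
  simpa [hMv] using hM v hv

end PosDefIm

end PosDefIm

section RankOneSums

open scoped ComplexOrder

theorem det_add_smul_vecMulVec {V K : Type*} [Fintype V] [DecidableEq V] [Field K]
    {M : Matrix V V K} (hM : M.det ≠ 0) (t : K) (a b : V → K) :
    (M + t • vecMulVec a b).det = M.det + t * (M.det * (b ⬝ᵥ M⁻¹ *ᵥ a)) := by
  rw [← smul_vecMulVec, vecMulVec_eq Unit,
    det_add_replicateCol_mul_replicateRow hM.isUnit (t • a) b, det_unique (n := Unit),
    Matrix.add_apply, one_apply_eq, Matrix.mul_assoc, ← replicateCol_mulVec,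
    replicateRow_mul_replicateCol_apply, mulVec_smul, dotProduct_smul, smul_eq_mul]
  ring

theorem expect_ne_zero_of_eq_one_or_im_pos {Ω : Type*} [Fintype Ω] [Nonempty Ω] {r : Ω → ℂ}
    (hr : ∀ a, r a = 1 ∨ 0 < (r a).im) : 𝔼 a, r a ≠ 0 := by
  by_cases hone : ∀ a, r a = 1
  · simp [hone]
  obtain ⟨a, ha⟩ := not_forall.1 hone
  have im_nonneg (b : Ω) : 0 ≤ (r b).im := (hr b).elim (fun h => by simp [h]) le_of_lt
  have im_pos : 0 < (𝔼 a, r a).im := by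
    rw [Complex.im_expect]
    exact expect_pos' (fun b _ => im_nonneg b) ⟨a, mem_univ a, (hr a).resolve_left ha⟩
  exact fun h => im_pos.ne' (by rw [h, Complex.zero_im])

variable {ι Ω V : Type*} [Fintype ι] [DecidableEq ι] [Fintype Ω] [Fintype V] [DecidableEq V]

/-- The average of `det (M - ∑ e ∈ E, a_e a_eᴴ)` over all choices of vectors `a_e` from the families
`w e`. -/
noncomputable def avgDet (w : ι → Ω → V → ℂ) (E : Finset ι) (M : Matrix V V ℂ) : ℂ :=
  𝔼 ω : ι → Ω, (M - ∑ e ∈ E, vecMulVec (w e (ω e)) (star (w e (ω e)))).det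

variable (w : ι → Ω → V → ℂ)

theorem exists_avgDet_add_smul_vecMulVec_eq (E : Finset ι) {M : Matrix V V ℂ} (hM : PosDefIm M)
    (a b : V → ℂ) :
    ∃ α : ℂ, ∀ t : ℂ, avgDet w E (M + t • vecMulVec a b) = avgDet w E M + t * α := by
  set N : (ι → Ω) → Matrix V V ℂ := fun ω => M - ∑ e ∈ E, vecMulVec (w e (ω e)) (star (w e (ω e)))
  have det_N_ne_zero (ω) : (N ω).det ≠ 0 :=
    (hM.sub_isHermitian
      (posSemidef_sum E fun e _ => posSemidef_vecMulVec_self_star _).isHermitian).det_ne_zero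
  refine ⟨𝔼 ω, (N ω).det * (b ⬝ᵥ (N ω)⁻¹ *ᵥ a), fun t => ?_⟩
  rw [avgDet, avgDet, mul_expect, ← expect_add_distrib]
  refine expect_congr rfl fun ω _ => ?_
  rw [← det_add_smul_vecMulVec (det_N_ne_zero ω), add_sub_right_comm]

-- If the quotient were `1 - c` with `c ≠ 0` and `0 ≤ im c`, then `avgDet w E` would vanish at
-- `M - c⁻¹ a aᴴ`, which still has positive definite imaginary part.
theorem avgDet_sub_vecMulVec_div_eq_one_or_im_pos {E : Finset ι}
    (hE : ∀ M : Matrix V V ℂ, PosDefIm M → avgDet w E M ≠ 0) {M : Matrix V V ℂ} (hM : PosDefIm M)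
    (a : V → ℂ) :
    avgDet w E (M - vecMulVec a (star a)) / avgDet w E M = 1 ∨
      0 < (avgDet w E (M - vecMulVec a (star a)) / avgDet w E M).im := by
  obtain ⟨α, hα⟩ := exists_avgDet_add_smul_vecMulVec_eq w E hM a (star a)
  have hM0 := hE M hM
  obtain ⟨c, rfl⟩ : ∃ c, α = avgDet w E M * c := ⟨α / avgDet w E M, by field_simp⟩
  have div_eq : avgDet w E (M - vecMulVec a (star a)) / avgDet w E M = 1 - c := by
    rw [sub_eq_add_neg, ← neg_one_smul ℂ, hα]
    field_simp
    ring
  rw [div_eq]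
  by_contra! ⟨hc1, hc⟩
  have hc0 : c ≠ 0 := by simpa using hc1
  have hcim : 0 ≤ c.im := by simpa using hc
  have neg_inv_im : 0 ≤ (-c⁻¹).im := by
    rw [Complex.neg_im, Complex.inv_im, neg_div, neg_neg]
    exact div_nonneg hcim (Complex.normSq_nonneg _)
  refine hE _ (hM.add_smul_posSemidef (posSemidef_vecMulVec_self_star a) neg_inv_im) ?_
  rw [hα]
  field_simp
  ring

variable [Nonempty Ω]

theorem avgDet_insert {E : Finset ι} {e : ι} (he : e ∉ E) (M : Matrix V V ℂ) :
    avgDet w (insert e E) M = 𝔼 a, avgDet w E (M - vecMulVec (w e a) (star (w e a))) := by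
  simp_rw [avgDet, expect_comp_sum_insert (fun e a => vecMulVec (w e a) (star (w e a)))
    (fun S => (M - S).det) he, sub_sub]

theorem avgDet_ne_zero (E : Finset ι) {M : Matrix V V ℂ} (hM : PosDefIm M) : avgDet w E M ≠ 0 := by
  induction E using Finset.induction generalizing M with
  | empty => simpa [avgDet] using hM.det_ne_zero
  | insert e E he ih =>
    have expect_div_ne_zero := expect_ne_zero_of_eq_one_or_im_pos fun a =>
      avgDet_sub_vecMulVec_div_eq_one_or_im_pos w (fun _ => ih) hM (w e a)
    rw [← expect_div, ← avgDet_insert w he] at expect_div_ne_zero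
    exact (div_ne_zero_iff.1 expect_div_ne_zero).1

end RankOneSums

section AvgCharpoly

open Polynomial
open scoped ComplexOrder

variable {ι Ω V : Type*} [Fintype ι] [DecidableEq ι] [Fintype Ω] [Fintype V] [DecidableEq V]

/-- The average of the characteristic polynomials of `M + ∑ e ∈ E, a_e a_eᵀ` over all choices of
vectors `a_e` from the families `w e`. -/
noncomputable def avgCharpoly (w : ι → Ω → V → ℝ) (E : Finset ι) (M : Matrix V V ℝ) : ℝ[X] :=
  𝔼 ω : ι → Ω, (M + ∑ e ∈ E, vecMulVec (w e (ω e)) (w e (ω e))).charpoly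

theorem aeval_charpoly {R A : Type*} [CommRing R] [CommRing A] [Algebra R A] (M : Matrix V V R)
    (a : A) : aeval a M.charpoly = (scalar V a - M.map (algebraMap R A)).det := by
  rw [← eval_map_algebraMap, ← charpoly_map, eval_charpoly]

theorem map_univ_expect {X Y : Type*} [AddCommGroup X] [Module ℝ X] [Module ℚ≥0 X]
    [IsScalarTower ℚ≥0 ℝ X] [AddCommGroup Y] [Module ℝ Y] [Module ℚ≥0 Y] [IsScalarTower ℚ≥0 ℝ Y]
    (L : X →ₗ[ℝ] Y) (f : Ω → X) : L (𝔼 a, f a) = 𝔼 a, L (f a) :=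
  map_expect (L.restrictScalars ℚ≥0) f univ

variable (w : ι → Ω → V → ℝ) (E : Finset ι) (M : Matrix V V ℝ)

theorem aeval_avgCharpoly (z : ℂ) :
    aeval z (avgCharpoly w E M) =
      avgDet (fun e a i => (w e a i : ℂ)) E (scalar V z - M.map (algebraMap ℝ ℂ)) := by
  rw [avgCharpoly, avgDet, ← AlgHom.toLinearMap_apply, map_univ_expect]
  refine expect_congr rfl fun ω _ => ?_
  rw [AlgHom.toLinearMap_apply, aeval_charpoly, sub_sub]
  congr
  ext i j
  simp [Matrix.sum_apply, vecMulVec_apply]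

theorem eval_avgCharpoly (x : ℝ) :
    (avgCharpoly w E M).eval x =
      𝔼 ω : ι → Ω, (scalar V x - (M + ∑ e ∈ E, vecMulVec (w e (ω e)) (w e (ω e)))).det := by
  simp_rw [avgCharpoly, ← leval_apply, map_univ_expect, leval_apply, eval_charpoly]

theorem avgCharpoly_natDegree_le : (avgCharpoly w E M).natDegree ≤ Fintype.card V := by
  rw [avgCharpoly, Finset.expect]
  refine (natDegree_smul_le _ _).trans (natDegree_sum_le_of_forall_le _ _ fun ω _ => ?_)
  exact (charpoly_natDegree_eq_dim _).le

variable [Nonempty Ω]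

theorem avgCharpoly_coeff_card : (avgCharpoly w E M).coeff (Fintype.card V) = 1 := by
  have coeff_card (N : Matrix V V ℝ) : lcoeff ℝ (Fintype.card V) N.charpoly = 1 := by
    rw [lcoeff_apply, ← charpoly_natDegree_eq_dim N, N.charpoly_monic.coeff_natDegree]
  rw [← lcoeff_apply, avgCharpoly, map_univ_expect]
  simp [coeff_card]

theorem monic_avgCharpoly : (avgCharpoly w E M).Monic :=
  monic_of_natDegree_le_of_coeff_eq_one _ (avgCharpoly_natDegree_le w E M)
    (avgCharpoly_coeff_card w E M)

theorem natDegree_avgCharpoly : (avgCharpoly w E M).natDegree = Fintype.card V :=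
  natDegree_eq_of_le_of_coeff_ne_zero (avgCharpoly_natDegree_le w E M)
    (by simp [avgCharpoly_coeff_card])

variable {w E M}

theorem avgCharpoly_insert {e : ι} (he : e ∉ E) :
    avgCharpoly w (insert e E) M = 𝔼 a, avgCharpoly w E (M + vecMulVec (w e a) (w e a)) := by
  simp_rw [avgCharpoly, expect_comp_sum_insert (fun e a => vecMulVec (w e a) (w e a))
    (fun S => (M + S).charpoly) he, add_assoc]

theorem interlaces_avgCharpoly_add_vecMulVec (hM : M.IsSymm) (a : V → ℝ) :
    Interlaces (avgCharpoly w E M) (avgCharpoly w E (M + vecMulVec a a)) where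
  monic_left := monic_avgCharpoly w E M
  monic_right := monic_avgCharpoly w E _
  natDegree_eq := by rw [natDegree_avgCharpoly, natDegree_avgCharpoly]
  im_nonneg z hz := by
    have isHermitian_map : (M.map (algebraMap ℝ ℂ)).IsHermitian := by
      ext i j
      simp [hM.apply i j]
    have posDefIm : PosDefIm (scalar V z - M.map (algebraMap ℝ ℂ)) := by
      rw [show scalar V z = z • 1 by simp [smul_one_eq_diagonal]]
      exact (PosDefIm.smul_posDef PosDef.one hz).sub_isHermitian isHermitian_map
    have map_add_vecMulVec : (M + vecMulVec a a).map (algebraMap ℝ ℂ) = M.map (algebraMap ℝ ℂ) +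
        vecMulVec (fun i => (a i : ℂ)) (star fun i => (a i : ℂ)) := by
      ext i j
      simp [vecMulVec_apply]
    rw [aeval_avgCharpoly, aeval_avgCharpoly, map_add_vecMulVec, ← sub_sub]
    rcases avgDet_sub_vecMulVec_div_eq_one_or_im_pos _
      (fun _ => avgDet_ne_zero (fun e b i => (w e b i : ℂ)) E) posDefIm (fun i => (a i : ℂ)) with
      h | h
    · rw [h, Complex.one_im]
    · exact h.le

theorem exists_eval_charpoly_pos_of_avgCharpoly_pos (hM : M.IsSymm) {β : ℝ}
    (hβ : ∀ x > β, 0 < (avgCharpoly w E M).eval x) :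
    ∃ ω : ι → Ω, ∀ x > β,
      0 < (M + ∑ e ∈ E, vecMulVec (w e (ω e)) (w e (ω e))).charpoly.eval x := by
  induction E using Finset.induction generalizing M with
  | empty => exact ⟨Classical.arbitrary _, by simpa [avgCharpoly] using hβ⟩
  | insert e E he ih =>
    have exists_pos (x : ℝ) (hx : β < x) :
        ∃ a, 0 < (avgCharpoly w E (M + vecMulVec (w e a) (w e a))).eval x := by
      have expect_pos := hβ x hx
      rw [avgCharpoly_insert he, ← leval_apply, map_univ_expect] at expect_pos
      obtain ⟨a, -, ha⟩ := exists_lt_of_lt_expect univ_nonempty expect_pos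
      exact ⟨a, ha⟩
    obtain ⟨a, ha⟩ := exists_forall_eval_pos_of_interlaces
      (fun a => interlaces_avgCharpoly_add_vecMulVec hM (w e a)) exists_pos
    obtain ⟨ω, hω⟩ := ih (hM.add (by ext i j; simp [vecMulVec_apply, mul_comm])) ha
    refine ⟨update ω e a, fun x hx => ?_⟩
    rw [sum_insert he, update_self, ← add_assoc, sum_congr rfl fun f hf => by
      rw [update_of_ne (ne_of_mem_of_not_mem hf he)]]
    exact hω x hx

end AvgCharpoly

section Signing

open Polynomial

variable {V : Type*} [DecidableEq V]

/-- The vector `δ_a + s δ_b` of an edge `e = s(a, b)` with sign `s`; the choice of the orientation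
`(a, b)` is immaterial for the rank one matrix it spans, by `vecMulVec_signedEdgeVec_apply`. -/
noncomputable def signedEdgeVec (e : Sym2 V) (s : ℤˣ) : V → ℝ :=
  Pi.single (Quot.out e).1 1 + signChar ℝ s • Pi.single (Quot.out e).2 1

theorem vecMulVec_signedEdgeVec_apply {e : Sym2 V} (he : ¬e.IsDiag) (s : ℤˣ) (i j : V) :
    vecMulVec (signedEdgeVec e s) (signedEdgeVec e s) i j =
      (if i = j ∧ i ∈ e then 1 else 0) + if s(i, j) = e then signChar ℝ s else 0 := by
  obtain ⟨a, b, rfl, vec_eq⟩ : ∃ a b, e = s(a, b) ∧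
      signedEdgeVec e s = Pi.single a 1 + signChar ℝ s • Pi.single b 1 :=
    ⟨_, _, (Quot.out_eq e).symm, rfl⟩
  have a_ne_b : a ≠ b := by simpa using he
  rw [vecMulVec_apply, vec_eq]
  clear vec_eq
  by_cases hia : i = a <;> by_cases hib : i = b <;> by_cases hja : j = a <;>
    by_cases hjb : j = b <;> simp_all [eq_comm]

variable [Fintype V] (G : SimpleGraph V) [DecidableRel G.Adj]

theorem sum_vecMulVec_signedEdgeVec (σ : Sym2 V → ℤˣ) :
    ∑ e ∈ G.edgeFinset, vecMulVec (signedEdgeVec e (σ e)) (signedEdgeVec e (σ e)) =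
      G.degMatrix ℝ + edgeScale (signChar ℝ ∘ σ) (G.adjMatrix ℝ) := by
  ext i j
  rw [Matrix.sum_apply, sum_congr rfl fun e he => vecMulVec_signedEdgeVec_apply
    (G.not_isDiag_of_mem_edgeFinset he) (σ e) i j, sum_add_distrib]
  congr 1
  · rcases eq_or_ne i j with rfl | hij
    · simp [SimpleGraph.degMatrix, ← G.card_incidenceFinset_eq_degree,
        G.incidenceFinset_eq_filter]
    · simp [SimpleGraph.degMatrix, hij]
  · simp [SimpleGraph.adjMatrix_apply]

theorem eval_avgCharpoly_signedEdgeVec (x : ℝ) :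
    (avgCharpoly signedEdgeVec G.edgeFinset (-G.degMatrix ℝ)).eval x =
      avgMinor (fun _ => x) (G.adjMatrix ℝ) ∅ := by
  simp_rw [eval_avgCharpoly, sum_vecMulVec_signedEdgeVec, neg_add_cancel_left, avgMinor,
    pinRows_empty]
  rfl

variable {d : ℕ}

theorem exists_signing_eval_charpoly_pos (hd : 1 ≤ d) (hG : ∀ v, G.degree v ≤ d + 1) :
    ∃ σ : Sym2 V → ℤˣ, ∀ x > 2 * √d,
      0 < (edgeScale (signChar ℝ ∘ σ) (G.adjMatrix ℝ)).charpoly.eval x := by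
  have symm : (-G.degMatrix ℝ).IsSymm := (isSymm_diagonal _).neg
  have avg_pos (x : ℝ) (hx : 2 * √d < x) :
      0 < (avgCharpoly signedEdgeVec G.edgeFinset (-G.degMatrix ℝ)).eval x := by
    rw [eval_avgCharpoly_signedEdgeVec]
    exact (avgMinor_pos_and_sqrt_mul_avgMinor_insert_le G hd hx hG ∅).1
  obtain ⟨σ, hσ⟩ := exists_eval_charpoly_pos_of_avgCharpoly_pos symm avg_pos
  simp_rw [sum_vecMulVec_signedEdgeVec, neg_add_cancel_left] at hσ
  exact ⟨σ, hσ⟩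

omit [DecidableEq V] in
theorem edgeScale_adjMatrix_mulVec_signChar_mul (c : G.Coloring ℤˣ) (w : Sym2 V → ℝ) {lam : ℝ}
    {x : V → ℝ} (hx : edgeScale w (G.adjMatrix ℝ) *ᵥ x = lam • x) :
    edgeScale w (G.adjMatrix ℝ) *ᵥ (fun v => signChar ℝ (c v) * x v) =
      -lam • fun v => signChar ℝ (c v) * x v := by
  have neg_of_adj {u v : V} (h : G.Adj u v) : c v = -c u :=
    Int.units_ne_iff_eq_neg.1 (c.valid h).symm
  ext u
  have hxu := congrFun hx u
  simp only [mulVec, dotProduct, edgeScale_apply, Pi.smul_apply, smul_eq_mul] at hxu ⊢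
  rw [mul_left_comm, neg_mul, ← hxu, ← sum_neg_distrib, mul_sum]
  refine sum_congr rfl fun v _ => ?_
  by_cases h : G.Adj u v
  · rw [neg_of_adj h, signChar_neg]
    ring
  · simp [h]

omit [DecidableEq V] in
theorem exists_signing_abs_eigenvalue_le (hd : 1 ≤ d) (hG : ∀ v, G.degree v ≤ d + 1)
    (hcol : G.Colorable 2) :
    ∃ σ : Sym2 V → ℤˣ, ∀ (lam : ℝ) (x : V → ℝ), x ≠ 0 →
      edgeScale (signChar ℝ ∘ σ) (G.adjMatrix ℝ) *ᵥ x = lam • x → |lam| ≤ 2 * √d := by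
  obtain ⟨σ, hσ⟩ := exists_signing_eval_charpoly_pos G hd hG
  have eigenvalue_le {lam : ℝ} {x : V → ℝ} (hx : x ≠ 0)
      (h : edgeScale (signChar ℝ ∘ σ) (G.adjMatrix ℝ) *ᵥ x = lam • x) : lam ≤ 2 * √d := by
    by_contra! hlt
    refine (hσ lam hlt).ne' ?_
    rw [eval_charpoly]
    refine exists_mulVec_eq_zero_iff.1 ⟨x, hx, ?_⟩
    rw [sub_mulVec, h, sub_eq_zero, scalar_apply, ← smul_one_eq_diagonal, smul_mulVec, one_mulVec]
  refine ⟨σ, fun lam x hx h => abs_le'.2 ⟨eigenvalue_le hx h, ?_⟩⟩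
  let c : G.Coloring ℤˣ := hcol.toColoring (by simp)
  refine eigenvalue_le (fun h0 => hx ?_) (edgeScale_adjMatrix_mulVec_signChar_mul G c _ h)
  ext v
  exact (mul_eq_zero.1 (congrFun h0 v)).resolve_left
    (left_ne_zero_of_mul_eq_one (signChar_mul_self _))

end Signing

section SignedLift

variable {V : Type*}

/-- The 2-lift of `G` prescribed by the signing `σ`: over an edge `e` of `G`, the two copies of its
endpoints are joined in parallel if `σ e = 1` and crosswise if `σ e = -1`. -/
def signedLift (G : SimpleGraph V) (σ : Sym2 V → ℤˣ) : SimpleGraph (V × ℤˣ) where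
  Adj p q := G.Adj p.1 q.1 ∧ p.2 * q.2 = σ s(p.1, q.1)
  symm := ⟨fun p q h => ⟨h.1.symm, by rw [mul_comm, h.2, Sym2.eq_swap]⟩⟩
  loopless := ⟨fun p h => G.loopless.irrefl _ h.1⟩

/-- The component of `f : V × ℤˣ → ℝ` on which the deck transformations of a 2-lift act through the
character `χ`, as a function on the base. -/
def fiberSum (χ : ℤˣ →* ℝ) (f : V × ℤˣ → ℝ) (v : V) : ℝ :=
  ∑ a, χ a * f (v, a)

theorem fiberSum_one_add_signChar_mul_fiberSum (f : V × ℤˣ → ℝ) (v : V) (a : ℤˣ) :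
    fiberSum 1 f v + signChar ℝ a * fiberSum (signChar ℝ) f v = 2 * f (v, a) := by
  rcases Int.units_eq_one_or a with rfl | rfl <;>
    simp only [fiberSum, UnitsInt.univ, MonoidHom.one_apply, one_mul, mem_singleton,
      units_ne_neg_self, not_false_eq_true, sum_insert, sum_singleton, map_one, signChar_neg,
      neg_mul] <;>
    ring

theorem fiberSum_smul (χ : ℤˣ →* ℝ) (c : ℝ) (f : V × ℤˣ → ℝ) :
    fiberSum χ (c • f) = c • fiberSum χ f := by
  ext v
  simp_rw [Pi.smul_apply, fiberSum, smul_sum, Pi.smul_apply, mul_smul_comm]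

variable [Fintype V] (G : SimpleGraph V) (σ : Sym2 V → ℤˣ)

theorem adjMatrix_signedLift_mulVec {R : Type*} [NonAssocSemiring R] (f : V × ℤˣ → R)
    (p : V × ℤˣ) :
    ((signedLift G σ).adjMatrix R *ᵥ f) p =
      ∑ v ∈ G.neighborFinset p.1, f (v, p.2 * σ s(p.1, v)) := by
  have mul_eq_iff (a b s : ℤˣ) : a * b = s ↔ b = a * s := by
    rw [mul_comm, ← eq_mul_inv_iff_mul_eq, Int.units_inv_eq_self, mul_comm]
  simp [signedLift, mulVec, dotProduct, SimpleGraph.adjMatrix_apply, Fintype.sum_prod_type,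
    mul_eq_iff, ite_and, SimpleGraph.neighborFinset_eq_filter, sum_filter, -UnitsInt.univ]

theorem degree_signedLift (p : V × ℤˣ) : (signedLift G σ).degree p = G.degree p.1 := by
  have mulVec_const := adjMatrix_signedLift_mulVec G σ (Function.const _ (1 : ℕ)) p
  rw [SimpleGraph.adjMatrix_mulVec_const_apply] at mulVec_const
  simpa using mulVec_const

theorem edgeScale_adjMatrix_mulVec_fiberSum (χ : ℤˣ →* ℝ) (f : V × ℤˣ → ℝ) :
    edgeScale (χ ∘ σ) (G.adjMatrix ℝ) *ᵥ fiberSum χ f =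
      fiberSum χ ((signedLift G σ).adjMatrix ℝ *ᵥ f) := by
  have fiberSum_shift (v : V) (s : ℤˣ) : ∑ a, χ a * f (v, a * s) = χ s * fiberSum χ f v := by
    rw [fiberSum, ← Equiv.sum_comp (Equiv.mulRight s) fun a => χ a * f (v, a), mul_sum]
    refine sum_congr rfl fun a _ => ?_
    rw [Equiv.coe_mulRight, ← mul_assoc, ← map_mul, mul_left_comm, Int.units_mul_self, mul_one]
  ext u
  calc (edgeScale (χ ∘ σ) (G.adjMatrix ℝ) *ᵥ fiberSum χ f) u
      = ∑ v ∈ G.neighborFinset u, χ (σ s(u, v)) * fiberSum χ f v := by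
        simp [mulVec, dotProduct, SimpleGraph.adjMatrix_apply, SimpleGraph.neighborFinset_eq_filter,
          sum_filter]
    _ = ∑ v ∈ G.neighborFinset u, ∑ a, χ a * f (v, a * σ s(u, v)) := by simp_rw [fiberSum_shift]
    _ = fiberSum χ ((signedLift G σ).adjMatrix ℝ *ᵥ f) u := by
        simp_rw [fiberSum, adjMatrix_signedLift_mulVec, mul_sum]
        exact sum_comm

variable {G σ} {lam : ℝ} {f : V × ℤˣ → ℝ}

theorem edgeScale_adjMatrix_mulVec_fiberSum_signChar
    (hf : (signedLift G σ).adjMatrix ℝ *ᵥ f = lam • f) :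
    edgeScale (signChar ℝ ∘ σ) (G.adjMatrix ℝ) *ᵥ fiberSum (signChar ℝ) f =
      lam • fiberSum (signChar ℝ) f := by
  rw [edgeScale_adjMatrix_mulVec_fiberSum, hf, fiberSum_smul]

theorem adjMatrix_mulVec_fiberSum_one (hf : (signedLift G σ).adjMatrix ℝ *ᵥ f = lam • f) :
    G.adjMatrix ℝ *ᵥ fiberSum 1 f = lam • fiberSum 1 f := by
  rw [← fiberSum_smul, ← hf, ← edgeScale_adjMatrix_mulVec_fiberSum G σ 1]
  exact congrArg (· *ᵥ fiberSum 1 f) (edgeScale_one _).symm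

theorem adjMatrix_mulVec_eq_smul_iff_forall_reachable {k : ℕ} (hG : G.IsRegularOfDegree k)
    {x : V → ℝ} :
    G.adjMatrix ℝ *ᵥ x = (k : ℝ) • x ↔ ∀ u v, G.Reachable u v → x u = x v := by
  have degMatrix_mulVec : G.degMatrix ℝ *ᵥ x = (k : ℝ) • x := by
    ext v
    rw [SimpleGraph.degMatrix_mulVec_apply, hG.degree_eq, Pi.smul_apply, smul_eq_mul]
  rw [← G.lapMatrix_mulVec_eq_zero_iff_forall_reachable, SimpleGraph.lapMatrix, sub_mulVec,
    sub_eq_zero, eq_comm, degMatrix_mulVec]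

theorem connected_signedLift {k : ℕ} (hG : G.Connected) (hreg : G.IsRegularOfDegree k)
    (hσ : ∀ x : V → ℝ,
      edgeScale (signChar ℝ ∘ σ) (G.adjMatrix ℝ) *ᵥ x = (k : ℝ) • x → x = 0) :
    (signedLift G σ).Connected := by
  have lift_reg : (signedLift G σ).IsRegularOfDegree k := fun p => by
    rw [degree_signedLift, hreg.degree_eq]
  obtain ⟨v⟩ := hG.nonempty
  set f : V × ℤˣ → ℝ := fun p => if (signedLift G σ).Reachable (v, 1) p then 1 else 0 with f_def
  have f_eigen : (signedLift G σ).adjMatrix ℝ *ᵥ f = (k : ℝ) • f := by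
    refine (adjMatrix_mulVec_eq_smul_iff_forall_reachable lift_reg).2 fun p q hpq => ?_
    have reachable_iff :
        (signedLift G σ).Reachable (v, 1) p ↔ (signedLift G σ).Reachable (v, 1) q :=
      ⟨fun h => h.trans hpq, fun h => h.trans hpq.symm⟩
    simp only [f_def, reachable_iff]
  have signed_eq_zero := hσ _ (edgeScale_adjMatrix_mulVec_fiberSum_signChar f_eigen)
  have sum_const := (adjMatrix_mulVec_eq_smul_iff_forall_reachable hreg).1
    (adjMatrix_mulVec_fiberSum_one f_eigen)
  have f_const (p : V × ℤˣ) : f p = f (v, 1) := by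
    have inversion := fiberSum_one_add_signChar_mul_fiberSum f
    simp_rw [signed_eq_zero, Pi.zero_apply, mul_zero, add_zero] at inversion
    linarith [inversion p.1 p.2, inversion v 1, sum_const p.1 v (hG.preconnected _ _)]
  refine (SimpleGraph.connected_iff_exists_forall_reachable _).2 ⟨(v, 1), fun p => ?_⟩
  by_contra hp
  simpa [f_def, hp] using f_const p

end SignedLift

section Ramanujan

/-- A connected `k`-regular graph is Ramanujan if every eigenvalue of its adjacency matrix has
absolute value `k` or at most `2 √(k - 1)`, the spectral radius of the `k`-regular tree. -/
structure IsRamanujan {V : Type*} [Fintype V] (G : SimpleGraph V) (k : ℕ) : Prop where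
  connected : G.Connected
  regular : G.IsRegularOfDegree k
  abs_eigenvalue (lam : ℝ) : (∃ x : V → ℝ, x ≠ 0 ∧ G.adjMatrix ℝ *ᵥ x = lam • x) →
    |lam| = (k : ℝ) ∨ |lam| ≤ 2 * √((k : ℝ) - 1)

theorem two_mul_sqrt_sub_one_lt {k : ℝ} (hk : 2 < k) : 2 * √(k - 1) < k := by
  rw [← lt_div_iff₀' two_pos, Real.sqrt_lt' (by linarith)]
  nlinarith [sq_pos_of_pos (sub_pos.2 hk)]

namespace IsRamanujan

variable {V W : Type*} [Fintype V] [Fintype W] {G : SimpleGraph V} {k : ℕ}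

theorem of_iso {H : SimpleGraph W} (hG : IsRamanujan G k) (φ : G ≃g H) : IsRamanujan H k where
  connected := φ.connected_iff.1 hG.connected
  regular w := by
    rw [← φ.symm.degree_eq, hG.regular.degree_eq]
  abs_eigenvalue := by
    rintro lam ⟨x, hx, h⟩
    refine hG.abs_eigenvalue lam ⟨x ∘ φ, fun h0 => hx ?_, ?_⟩
    · ext w
      simpa using congrFun h0 (φ.symm w)
    · calc G.adjMatrix ℝ *ᵥ (x ∘ φ)
          = (H.adjMatrix ℝ *ᵥ ((x ∘ φ) ∘ φ.symm)) ∘ φ := by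
            rw [← φ.toEmbedding.submatrix_adjMatrix ℝ]
            exact submatrix_mulVec_equiv _ _ _ φ.toEquiv
        _ = lam • (x ∘ φ) := by
            rw [comp_assoc, RelIso.self_comp_symm, comp_id, h]
            rfl

theorem signedLift_of_abs_eigenvalue_le (hG : IsRamanujan G k) (hk : 3 ≤ k) {σ : Sym2 V → ℤˣ}
    (hσ : ∀ (lam : ℝ) (x : V → ℝ), x ≠ 0 →
      edgeScale (signChar ℝ ∘ σ) (G.adjMatrix ℝ) *ᵥ x = lam • x → |lam| ≤ 2 * √((k : ℝ) - 1)) :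
    IsRamanujan (signedLift G σ) k where
  connected := by
    refine connected_signedLift hG.connected hG.regular fun x hx => ?_
    by_contra h0
    have abs_le := hσ k x h0 hx
    rw [Nat.abs_cast] at abs_le
    exact abs_le.not_gt (two_mul_sqrt_sub_one_lt (by exact_mod_cast hk))
  regular p := by rw [degree_signedLift, hG.regular.degree_eq]
  abs_eigenvalue := by
    rintro lam ⟨f, hf, h⟩
    by_cases sum_eq_zero : fiberSum 1 f = 0
    · refine Or.inr (hσ lam _ (fun signed_eq_zero => hf ?_)
        (edgeScale_adjMatrix_mulVec_fiberSum_signChar h))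
      ext ⟨v, a⟩
      simpa [sum_eq_zero, signed_eq_zero] using (fiberSum_one_add_signChar_mul_fiberSum f v a).symm
    · exact hG.abs_eigenvalue lam ⟨_, sum_eq_zero, adjMatrix_mulVec_fiberSum_one h⟩

theorem exists_signedLift (hG : IsRamanujan G k) (hk : 3 ≤ k) (hcol : G.Colorable 2) :
    ∃ σ, IsRamanujan (signedLift G σ) k ∧ (signedLift G σ).Colorable 2 := by
  obtain ⟨d, rfl⟩ : ∃ d, k = d + 1 := ⟨k - 1, by lia⟩
  obtain ⟨σ, hσ⟩ := exists_signing_abs_eigenvalue_le G (d := d) (by lia)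
    (fun v => (hG.regular v).le) hcol
  refine ⟨σ, hG.signedLift_of_abs_eigenvalue_le hk ?_, hcol.of_hom ⟨Prod.fst, fun h => h.1⟩⟩
  simpa using hσ

end IsRamanujan

theorem adjMatrix_completeBipartiteGraph_mulVec {R α β : Type*} [Fintype α] [Fintype β]
    [NonAssocSemiring R] (x : α ⊕ β → R) :
    (completeBipartiteGraph α β).adjMatrix R *ᵥ x =
      Sum.elim (fun _ => ∑ b, x (Sum.inr b)) (fun _ => ∑ a, x (Sum.inl a)) := by
  ext (a | b) <;> simp [mulVec, dotProduct, SimpleGraph.adjMatrix_apply]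

theorem connected_completeBipartiteGraph (α β : Type*) [Nonempty α] [Nonempty β] :
    (completeBipartiteGraph α β).Connected := by
  obtain ⟨a⟩ := ‹Nonempty α›
  obtain ⟨b⟩ := ‹Nonempty β›
  have reachable (a' : α) (b' : β) :
      (completeBipartiteGraph α β).Reachable (Sum.inl a') (Sum.inr b') :=
    SimpleGraph.Adj.reachable (by simp)
  refine (SimpleGraph.connected_iff_exists_forall_reachable _).2 ⟨Sum.inl a, ?_⟩
  rintro (a' | b')
  · exact (reachable a b).trans (reachable a' b).symm
  · exact reachable a b'

theorem isRamanujan_completeBipartiteGraph (α : Type*) [Fintype α] [Nonempty α] :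
    IsRamanujan (completeBipartiteGraph α α) (Fintype.card α) where
  connected := connected_completeBipartiteGraph α α
  regular p := by
    have mulVec_const := congrFun
      (adjMatrix_completeBipartiteGraph_mulVec fun _ : α ⊕ α => (1 : ℕ)) p
    rcases p with a | a <;> simpa using mulVec_const
  abs_eigenvalue := by
    rintro lam ⟨x, hx, h⟩
    set A := (completeBipartiteGraph α α).adjMatrix ℝ
    have cube_mulVec : A *ᵥ A *ᵥ A *ᵥ x = (Fintype.card α : ℝ) ^ 2 • A *ᵥ x := by
      simp_rw [A, adjMatrix_completeBipartiteGraph_mulVec]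
      ext (a | a) <;>
        simp only [Sum.elim_inr, sum_const, card_univ, nsmul_eq_mul, Sum.elim_inl, Pi.smul_apply,
          smul_eq_mul] <;>
        ring
    have cube_eq : lam ^ 3 = (Fintype.card α : ℝ) ^ 2 * lam := by
      refine smul_left_injective ℝ hx ?_
      simp only [h, mulVec_smul, smul_smul] at cube_mulVec
      simpa only [pow_three'] using cube_mulVec
    rcases eq_or_ne lam 0 with rfl | h0
    · simp
    · left
      rw [← Nat.abs_cast, ← sq_eq_sq_iff_abs_eq_abs]
      exact mul_right_cancel₀ h0 (by rw [← pow_succ, cube_eq])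

theorem exists_isRamanujan_colorable_two {k : ℕ} (hk : 3 ≤ k) (N : ℕ) :
    ∃ (V : Type) (_ : Fintype V) (G : SimpleGraph V),
      N < Fintype.card V ∧ IsRamanujan G k ∧ G.Colorable 2 := by
  induction N with
  | zero =>
    have : NeZero k := ⟨by lia⟩
    have card_pos : 0 < Fintype.card (Fin k ⊕ Fin k) := Fintype.card_pos
    exact ⟨Fin k ⊕ Fin k, _, completeBipartiteGraph (Fin k) (Fin k), card_pos,
      by simpa using isRamanujan_completeBipartiteGraph (Fin k),
      (SimpleGraph.CompleteBipartiteGraph.bicoloring _ _).colorable⟩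
  | succ N ih =>
    obtain ⟨V, _, G, hN, hG, hcol⟩ := ih
    obtain ⟨σ, hlift, hlift_col⟩ := hG.exists_signedLift hk hcol
    refine ⟨V × ℤˣ, _, signedLift G σ, ?_, hlift, hlift_col⟩
    rw [Fintype.card_prod, Fintype.card_units_int]
    lia

end Ramanujan

/-- **Marcus–Spielman–Srivastava**: for every `k ≥ 3` there exist infinitely many
finite connected bipartite `k`-regular Ramanujan graphs. -/
theorem exists_bipartite_ramanujan (k : ℕ) (hk : 3 ≤ k) (N : ℕ) :
    ∃ (n : ℕ) (G : SimpleGraph (Fin n)),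
      n > N ∧ G.Connected ∧ G.Colorable 2 ∧ G.IsRegularOfDegree k ∧
      ∀ lam : ℝ, (∃ x : Fin n → ℝ, x ≠ 0 ∧ G.adjMatrix ℝ *ᵥ x = lam • x) →
        |lam| = (k : ℝ) ∨ |lam| ≤ 2 * Real.sqrt ((k : ℝ) - 1) := by
  obtain ⟨V, _, G, hN, hG, hcol⟩ := exists_isRamanujan_colorable_two hk N
  let φ := SimpleGraph.Iso.map (Fintype.equivFin V) G
  obtain ⟨connected, regular, abs_eigenvalue⟩ := hG.of_iso φ
  exact ⟨_, _, hN, connected, hcol.of_hom φ.symm.toHom, regular, abs_eigenvalue⟩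
end

section
/- (Lubotzky–Phillips–Sarnak, Margulis, Morgenstern) For every prime power q and every N there exists a finite connected (q+1)-regular graph X with more than N vertices such that every eigenvalue λ of the adjacency matrix of X satisfies |λ| = q+1 or |λ| ≤ 2√q; that is, there exist infinitely many (q+1)-regular Ramanujan graphs. -/
open Matrix
open scoped Classical

/-!
Following Marcus, Spielman and Srivastava, start from the complete bipartite graph `K_{q+1,q+1}`
and repeatedly pass to a double cover prescribed by a signing of the edges. The new eigenvalues of
such a cover are those of the signed adjacency matrix. The average over all signings of the
characteristic polynomial of the signed adjacency matrix is the matching polynomial, whose roots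
are at most `2√q` by the recursion of Heilmann and Lieb. As the signed adjacency matrix plus the
degree matrix is a sum of independent random rank-one matrices, all conditional expectations of
its characteristic polynomial are real-rooted, and interlacing yields a signing whose largest
eigenvalue is at most the largest root of the average. Bipartiteness makes the spectrum symmetric,
which turns this one-sided bound into a two-sided one, and `2√q < q + 1` keeps the cover connected.
-/

section Interlacing

open Polynomial

variable {f g : ℝ[X]} {n : ℕ} {a b z : ℝ}

lemma convex_isMonicOfDegree (n : ℕ) : Convex ℝ {f : ℝ[X] | f.IsMonicOfDegree n} := by
  intro f hf g hg s t _ _ hst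
  simp only [Set.mem_ofPred_eq, isMonicOfDegree_iff] at hf hg ⊢
  refine ⟨natDegree_add_le_of_degree_le ((natDegree_smul_le _ _).trans hf.1)
    ((natDegree_smul_le _ _).trans hg.1), ?_⟩
  simp [hf.2, hg.2, hst]

lemma exists_forall_ge_eval_pos (hf : f.Monic) : ∃ y, ∀ z ≥ y, 0 < f.eval z := by
  rcases Nat.eq_zero_or_pos f.natDegree with hdeg | hdeg
  · simp [hf.natDegree_eq_zero.1 hdeg]
  · have htendsto := f.tendsto_atTop_of_leadingCoeff_nonneg (natDegree_pos_iff_degree_pos.1 hdeg)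
      (hf.leadingCoeff.symm ▸ zero_le_one)
    exact Filter.eventually_atTop.1 (htendsto.eventually_gt_atTop 0)

lemma exists_isGreatest_eval_nonpos (hf : f.Monic) (hz : f.eval z ≤ 0) :
    ∃ x, IsGreatest {x | f.eval x ≤ 0} x := by
  obtain ⟨y, hy⟩ := exists_forall_ge_eval_pos hf
  have hbdd : BddAbove {x | f.eval x ≤ 0} :=
    ⟨y, fun x hx ↦ le_of_not_gt fun hyx ↦ (hy x hyx.le).not_ge hx⟩
  have hclosed : IsClosed {x | f.eval x ≤ 0} := isClosed_le f.continuous continuous_const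
  exact ⟨_, hclosed.csSup_mem ⟨z, hz⟩ hbdd, fun x hx ↦ le_csSup hbdd hx⟩

lemma sub_pow_le_eval_of_splits (hf : f.IsMonicOfDegree n) (hs : f.Splits)
    (hpos : ∀ x ≥ a, 0 < f.eval x) (hz : a ≤ z) : (z - a) ^ n ≤ f.eval z := by
  have hroot (x) (hx : x ∈ f.roots) : x < a :=
    lt_of_not_ge fun hax ↦ (hpos x hax).ne' (isRoot_of_mem_roots hx)
  calc (z - a) ^ n = (f.roots.map fun _ ↦ z - a).prod := by
        rw [Multiset.map_const', Multiset.prod_replicate, ← hs.natDegree_eq_card_roots,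
          hf.natDegree_eq]
    _ ≤ (f.roots.map fun x ↦ z - x).prod :=
        Multiset.prod_map_le_prod_map₀ _ _ (fun _ _ ↦ sub_nonneg.2 hz)
          fun x hx ↦ sub_le_sub_left (hroot x hx).le z
    _ = f.eval z := (hs.eval_eq_prod_roots_of_monic hf.monic z).symm

lemma eventually_forall_ge_eval_pos (hf : f.Monic) (hg : g.Monic) {t : ℝ} (ht : t ∈ Set.Ico 0 1)
    (hpos : ∀ z ≥ a, 0 < ((1 - t) • f + t • g).eval z) :
    ∀ᶠ t' in nhdsWithin t (Set.Ioi t), ∀ z ≥ a, 0 < ((1 - t') • f + t' • g).eval z := by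
  simp only [eval_add, eval_smul, smul_eq_mul] at hpos ⊢
  obtain ⟨y, hy⟩ := exists_forall_ge_eval_pos hf
  obtain ⟨y', hy'⟩ := exists_forall_ge_eval_pos hg
  have hcompact : ∀ᶠ t' in nhds t, ∀ z ∈ Set.Icc a (max y y'),
      0 < (1 - t') * f.eval z + t' * g.eval z := by
    refine isCompact_Icc.eventually_forall_of_forall_eventually fun z hz ↦ ?_
    have hcont : Continuous fun p : ℝ × ℝ ↦ (1 - p.1) * f.eval p.2 + p.1 * g.eval p.2 := by
      fun_prop
    exact hcont.continuousAt.eventually (lt_mem_nhds (hpos z hz.1))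
  filter_upwards [nhdsWithin_le_nhds hcompact, Ioo_mem_nhdsGT ht.2] with t' ht' htt' z hz
  rcases le_total z (max y y') with hzy | hzy
  · exact ht' z ⟨hz, hzy⟩
  · exact (convex_Ioi (0 : ℝ)) (hy z (le_of_max_le_left hzy)) (hy' z (le_of_max_le_right hzy))
      (sub_nonneg.2 htt'.2.le) (ht.1.trans htt'.1.le) (sub_add_cancel 1 t')

-- The roots of the convex combinations move continuously and cannot reach `a`; the lower bound
-- `(z - a) ^ n` also keeps them from entering the half-line from the right.
lemma eval_pos_of_segment_splits (hf : f.IsMonicOfDegree n) (hg : g.IsMonicOfDegree n)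
    (hs : ∀ h ∈ segment ℝ f g, h.Splits) (hpos : ∀ z ≥ a, 0 < f.eval z) (ha : 0 < g.eval a)
    (hz : a ≤ z) : 0 < g.eval z := by
  let h (t : ℝ) : ℝ[X] := (1 - t) • f + t • g
  have eval_h (t z : ℝ) : (h t).eval z = (1 - t) * f.eval z + t * g.eval z := by simp [h]
  have h_mem {t : ℝ} (ht : t ∈ Set.Icc 0 1) : h t ∈ segment ℝ f g :=
    ⟨1 - t, t, sub_nonneg.2 ht.2, ht.1, sub_add_cancel 1 t, rfl⟩
  have h_pos {t z : ℝ} (ht : t ∈ Set.Icc 0 1) (hfz : 0 < f.eval z) (hgz : 0 < g.eval z) :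
      0 < (h t).eval z := by
    rw [eval_h]
    exact (convex_Ioi (0 : ℝ)) hfz hgz (sub_nonneg.2 ht.2) ht.1 (sub_add_cancel 1 t)
  let S : Set ℝ := {t | ∀ z ≥ a, 0 < (h t).eval z}
  have hclosed : IsClosed (S ∩ Set.Icc 0 1) := by
    have hS : S ∩ Set.Icc 0 1 = {t | ∀ z ≥ a, (z - a) ^ n ≤ (h t).eval z} ∩ Set.Icc 0 1 := by
      ext t
      refine and_congr_left fun ht ↦ ⟨fun htS z hz ↦ ?_, fun hle z hz ↦ ?_⟩
      · exact sub_pow_le_eval_of_splits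
          ((convex_isMonicOfDegree n).segment_subset hf hg (h_mem ht)) (hs _ (h_mem ht)) htS hz
      · rcases eq_or_lt_of_le hz with rfl | haz
        · exact h_pos ht (hpos _ le_rfl) ha
        · exact (pow_pos (sub_pos.2 haz) n).trans_le (hle z hz)
    rw [hS]
    refine IsClosed.inter ?_ isClosed_Icc
    simp only [Set.ofPred_forall, eval_h]
    exact isClosed_iInter fun z ↦ isClosed_iInter fun _ ↦
      isClosed_le continuous_const (by fun_prop)
  have h1 : (1 : ℝ) ∈ S := hclosed.Icc_subset_of_forall_mem_nhdsWithin
    (by simpa [S, h] using hpos)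
    (fun t ht ↦ eventually_forall_ge_eval_pos hf.monic hg.monic ht.2 ht.1)
    (Set.right_mem_Icc.2 zero_le_one)
  simpa [h] using h1 z hz

lemma exists_forall_gt_eval_pos_of_stdSimplex_splits {κ : Type*} [Fintype κ] {f : κ → ℝ[X]}
    (hf : ∀ k, (f k).IsMonicOfDegree n)
    (hs : ∀ w ∈ stdSimplex ℝ κ, (∑ k, w k • f k).Splits) {w : κ → ℝ} (hw : w ∈ stdSimplex ℝ κ)
    (hpos : ∀ z > b, 0 < (∑ k, w k • f k).eval z) : ∃ k, ∀ z > b, 0 < (f k).eval z := by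
  by_contra! hneg
  choose z hbz hz using hneg
  choose ρ hρ using fun k ↦ exists_isGreatest_eval_nonpos (hf k).monic (hz k)
  have hpos_of_lt {k x} (hx : ρ k < x) : 0 < (f k).eval x :=
    lt_of_not_ge fun hle ↦ ((hρ k).2 hle).not_gt hx
  obtain ⟨k, hk⟩ : ∃ k, ∀ j, ρ k ≤ ρ j := by
    have : Nonempty κ := by
      by_contra! hempty
      simpa using hw.2
    exact Finite.exists_min ρ
  have hsegment (j) : ∀ h ∈ segment ℝ (f k) (f j), h.Splits := by
    rintro _ ⟨s, t, hs₀, ht₀, hst, rfl⟩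
    simpa [add_smul, Finset.sum_add_distrib, Pi.single_apply] using
      hs _ (convex_stdSimplex ℝ κ (single_mem_stdSimplex ℝ k) (single_mem_stdSimplex ℝ j)
        hs₀ ht₀ hst)
  have hnonpos (j) : (f j).eval (ρ k) ≤ 0 := by
    by_contra! hj
    have hkj : ρ k < ρ j := (hk j).lt_of_ne fun h ↦ ((hρ j).1.trans_lt (h ▸ hj)).false
    have hnear : ∀ᶠ a in nhdsWithin (ρ k) (Set.Ioi (ρ k)), 0 < (f j).eval a :=
      nhdsWithin_le_nhds ((f j).continuous.continuousAt.eventually (lt_mem_nhds hj))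
    obtain ⟨a, ha, hka, haj⟩ := (hnear.and (Ioc_mem_nhdsGT hkj)).exists
    exact (eval_pos_of_segment_splits (hf k) (hf j) (hsegment j)
      (fun z hz ↦ hpos_of_lt (hka.trans_le hz)) ha haj).not_ge (hρ j).1
  refine (hpos (ρ k) ((hbz k).trans_le ((hρ k).2 (hz k)))).not_ge ?_
  simp only [eval_finsetSum, eval_smul, smul_eq_mul]
  exact Finset.sum_nonpos fun j _ ↦ mul_nonpos_of_nonneg_of_nonpos (hw.1 j) (hnonpos j)

end Interlacing

section ProductExpectation

variable {ι κ E : Type*} [Fintype ι] [Fintype κ] [AddCommGroup E] [Module ℝ E]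

/-- The expectation `∑ s, (∏ i, w i (s i)) • φ s` of `φ` at a random choice function `s`
whose values are independent, `s i` being distributed according to the weights `w i`. -/
noncomputable def productExpectation (w : ι → κ → ℝ) (φ : (ι → κ) → E) : E :=
  ∑ s, (∏ i, w i (s i)) • φ s

lemma productExpectation_of_isEmpty [IsEmpty ι] (w : ι → κ → ℝ) (φ : (ι → κ) → E) (s : ι → κ) :
    productExpectation w φ = φ s := by
  simp [productExpectation, Subsingleton.elim default s]

lemma productExpectation_option (w : Option ι → κ → ℝ) (φ : (Option ι → κ) → E) :
    productExpectation w φ = ∑ k, w none k •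
      productExpectation (fun i ↦ w (some i)) fun s ↦ φ (Equiv.piOptionEquivProd.symm (k, s)) := by
  simp only [productExpectation, ← Equiv.piOptionEquivProd.symm.sum_comp, Fintype.sum_prod_type,
    Fintype.prod_option, Finset.smul_sum, mul_smul]
  rfl

lemma productExpectation_comp_equiv {ι' : Type*} [Fintype ι'] (e : ι ≃ ι') (w : ι' → κ → ℝ)
    (φ : (ι' → κ) → E) :
    productExpectation (fun i ↦ w (e i)) (fun s ↦ φ (s ∘ e.symm)) = productExpectation w φ :=
  Fintype.sum_equiv (e.arrowCongr (.refl κ)) _ _ fun s ↦ by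
    rw [← e.prod_comp]
    simp [Equiv.arrowCongr, Function.comp_def]

lemma map_productExpectation {F : Type*} [AddCommGroup F] [Module ℝ F] (L : E →ₗ[ℝ] F)
    (w : ι → κ → ℝ) (φ : (ι → κ) → E) :
    L (productExpectation w φ) = productExpectation w fun s ↦ L (φ s) := by
  simp [productExpectation]

lemma productExpectation_mem {w : ι → κ → ℝ} (hw : ∀ i, w i ∈ stdSimplex ℝ κ) {K : Set E}
    (hK : Convex ℝ K) {φ : (ι → κ) → E} (hφ : ∀ s, φ s ∈ K) : productExpectation w φ ∈ K := by
  refine hK.sum_mem (fun s _ ↦ Finset.prod_nonneg fun i _ ↦ (hw i).1 (s i)) ?_ fun s _ ↦ hφ s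
  simp [← Fintype.prod_sum, (hw _).2]

end ProductExpectation

section InterlacingFamily

open Polynomial

theorem exists_forall_gt_eval_pos_of_productExpectation_splits {ι κ : Type*} [Fintype ι]
    [Fintype κ] {n : ℕ} {b : ℝ} {p : (ι → κ) → ℝ[X]} (hp : ∀ s, (p s).IsMonicOfDegree n)
    (hs : ∀ w : ι → κ → ℝ, (∀ i, w i ∈ stdSimplex ℝ κ) → (productExpectation w p).Splits)
    {w : ι → κ → ℝ} (hw : ∀ i, w i ∈ stdSimplex ℝ κ)
    (hpos : ∀ z > b, 0 < (productExpectation w p).eval z) : ∃ s, ∀ z > b, 0 < (p s).eval z := by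
  revert p w
  refine Fintype.induction_empty_option (P := fun ι _ ↦
    ∀ {p : (ι → κ) → ℝ[X]}, (∀ s, (p s).IsMonicOfDegree n) →
    (∀ w : ι → κ → ℝ, (∀ i, w i ∈ stdSimplex ℝ κ) → (productExpectation w p).Splits) →
    ∀ {w : ι → κ → ℝ}, (∀ i, w i ∈ stdSimplex ℝ κ) →
    (∀ z > b, 0 < (productExpectation w p).eval z) → ∃ s, ∀ z > b, 0 < (p s).eval z) ?_ ?_ ?_ ι
  · intro α β _ e ih p hp hs w hw hpos
    let := Fintype.ofEquiv _ e.symm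
    obtain ⟨s, hs'⟩ := ih (p := fun s ↦ p (s ∘ e.symm)) (fun s ↦ hp _)
      (fun v hv ↦ by
        have := hs (fun i ↦ v (e.symm i)) fun i ↦ hv _
        rw [← productExpectation_comp_equiv e] at this
        simpa using this)
      (fun i ↦ hw (e i)) (by rwa [productExpectation_comp_equiv])
    exact ⟨_, hs'⟩
  · intro p _ _ w _ hpos
    exact ⟨PEmpty.elim, by rwa [productExpectation_of_isEmpty w p PEmpty.elim] at hpos⟩
  · intro ι _ ih p hp hs w hw hpos
    let p' (k : κ) (s : ι → κ) : ℝ[X] := p (Equiv.piOptionEquivProd.symm (k, s))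
    have sum_p' (v : κ → ℝ) (u : ι → κ → ℝ) : ∑ k, v k • productExpectation u (p' k) =
        productExpectation (fun i ↦ i.elim v u) p :=
      (productExpectation_option (fun i ↦ i.elim v u) p).symm
    have hs' {v : κ → ℝ} (hv : v ∈ stdSimplex ℝ κ) {u : ι → κ → ℝ}
        (hu : ∀ i, u i ∈ stdSimplex ℝ κ) : (∑ k, v k • productExpectation u (p' k)).Splits :=
      sum_p' v u ▸ hs _ (Option.forall.2 ⟨hv, hu⟩)
    obtain ⟨k, hk⟩ := exists_forall_gt_eval_pos_of_stdSimplex_splits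
      (f := fun k ↦ productExpectation (fun i ↦ w (some i)) (p' k))
      (fun k ↦ productExpectation_mem (fun i ↦ hw (some i)) (convex_isMonicOfDegree n)
        fun s ↦ hp _)
      (fun v hv ↦ hs' hv fun i ↦ hw (some i)) (hw none) (by rwa [← productExpectation_option])
    obtain ⟨s, hs⟩ := ih (p := p' k) (fun s ↦ hp _)
      (fun u hu ↦ by simpa [Pi.single_apply] using hs' (single_mem_stdSimplex ℝ k) hu)
      (fun i ↦ hw (some i)) hk
    exact ⟨_, hs⟩

end InterlacingFamily

section Stability

open scoped ComplexOrder

variable {V : Type*} [Fintype V]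

/-- Positivity of the imaginary part of the quadratic form of a complex matrix: the matrix
analogue of the open upper half-plane. -/
def PosIm (M : Matrix V V ℂ) : Prop :=
  ∀ x : V → ℂ, x ≠ 0 → 0 < (star x ⬝ᵥ M *ᵥ x).im

lemma PosIm.det_ne_zero [DecidableEq V] {M : Matrix V V ℂ} (hM : PosIm M) : M.det ≠ 0 := by
  intro h
  obtain ⟨x, hx, hMx⟩ := exists_mulVec_eq_zero_iff.2 h
  simpa [hMx] using hM x hx

lemma PosIm.sub_smul {M A : Matrix V V ℂ} (hM : PosIm M) (hA : A.PosSemidef) {t : ℂ}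
    (ht : t.im ≤ 0) : PosIm (M - t • A) := by
  intro x hx
  obtain ⟨hre, him⟩ := Complex.nonneg_iff.1 (hA.dotProduct_mulVec_nonneg x)
  rw [sub_mulVec, smul_mulVec, dotProduct_sub, dotProduct_smul, Complex.sub_im, smul_eq_mul,
    Complex.mul_im, ← him, mul_zero, zero_add]
  exact sub_pos.2 ((mul_nonpos_of_nonpos_of_nonneg ht hre).trans_lt (hM x hx))

/-- A multivariate-stability condition on functions of matrices that is preserved under averaging
over random rank-one updates: `F` has no zeros on `PosIm` and is affine in the coefficient of
a Hermitian rank-one perturbation. -/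
structure IsRankOneStable (F : Matrix V V ℂ → ℂ) : Prop where
  ne_zero {M : Matrix V V ℂ} : PosIm M → F M ≠ 0
  exists_sub_smul {M : Matrix V V ℂ} (r : V → ℂ) :
    PosIm M → ∃ g, ∀ t : ℂ, F (M - t • vecMulVec r (star r)) = F M - t * g

lemma convex_eq_one_or_im_pos : Convex ℝ {z : ℂ | z = 1 ∨ 0 < z.im} := by
  have hmem {z z' : ℂ} (hz : z = 1) (hz' : 0 < z'.im) {s t : ℝ} (ht : 0 ≤ t) (hst : s + t = 1) :
      s • z + t • z' = 1 ∨ 0 < (s • z + t • z').im := by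
    subst hz
    rcases ht.eq_or_lt with rfl | ht
    · left
      simp_all
    · right
      simpa using mul_pos ht hz'
  rintro z (hz | hz) z' (hz' | hz') s t hs ht hst
  · left
    rw [hz, hz', ← add_smul, hst, one_smul]
  · exact hmem hz hz' ht hst
  · rw [add_comm] at hst ⊢
    exact hmem hz' hz hs hst
  · exact .inr (convex_halfSpace_im_gt 0 hz hz' hs ht hst)

lemma IsRankOneStable.div_eq_one_or_im_pos {F : Matrix V V ℂ → ℂ} (hF : IsRankOneStable F)
    {M : Matrix V V ℂ} (hM : PosIm M) (r : V → ℂ) :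
    F (M - vecMulVec r (star r)) / F M = 1 ∨ 0 < (F (M - vecMulVec r (star r)) / F M).im := by
  obtain ⟨g, hg⟩ := hF.exists_sub_smul r hM
  have hFM := hF.ne_zero hM
  have hne {t : ℂ} (ht : t.im ≤ 0) : F M - t * g ≠ 0 :=
    hg t ▸ hF.ne_zero (hM.sub_smul (posSemidef_vecMulVec_self_star r) ht)
  have hdiv : F (M - vecMulVec r (star r)) / F M = 1 - g / F M := by
    rw [← one_smul ℂ (vecMulVec r _), hg, one_mul, sub_div, div_self hFM]
  rw [hdiv, Complex.sub_im, Complex.one_im, zero_sub, neg_pos]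
  by_contra! h
  have hg₀ : g ≠ 0 := by simpa [hFM] using h.1
  refine hne (t := F M / g) ?_ (by simp [hg₀])
  rw [← inv_div, Complex.inv_im]
  exact div_nonpos_of_nonpos_of_nonneg (neg_nonpos.2 h.2) (Complex.normSq_nonneg _)

lemma IsRankOneStable.sum_smul {κ : Type*} [Fintype κ] {F : Matrix V V ℂ → ℂ}
    (hF : IsRankOneStable F) {w : κ → ℝ} (hw : w ∈ stdSimplex ℝ κ) (r : κ → V → ℂ) :
    IsRankOneStable fun M ↦ ∑ k, w k • F (M - vecMulVec (r k) (star (r k))) where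
  ne_zero {M} hM hzero := by
    have hmem := convex_eq_one_or_im_pos.sum_mem (fun k _ ↦ hw.1 k) hw.2
      fun k _ ↦ hF.div_eq_one_or_im_pos hM (r k)
    simp_rw [← smul_div_assoc] at hmem
    rw [← Finset.sum_div, hzero] at hmem
    simp at hmem
  exists_sub_smul {M} r' hM := by
    have hMk (k) : PosIm (M - vecMulVec (r k) (star (r k))) := by
      simpa using hM.sub_smul (posSemidef_vecMulVec_self_star (r k)) (t := 1) (by simp)
    choose g hg using fun k ↦ hF.exists_sub_smul r' (hMk k)
    refine ⟨∑ k, w k • g k, fun t ↦ ?_⟩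
    simp_rw [sub_right_comm _ (t • _), hg, smul_sub, Finset.sum_sub_distrib, Finset.mul_sum,
      mul_smul_comm]

variable [DecidableEq V]

lemma isRankOneStable_det : IsRankOneStable (det : Matrix V V ℂ → ℂ) where
  ne_zero := PosIm.det_ne_zero
  exists_sub_smul {M} r hM := by
    refine ⟨M.det * (star r ⬝ᵥ M⁻¹ *ᵥ r), fun t ↦ ?_⟩
    calc (M - t • vecMulVec r (star r)).det
        = (M + replicateCol Unit (-t • r) * replicateRow Unit (star r)).det := by
          rw [← vecMulVec_eq, smul_vecMulVec, neg_smul, ← sub_eq_add_neg]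
      _ = M.det * (1 + replicateRow Unit (star r) * M⁻¹ * replicateCol Unit (-t • r)).det :=
          det_add_replicateCol_mul_replicateRow (isUnit_iff_ne_zero.2 hM.det_ne_zero) _ _
      _ = M.det - t * (M.det * (star r ⬝ᵥ M⁻¹ *ᵥ r)) := by
          rw [det_unique (n := Unit), Matrix.add_apply, Matrix.mul_assoc, ← replicateCol_mulVec,
            replicateRow_mul_replicateCol_apply, mulVec_smul, dotProduct_smul, one_apply_eq,
            smul_eq_mul]
          ring

lemma isRankOneStable_productExpectation_det {ι κ : Type*} [Fintype ι] [Fintype κ]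
    {w : ι → κ → ℝ} (hw : ∀ i, w i ∈ stdSimplex ℝ κ) (r : ι → κ → V → ℂ) :
    IsRankOneStable fun M ↦ productExpectation w fun s ↦
      (M - ∑ i, vecMulVec (r i (s i)) (star (r i (s i)))).det := by
  revert w r
  refine Fintype.induction_empty_option (P := fun ι _ ↦ ∀ {w : ι → κ → ℝ},
    (∀ i, w i ∈ stdSimplex ℝ κ) → ∀ r : ι → κ → V → ℂ, IsRankOneStable fun M ↦
      productExpectation w fun s ↦ (M - ∑ i, vecMulVec (r i (s i)) (star (r i (s i)))).det)
    ?_ ?_ ?_ ι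
  · intro α β _ e ih w hw r
    let := Fintype.ofEquiv _ e.symm
    simpa only [← productExpectation_comp_equiv e, Function.comp_apply, ← e.sum_comp,
      e.symm_apply_apply] using ih (fun i ↦ hw (e i)) fun i ↦ r (e i)
  · intro w _ r
    simpa [productExpectation] using isRankOneStable_det
  · intro ι _ ih w hw r
    simpa [productExpectation_option, Fintype.sum_option, Equiv.piOptionEquivProd, sub_sub] using
      (ih (fun i ↦ hw (some i)) fun i ↦ r (some i)).sum_smul (hw none) (r none)

lemma posIm_scalar_sub {B : Matrix V V ℂ} (hB : B.IsHermitian) {z : ℂ} (hz : 0 < z.im) :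
    PosIm (scalar V z - B) := by
  intro x hx
  have hBx : (star x ⬝ᵥ B *ᵥ x).im = 0 := hB.im_star_dotProduct_mulVec_self x
  obtain ⟨hre, him⟩ := Complex.pos_iff.1 (dotProduct_star_self_pos_iff.2 hx)
  rw [sub_mulVec, dotProduct_sub, Complex.sub_im, hBx, sub_zero, scalar_apply,
    ← smul_one_eq_diagonal, smul_mulVec, one_mulVec, dotProduct_smul, smul_eq_mul,
    Complex.mul_im, ← him, mul_zero, zero_add]
  exact mul_pos hz hre

end Stability

section ExpectedCharpoly

open Polynomial

lemma splits_of_aeval_ne_zero {f : ℝ[X]} (hf : ∀ z : ℂ, 0 < z.im → aeval z f ≠ 0) :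
    f.Splits := by
  refine (IsAlgClosed.splits (f.map (algebraMap ℝ ℂ))).of_splits_map _ fun z hz ↦ ?_
  have hz : aeval z f = 0 := by simpa [eval_map_algebraMap] using isRoot_of_mem_roots hz
  refine ⟨z.re, Complex.conj_eq_iff_re.1 (Complex.conj_eq_iff_im.2 (le_antisymm ?_ ?_))⟩
  · exact le_of_not_gt fun him ↦ hf z him hz
  · refine le_of_not_gt fun him ↦ hf (starRingEnd ℂ z) (by simpa using him) ?_
    rw [aeval_conj, hz, map_zero]

variable {V ι κ : Type*} [Fintype V] [DecidableEq V] [Fintype ι] [Fintype κ] {w : ι → κ → ℝ}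

lemma isMonicOfDegree_charpoly {R : Type*} [CommRing R] [Nontrivial R] (A : Matrix V V R) :
    A.charpoly.IsMonicOfDegree (Fintype.card V) :=
  ⟨A.charpoly_natDegree_eq_dim, A.charpoly_monic⟩

theorem productExpectation_charpoly_splits (hw : ∀ i, w i ∈ stdSimplex ℝ κ) {B : Matrix V V ℝ}
    (hB : B.IsSymm) (r : ι → κ → V → ℝ) :
    (productExpectation w fun s ↦
      (B + ∑ i, vecMulVec (r i (s i)) (r i (s i))).charpoly).Splits := by
  refine splits_of_aeval_ne_zero fun z hz ↦ ?_
  have hB' : (B.map Complex.ofReal).IsHermitian := by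
    ext i j
    simp [hB.apply]
  have haeval (s : ι → κ) :
      aeval z (B + ∑ i, vecMulVec (r i (s i)) (r i (s i))).charpoly =
        (scalar V z - B.map Complex.ofReal -
          ∑ i, vecMulVec (Complex.ofReal ∘ r i (s i)) (star (Complex.ofReal ∘ r i (s i)))).det := by
    rw [aeval_def, ← eval_map, ← charpoly_map, eval_charpoly, sub_sub]
    congr 2
    ext i j
    simp [vecMulVec_apply, Matrix.sum_apply]
  refine ((map_productExpectation (aeval z).toLinearMap w _).trans ?_).trans_ne
    ((isRankOneStable_productExpectation_det hw fun i k ↦ Complex.ofReal ∘ r i k).ne_zero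
      (posIm_scalar_sub hB' hz))
  exact congrArg _ (funext haeval)

theorem exists_forall_gt_charpoly_eval_pos (hw : ∀ i, w i ∈ stdSimplex ℝ κ) {B : Matrix V V ℝ}
    (hB : B.IsSymm) (r : ι → κ → V → ℝ) {b : ℝ}
    (hpos : ∀ z > b, 0 < productExpectation w fun s ↦
      (scalar V z - (B + ∑ i, vecMulVec (r i (s i)) (r i (s i)))).det) :
    ∃ s : ι → κ, ∀ z > b, 0 < (B + ∑ i, vecMulVec (r i (s i)) (r i (s i))).charpoly.eval z := by
  refine exists_forall_gt_eval_pos_of_productExpectation_splits (p := fun s : ι → κ ↦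
    (B + ∑ i, vecMulVec (r i (s i)) (r i (s i))).charpoly) (fun s ↦ isMonicOfDegree_charpoly _)
    (fun w hw ↦ productExpectation_charpoly_splits hw hB r) hw fun z hz ↦ ?_
  rw [← leval_apply, map_productExpectation]
  simpa only [leval_apply, eval_charpoly] using hpos z hz

end ExpectedCharpoly

section RowOperations

variable {V R : Type*} [Fintype V] [DecidableEq V] [CommRing R]

lemma det_updateRow_updateRow_comm (M : Matrix V V R) {u v : V} (huv : u ≠ v) (a b : V → R) :
    ((M.updateRow u a).updateRow v b).det = -((M.updateRow u b).updateRow v a).det := by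
  have hswap : (M.updateRow u a).updateRow v b =
      ((M.updateRow u b).updateRow v a).submatrix (Equiv.swap u v) id := by
    ext i j
    rcases eq_or_ne i v with rfl | hiv
    · simp [huv]
    · rcases eq_or_ne i u with rfl | hiu
      · simp [huv]
      · simp [Equiv.swap_apply_of_ne_of_ne hiu hiv, hiu, hiv]
  rw [hswap, det_permute, Equiv.Perm.sign_swap huv]
  simp

lemma det_add_smul_single_add_single (M : Matrix V V R) {u v : V} (huv : u ≠ v) (t : R) :
    (M + t • (Matrix.single u v 1 + Matrix.single v u 1)).det =
      M.det + t * ((M.updateRow u (Pi.single v 1)).det + (M.updateRow v (Pi.single u 1)).det) -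
        t ^ 2 * ((M.updateRow u (Pi.single u 1)).updateRow v (Pi.single v 1)).det := by
  have hrows : M + t • (Matrix.single u v 1 + Matrix.single v u 1) =
      (M.updateRow u (M u + t • Pi.single v 1)).updateRow v (M v + t • Pi.single u 1) := by
    ext i j
    rcases eq_or_ne i v with rfl | hiv
    · simp [Matrix.single_apply, Pi.single_apply, huv, eq_comm]
    · rcases eq_or_ne i u with rfl | hiu
      · simp [Matrix.single_apply, Pi.single_apply, huv, huv.symm, eq_comm]
      · simp [hiu, hiv, hiu.symm, hiv.symm]
  have hv : ((M.updateRow u (M u + t • Pi.single v 1)).updateRow v (M v)).det =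
      M.det + t * (M.updateRow u (Pi.single v 1)).det := by
    rw [updateRow_comm _ huv, updateRow_eq_self, det_updateRow_add, det_updateRow_smul,
      updateRow_eq_self]
  have hu : ((M.updateRow u (M u + t • Pi.single v 1)).updateRow v (Pi.single u 1)).det =
      (M.updateRow v (Pi.single u 1)).det -
        t * ((M.updateRow u (Pi.single u 1)).updateRow v (Pi.single v 1)).det := by
    rw [det_updateRow_updateRow_comm M huv (Pi.single u 1), updateRow_comm _ huv,
      det_updateRow_add, det_updateRow_smul, ← updateRow_comm _ huv, ← updateRow_comm _ huv,
      updateRow_eq_self]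
    ring
  rw [hrows, det_updateRow_add, det_updateRow_smul, hv, hu]
  ring

lemma det_updateCol_of_row_eq_single {M : Matrix V V R} {i : V} {c : R}
    (hi : M i = Pi.single i c) : (M.updateCol i (Pi.single i c)).det = M.det := by
  calc (M.updateCol i (Pi.single i c)).det
      = c * (M.updateCol i (Pi.single i 1)).det := by
        rw [← det_updateCol_smul, ← Pi.single_smul, smul_eq_mul, mul_one]
    _ = c * M.adjugate i i := by
        rw [← det_transpose, ← updateRow_transpose, ← adjugate_apply, ← adjugate_transpose,
          transpose_apply]
    _ = M.det := by simp [det_eq_sum_mul_adjugate_row M i, hi, Pi.single_apply]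

lemma mul_det_updateRow_single (M : Matrix V V R) (i : V) (c : R) :
    c * (M.updateRow i (Pi.single i 1)).det =
      ((M.updateRow i (Pi.single i c)).updateCol i (Pi.single i c)).det := by
  rw [det_updateCol_of_row_eq_single (by ext; simp), ← det_updateRow_smul, ← Pi.single_smul,
    smul_eq_mul, mul_one]

end RowOperations

section SignedAdjacency

variable {V : Type*}

lemma deleteIncidenceSet_eq_self_of_degree_eq_zero {G : SimpleGraph V} {v : V}
    [Fintype (G.neighborSet v)] (hv : G.degree v = 0) : G.deleteIncidenceSet v = G := by
  have hadj (u : V) : ¬G.Adj v u := (G.degree_eq_zero v).1 hv u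
  ext i j
  rw [SimpleGraph.deleteIncidenceSet_adj, and_iff_left_iff_imp]
  refine fun hij ↦ ⟨?_, ?_⟩
  · rintro rfl
    exact hadj _ hij
  · rintro rfl
    exact hadj _ hij.symm

lemma degree_le_degree_of_le {G H : SimpleGraph V} (hle : G ≤ H) (v : V)
    [Fintype (G.neighborSet v)] [Fintype (H.neighborSet v)] : G.degree v ≤ H.degree v := by
  refine Finset.card_le_card fun w hw ↦ (H.mem_neighborFinset v w).2 ?_
  exact hle ((G.mem_neighborFinset v w).1 hw)

lemma degree_deleteIncidenceSet_lt {G : SimpleGraph V} {u v : V} (huv : G.Adj v u)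
    [Fintype (G.neighborSet u)] [Fintype ((G.deleteIncidenceSet v).neighborSet u)] :
    (G.deleteIncidenceSet v).degree u < G.degree u := by
  refine Finset.card_lt_card (Finset.ssubset_iff_of_subset ?_ |>.2 ⟨v, ?_, ?_⟩)
  · exact fun w hw ↦ (G.mem_neighborFinset u w).2
      (G.deleteIncidenceSet_le v ((SimpleGraph.mem_neighborFinset _ u w).1 hw))
  · simpa using huv.symm
  · simp [SimpleGraph.deleteIncidenceSet_adj]

/-- The adjacency matrix of `G` with the entries of an edge `e` multiplied by the sign `s e`. -/
noncomputable def signedAdj (G : SimpleGraph V) (s : Sym2 V → ℤˣ) : Matrix V V ℝ :=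
  .of fun i j ↦ if G.Adj i j then ((s s(i, j) : ℤ) : ℝ) else 0

lemma signedAdj_apply (G : SimpleGraph V) (s : Sym2 V → ℤˣ) (i j : V) :
    signedAdj G s i j = if G.Adj i j then ((s s(i, j) : ℤ) : ℝ) else 0 := rfl

lemma signedAdj_eq_deleteEdges_add {G : SimpleGraph V} {u v : V} (huv : G.Adj u v)
    (s : Sym2 V → ℤˣ) :
    signedAdj G s = signedAdj (G.deleteEdges {s(u, v)}) s +
      ((s s(u, v) : ℤ) : ℝ) • (Matrix.single u v 1 + Matrix.single v u 1) := by
  ext i j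
  by_cases hij : s(u, v) = s(i, j)
  · rcases Sym2.eq_iff.1 hij with ⟨rfl, rfl⟩ | ⟨rfl, rfl⟩
    · simp [signedAdj_apply, huv, huv.ne, huv.ne']
    · simp [signedAdj_apply, huv.symm, huv.ne, huv.ne', Sym2.eq_swap]
  · obtain ⟨huv, hvu⟩ := not_or.1 (mt Sym2.eq_iff.2 hij)
    simp [signedAdj_apply, Ne.symm hij, single_apply_of_ne _ _ _ _ _ huv,
      single_apply_of_ne _ _ _ _ _ (mt And.symm hvu)]

lemma signedAdj_mul_mulSingle {G : SimpleGraph V} {u v : V} (huv : G.Adj u v)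
    (s : Sym2 V → ℤˣ) :
    signedAdj G (s * Pi.mulSingle s(u, v) (-1)) = signedAdj (G.deleteEdges {s(u, v)}) s -
      ((s s(u, v) : ℤ) : ℝ) • (Matrix.single u v 1 + Matrix.single v u 1) := by
  rw [signedAdj_eq_deleteEdges_add huv, sub_eq_add_neg, ← neg_smul]
  congr 1
  · ext i j
    by_cases hij : s(i, j) = s(u, v) <;> simp [signedAdj_apply, hij]
  · simp

variable [Fintype V]

/-- The matching polynomial of `G` at `x`, up to a positive factor that depends only on the number
of vertices: the sum over all signings of the characteristic polynomials of the signed adjacency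
matrices (Godsil–Gutman). -/
noncomputable def signedDetSum (G : SimpleGraph V) (x : ℝ) : ℝ :=
  ∑ s : Sym2 V → ℤˣ, (scalar V x - signedAdj G s).det

lemma updateCol_updateRow_scalar_sub_signedAdj (G : SimpleGraph V) (s : Sym2 V → ℤˣ) (x : ℝ)
    (v : V) :
    ((scalar V x - signedAdj G s).updateRow v (Pi.single v x)).updateCol v (Pi.single v x) =
      scalar V x - signedAdj (G.deleteIncidenceSet v) s := by
  ext i j
  rcases eq_or_ne j v with rfl | hj
  · simp [signedAdj_apply, SimpleGraph.deleteIncidenceSet_adj, Pi.single_apply, diagonal_apply]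
  · rcases eq_or_ne i v with rfl | hi
    · simp [signedAdj_apply, SimpleGraph.deleteIncidenceSet_adj, hj, hj.symm]
    · simp [signedAdj_apply, SimpleGraph.deleteIncidenceSet_adj, hi, hj]

lemma sq_mul_det_updateRow_updateRow (G : SimpleGraph V) (s : Sym2 V → ℤˣ) (x : ℝ) {u v : V}
    (huv : u ≠ v) :
    x ^ 2 * (((scalar V x - signedAdj G s).updateRow u (Pi.single u 1)).updateRow v
      (Pi.single v 1)).det =
      (scalar V x - signedAdj ((G.deleteIncidenceSet u).deleteIncidenceSet v) s).det := by
  set M := scalar V x - signedAdj G s with hM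
  have hcomm : ((M.updateRow v (Pi.single v 1)).updateRow u (Pi.single u x)).updateCol u
      (Pi.single u x) = ((M.updateRow u (Pi.single u x)).updateCol u (Pi.single u x)).updateRow v
        (Pi.single v 1) := by
    ext i j
    rcases eq_or_ne i v with rfl | hiv
    · rcases eq_or_ne j u with rfl | hju <;> simp [huv.symm, *]
    · rcases eq_or_ne j u with rfl | hju <;> simp [updateRow_apply, *]
  rw [updateRow_comm _ huv, sq, mul_assoc, mul_det_updateRow_single, hcomm,
    updateCol_updateRow_scalar_sub_signedAdj, mul_det_updateRow_single,
    updateCol_updateRow_scalar_sub_signedAdj]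

-- In the sum over two signings that differ exactly at `s(u, v)`, the terms linear in the sign of
-- that edge cancel.
lemma sq_mul_signedDetSum_of_adj {G : SimpleGraph V} {u v : V} (huv : G.Adj u v) (x : ℝ) :
    x ^ 2 * signedDetSum G x = x ^ 2 * signedDetSum (G.deleteEdges {s(u, v)}) x -
      signedDetSum ((G.deleteIncidenceSet u).deleteIncidenceSet v) x := by
  have hflip : 2 * signedDetSum G x = ∑ s : Sym2 V → ℤˣ, ((scalar V x - signedAdj G s).det +
      (scalar V x - signedAdj G (s * Pi.mulSingle s(u, v) (-1))).det) := by
    rw [Finset.sum_add_distrib, two_mul]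
    exact congrArg _ (Equiv.sum_comp (Equiv.mulRight (Pi.mulSingle s(u, v) (-1)))
      fun s ↦ (scalar V x - signedAdj G s).det).symm
  have hpair (s : Sym2 V → ℤˣ) : x ^ 2 * ((scalar V x - signedAdj G s).det +
      (scalar V x - signedAdj G (s * Pi.mulSingle s(u, v) (-1))).det) =
      2 * (x ^ 2 * (scalar V x - signedAdj (G.deleteEdges {s(u, v)}) s).det -
        (scalar V x - signedAdj ((G.deleteIncidenceSet u).deleteIncidenceSet v) s).det) := by
    set S : Matrix V V ℝ := Matrix.single u v 1 + Matrix.single v u 1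
    set σ : ℝ := ((s s(u, v) : ℤ) : ℝ)
    have hσ : σ ^ 2 = 1 := by
      rw [← Int.cast_pow, ← Units.val_pow_eq_pow_val, Int.units_sq, Units.val_one, Int.cast_one]
    have hdelete : ((G.deleteEdges {s(u, v)}).deleteIncidenceSet u).deleteIncidenceSet v =
        (G.deleteIncidenceSet u).deleteIncidenceSet v := by
      ext i j
      have hne (hi : i ≠ u) (hj : j ≠ u) : s(i, j) ≠ s(u, v) := by simp [hi, hj]
      simp only [SimpleGraph.deleteIncidenceSet_adj, SimpleGraph.deleteEdges_adj,
        Set.mem_singleton_iff]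
      tauto
    rw [signedAdj_eq_deleteEdges_add huv, signedAdj_mul_mulSingle huv, ← sub_sub, ← sub_add,
      sub_eq_add_neg _ (σ • S), ← neg_smul, det_add_smul_single_add_single _ huv.ne,
      det_add_smul_single_add_single _ huv.ne, neg_sq, hσ, ← hdelete,
      ← sq_mul_det_updateRow_updateRow _ _ _ huv.ne]
    ring
  refine mul_left_cancel₀ two_ne_zero ?_
  rw [mul_left_comm, hflip, Finset.mul_sum, Finset.sum_congr rfl fun s _ ↦ hpair s,
    ← Finset.mul_sum, Finset.sum_sub_distrib, ← Finset.mul_sum]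
  rfl

lemma sq_mul_signedDetSum_eq_sub_sum (G : SimpleGraph V) (v : V) (x : ℝ) :
    x ^ 2 * signedDetSum G x = x ^ 2 * signedDetSum (G.deleteIncidenceSet v) x -
      ∑ u ∈ G.neighborFinset v, signedDetSum ((G.deleteIncidenceSet v).deleteIncidenceSet u) x := by
  induction hn : G.degree v generalizing G with
  | zero =>
    simp [Finset.card_eq_zero.1 hn, deleteIncidenceSet_eq_self_of_degree_eq_zero hn]
  | succ n ih =>
    obtain ⟨u, hu⟩ : (G.neighborFinset v).Nonempty :=
      Finset.card_pos.1 (hn ▸ Nat.succ_pos n : 0 < G.degree v)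
    have huv : G.Adj v u := (G.mem_neighborFinset v u).1 hu
    obtain ⟨H, hH⟩ : ∃ H, H = G.deleteEdges {s(v, u)} := ⟨_, rfl⟩
    have hdelete : H.deleteIncidenceSet v = G.deleteIncidenceSet v := by
      ext i j
      have hne (hi : i ≠ v) (hj : j ≠ v) : s(i, j) ≠ s(v, u) := by simp [hi, hj]
      simp only [hH, SimpleGraph.deleteIncidenceSet_adj, SimpleGraph.deleteEdges_adj,
        Set.mem_singleton_iff]
      tauto
    have hneighbor : H.neighborFinset v = (G.neighborFinset v).erase u := by
      ext w
      simp [hH, and_comm, huv.ne]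
    have hdegree : H.degree v = n := by
      rw [← SimpleGraph.card_neighborFinset_eq_degree, hneighbor, Finset.card_erase_of_mem hu,
        SimpleGraph.card_neighborFinset_eq_degree, hn, Nat.add_sub_cancel]
    rw [sq_mul_signedDetSum_of_adj huv, ← hH, ih H hdegree, hdelete, hneighbor,
      ← Finset.add_sum_erase _ _ hu]
    ring

lemma signedDetSum_bot_pos {x : ℝ} (hx : 0 < x) : 0 < signedDetSum (⊥ : SimpleGraph V) x := by
  have hzero (s : Sym2 V → ℤˣ) : signedAdj (⊥ : SimpleGraph V) s = 0 := by
    ext i j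
    simp [signedAdj_apply]
  simp only [signedDetSum, hzero, sub_zero, scalar_apply, det_diagonal]
  exact Finset.sum_pos (fun _ _ ↦ Finset.prod_pos fun _ _ ↦ hx) Finset.univ_nonempty

lemma mul_signedDetSum_deleteIncidenceSet_le {G : SimpleGraph V} {v : V} {r x : ℝ} (hx : 0 < x)
    (hr : ∀ u, G.Adj v u → r * signedDetSum ((G.deleteIncidenceSet v).deleteIncidenceSet u) x ≤
      x * signedDetSum (G.deleteIncidenceSet v) x) :
    (r * x - G.degree v) * signedDetSum (G.deleteIncidenceSet v) x ≤
      r * x * signedDetSum G x := by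
  have hsum : r * ∑ u ∈ G.neighborFinset v,
      signedDetSum ((G.deleteIncidenceSet v).deleteIncidenceSet u) x ≤
      G.degree v * (x * signedDetSum (G.deleteIncidenceSet v) x) := by
    rw [Finset.mul_sum, ← SimpleGraph.card_neighborFinset_eq_degree, ← nsmul_eq_mul]
    exact Finset.sum_le_card_nsmul _ _ _ fun u hu ↦ hr u ((G.mem_neighborFinset v u).1 hu)
  have hrec := sq_mul_signedDetSum_eq_sub_sum G v x
  refine le_of_mul_le_mul_left ?_ hx
  linear_combination hsum - r * hrec

lemma mul_le_mul_of_sub_mul_le {r x d p p' : ℝ} (hr : 0 < r) (hx : 2 * r < x) (hd : d ≤ r ^ 2)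
    (hp : 0 ≤ p) (hle : (r * x - d) * p ≤ r * x * p') : r * p ≤ x * p' := by
  refine le_of_mul_le_mul_left ?_ hr
  calc r * (r * p) = r ^ 2 * p := by ring
    _ ≤ (r * x - d) * p := mul_le_mul_of_nonneg_right (by nlinarith) hp
    _ ≤ r * (x * p') := by rwa [← mul_assoc]

-- A neighbor of a deleted vertex loses an edge, so the induction hypothesis provides the ratio
-- bound, which needs the degree to be at most `r ^ 2`, at each such neighbor.
theorem signedDetSum_pos_and_mul_le (G : SimpleGraph V) {r x : ℝ} (hr : 1 ≤ r) (hx : 2 * r < x)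
    (hG : ∀ v, (G.degree v : ℝ) ≤ r ^ 2 + 1) :
    0 < signedDetSum G x ∧ ∀ v, (G.degree v : ℝ) ≤ r ^ 2 →
      r * signedDetSum (G.deleteIncidenceSet v) x ≤ x * signedDetSum G x := by
  induction G using WellFoundedLT.induction with
  | ind G ih =>
    have hx₀ : 0 < x := by linarith
    have hdelete {v u} (huv : G.Adj v u) : 0 < signedDetSum (G.deleteIncidenceSet v) x ∧
        (r * x - G.degree v) * signedDetSum (G.deleteIncidenceSet v) x ≤
          r * x * signedDetSum G x := by
      have hlt : G.deleteIncidenceSet v < G := (G.deleteIncidenceSet_le v).lt_of_not_ge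
        fun hle ↦ (SimpleGraph.deleteIncidenceSet_adj.1 (hle huv)).2.1 rfl
      obtain ⟨hpos, hmul⟩ := ih _ hlt fun w ↦ by
        refine (Nat.cast_le.2 ?_).trans (hG w)
        convert degree_le_degree_of_le hlt.le w
      refine ⟨hpos, mul_signedDetSum_deleteIncidenceSet_le hx₀ fun w hw ↦ hmul w ?_⟩
      rw [← add_le_add_iff_right 1]
      refine le_trans ?_ (hG w)
      rw [← Nat.cast_succ, Nat.cast_le, Nat.succ_le_iff]
      convert degree_deleteIncidenceSet_lt hw
    have hpos : 0 < signedDetSum G x := by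
      by_cases! hadj : ∃ v u, G.Adj v u
      · obtain ⟨v, u, huv⟩ := hadj
        obtain ⟨hpos, hle⟩ := hdelete huv
        refine pos_of_mul_pos_right ((mul_pos ?_ hpos).trans_le hle) (by positivity)
        nlinarith [hG v]
      · rw [SimpleGraph.eq_bot_iff_forall_not_adj.2 hadj]
        exact signedDetSum_bot_pos hx₀
    refine ⟨hpos, fun v hv ↦ ?_⟩
    rcases Nat.eq_zero_or_pos (G.degree v) with hv₀ | hv₀
    · rw [deleteIncidenceSet_eq_self_of_degree_eq_zero hv₀]
      exact mul_le_mul_of_nonneg_right (by linarith) hpos.le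
    · obtain ⟨u, huv⟩ := (G.degree_pos_iff_exists_adj v).1 hv₀
      obtain ⟨hpos, hle⟩ := hdelete huv
      exact mul_le_mul_of_sub_mul_le (zero_lt_one.trans_le hr) hx hv hpos.le hle

end SignedAdjacency

section Signing

variable {V : Type*}

lemma exists_mul_eq_incMatrix_add_signedAdj_single (G : SimpleGraph V) (e : Sym2 V) (σ : ℤˣ) :
    ∃ r : V → ℝ, ∀ i j, r i * r j = (if i = j then G.incMatrix ℝ i e else 0) +
      if G.Adj i j ∧ s(i, j) = e then ((σ : ℤ) : ℝ) else 0 := by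
  by_cases he : e ∈ G.edgeSet
  · induction e using Sym2.ind with
    | _ u v =>
      have huv : G.Adj u v := he
      refine ⟨Pi.single u 1 + Pi.single v ((σ : ℤ) : ℝ), fun i j ↦ ?_⟩
      have hσ : ((σ : ℤ) : ℝ) * ((σ : ℤ) : ℝ) = 1 := by
        rw [← Int.cast_mul, Int.units_coe_mul_self, Int.cast_one]
      have hadj : G.Adj i j ∧ s(i, j) = s(u, v) ↔ i = u ∧ j = v ∨ i = v ∧ j = u := by
        rw [Sym2.eq_iff, and_iff_right_iff_imp]
        rintro (⟨rfl, rfl⟩ | ⟨rfl, rfl⟩)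
        exacts [huv, huv.symm]
      simp only [G.incMatrix_apply', G.mk'_mem_incidenceSet_iff, hadj,
        Pi.add_apply, Pi.single_apply]
      grind [huv.ne]
  · refine ⟨0, fun i j ↦ ?_⟩
    have hij : ¬(G.Adj i j ∧ s(i, j) = e) := by
      rintro ⟨hij, rfl⟩
      exact he hij
    rw [if_neg hij, G.incMatrix_of_notMem_incidenceSet fun h ↦ he h.1]
    simp

variable [Fintype V]

lemma exists_sum_vecMulVec_eq_degMatrix_add_signedAdj (G : SimpleGraph V) :
    ∃ r : Sym2 V → ℤˣ → V → ℝ, ∀ s : Sym2 V → ℤˣ,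
      ∑ e, vecMulVec (r e (s e)) (r e (s e)) = G.degMatrix ℝ + signedAdj G s := by
  choose r hr using exists_mul_eq_incMatrix_add_signedAdj_single G
  refine ⟨r, fun s ↦ ?_⟩
  ext i j
  simp only [Matrix.sum_apply, vecMulVec_apply, hr, Finset.sum_add_distrib, Matrix.add_apply,
    SimpleGraph.degMatrix, diagonal_apply, signedAdj_apply]
  congr 1
  · split_ifs <;> simp [SimpleGraph.sum_incMatrix_apply]
  · by_cases hij : G.Adj i j <;> simp [hij]

lemma productExpectation_const_det_signedAdj (G : SimpleGraph V) (a x : ℝ) :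
    productExpectation (fun _ _ ↦ a) (fun s : Sym2 V → ℤˣ ↦ (scalar V x - signedAdj G s).det) =
      a ^ Fintype.card (Sym2 V) * signedDetSum G x := by
  simp only [productExpectation, Finset.prod_const, Finset.card_univ, smul_eq_mul, signedDetSum,
    Finset.mul_sum]
  congr!

theorem exists_forall_gt_charpoly_signedAdj_eval_pos (G : SimpleGraph V) {r : ℝ} (hr : 1 ≤ r)
    (hG : ∀ v, (G.degree v : ℝ) ≤ r ^ 2 + 1) :
    ∃ s : Sym2 V → ℤˣ, ∀ z > 2 * r, 0 < (signedAdj G s).charpoly.eval z := by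
  obtain ⟨a, ha⟩ := exists_sum_vecMulVec_eq_degMatrix_add_signedAdj G
  have huniform : (fun _ ↦ 1 / 2 : ℤˣ → ℝ) ∈ stdSimplex ℝ ℤˣ :=
    ⟨fun _ ↦ by norm_num, by norm_num⟩
  have hsum (s : Sym2 V → ℤˣ) :
      -G.degMatrix ℝ + ∑ e, vecMulVec (a e (s e)) (a e (s e)) = signedAdj G s := by
    rw [ha, neg_add_cancel_left]
  have hpos (z : ℝ) (hz : z > 2 * r) : 0 < productExpectation (fun _ _ ↦ 1 / 2)
      fun s : Sym2 V → ℤˣ ↦ (scalar V z -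
        (-G.degMatrix ℝ + ∑ e, vecMulVec (a e (s e)) (a e (s e)))).det := by
    simp only [hsum, productExpectation_const_det_signedAdj]
    exact mul_pos (by positivity) (signedDetSum_pos_and_mul_le G hr hz hG).1
  simpa only [hsum] using exists_forall_gt_charpoly_eval_pos (fun _ ↦ huniform)
    (G.isSymm_degMatrix (R := ℝ)).neg a hpos

end Signing

section AdjacencySpectrum

variable {V W : Type*} [Fintype V] [Fintype W]

lemma le_of_mulVec_eq_smul_of_charpoly_eval_pos [DecidableEq V] {A : Matrix V V ℝ} {b μ : ℝ}
    (hA : ∀ z > b, 0 < A.charpoly.eval z) {x : V → ℝ} (hx : x ≠ 0) (hμ : A *ᵥ x = μ • x) :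
    μ ≤ b := by
  refine le_of_not_gt fun hb ↦ (hA μ hb).ne' ?_
  rw [eval_charpoly, ← exists_mulVec_eq_zero_iff]
  exact ⟨x, hx, by rw [sub_mulVec, hμ, scalar_apply, ← smul_one_eq_diagonal, smul_mulVec,
    one_mulVec, sub_self]⟩

variable {G : SimpleGraph V} {H : SimpleGraph W}

lemma isRegularOfDegree_iff_mulVec_one {d : ℕ} :
    G.IsRegularOfDegree d ↔ G.adjMatrix ℝ *ᵥ 1 = (d : ℝ) • 1 := by
  simp [SimpleGraph.IsRegularOfDegree, funext_iff, SimpleGraph.adjMatrix_mulVec_apply]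

lemma adjMatrix_mulVec_eq_degree_smul_iff {d : ℕ} (hG : G.IsRegularOfDegree d) {x : V → ℝ} :
    G.adjMatrix ℝ *ᵥ x = (d : ℝ) • x ↔ ∀ i j, G.Reachable i j → x i = x j := by
  rw [← G.lapMatrix_mulVec_eq_zero_iff_forall_reachable, SimpleGraph.lapMatrix, sub_mulVec,
    sub_eq_zero, eq_comm]
  have hdeg : G.degMatrix ℝ *ᵥ x = (d : ℝ) • x := by
    ext v
    simp [SimpleGraph.degMatrix_mulVec_apply, hG.degree_eq]
  rw [hdeg]

lemma preconnected_iff_forall_mulVec_eq_degree_smul {d : ℕ} (hG : G.IsRegularOfDegree d) :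
    G.Preconnected ↔ ∀ x : V → ℝ, G.adjMatrix ℝ *ᵥ x = (d : ℝ) • x → ∀ i j, x i = x j := by
  refine ⟨fun hconn x hx i j ↦ (adjMatrix_mulVec_eq_degree_smul_iff hG).1 hx i j (hconn i j),
    fun h i j ↦ ?_⟩
  have hij := h (fun v ↦ if G.Reachable i v then 1 else 0)
    ((adjMatrix_mulVec_eq_degree_smul_iff hG).2 fun u v huv ↦ by
      simp [show G.Reachable i u ↔ G.Reachable i v from
        ⟨fun h ↦ h.trans huv, fun h ↦ h.trans huv.symm⟩]) i j
  by_contra hreach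
  simp [hreach] at hij

lemma adjMatrix_mulVec_comp (e : G ≃g H) (x : W → ℝ) :
    G.adjMatrix ℝ *ᵥ (x ∘ e) = (H.adjMatrix ℝ *ᵥ x) ∘ e := by
  rw [← e.toEmbedding.submatrix_adjMatrix ℝ]
  ext v
  exact e.toEquiv.sum_comp fun w ↦ H.adjMatrix ℝ (e v) w * x w

lemma mulVec_mul_eq_neg {c : V → ℝ} {A : Matrix V V ℝ} (hc : ∀ i j, A i j ≠ 0 → c i = -c j)
    (x : V → ℝ) : A *ᵥ (c * x) = -(c * (A *ᵥ x)) := by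
  ext i
  simp only [mulVec, dotProduct, Pi.mul_apply, Pi.neg_apply, Finset.mul_sum,
    ← Finset.sum_neg_distrib]
  refine Finset.sum_congr rfl fun j _ ↦ ?_
  rcases eq_or_ne (A i j) 0 with hij | hij
  · simp [hij]
  · rw [hc i j hij]
    ring

end AdjacencySpectrum

section SignedCover

variable {V : Type*}

/-- The double cover of `G` in which an edge of sign `1` lifts to two edges within the sheets
`V × {1}` and `V × {-1}`, and an edge of sign `-1` lifts to two edges between the sheets. -/
def signedCover (G : SimpleGraph V) (s : Sym2 V → ℤˣ) : SimpleGraph (V × ℤˣ) where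
  Adj a b := G.Adj a.1 b.1 ∧ b.2 = s s(a.1, b.1) * a.2
  symm := ⟨fun a b ⟨hadj, hsign⟩ ↦
    ⟨hadj.symm, by rw [hsign, Sym2.eq_swap, ← mul_assoc, Int.units_mul_self, one_mul]⟩⟩
  loopless := ⟨fun a h ↦ G.loopless.irrefl a.1 h.1⟩

lemma signedCover_adj {G : SimpleGraph V} {s : Sym2 V → ℤˣ} {a b : V × ℤˣ} :
    (signedCover G s).Adj a b ↔ G.Adj a.1 b.1 ∧ b.2 = s s(a.1, b.1) * a.2 :=
  Iff.rfl

/-- The push-forward of a function on the double cover `V × ℤˣ` to `V`. -/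
def sheetSum (x : V × ℤˣ → ℝ) (v : V) : ℝ :=
  ∑ a, x (v, a)

/-- The push-forward of a function on the double cover `V × ℤˣ` to `V`, weighted by the sign of
the sheet. -/
def signedSheetSum (x : V × ℤˣ → ℝ) (v : V) : ℝ :=
  ∑ a : ℤˣ, ((a : ℤ) : ℝ) * x (v, a)

lemma sheetSum_smul (μ : ℝ) (x : V × ℤˣ → ℝ) : sheetSum (μ • x) = μ • sheetSum x :=
  funext fun v ↦ (Finset.mul_sum _ (fun a ↦ x (v, a)) μ).symm

lemma signedSheetSum_smul (μ : ℝ) (x : V × ℤˣ → ℝ) :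
    signedSheetSum (μ • x) = μ • signedSheetSum x := by
  ext v
  simp only [signedSheetSum, Pi.smul_apply, smul_eq_mul, Finset.mul_sum, mul_left_comm]

lemma two_mul_eq_sheetSum_add_mul_signedSheetSum (x : V × ℤˣ → ℝ) (v : V) (a : ℤˣ) :
    2 * x (v, a) = sheetSum x v + ((a : ℤ) : ℝ) * signedSheetSum x v := by
  rcases Int.units_eq_one_or a with rfl | rfl <;> simp [sheetSum, signedSheetSum] <;> ring

variable [Fintype V]

lemma adjMatrix_signedCover_mulVec_apply (G : SimpleGraph V) (s : Sym2 V → ℤˣ) (x : V × ℤˣ → ℝ)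
    (v : V) (a : ℤˣ) : ((signedCover G s).adjMatrix ℝ *ᵥ x) (v, a) =
      ∑ u, if G.Adj v u then x (u, s s(v, u) * a) else 0 := by
  simp only [mulVec, dotProduct, Fintype.sum_prod_type, SimpleGraph.adjMatrix_apply,
    signedCover_adj, ite_and, ite_mul, one_mul, zero_mul]
  refine Finset.sum_congr rfl fun u _ ↦ ?_
  split_ifs
  · rw [Finset.sum_ite_eq', if_pos (Finset.mem_univ _)]
  · exact Finset.sum_const_zero

lemma adjMatrix_mulVec_sheetSum (G : SimpleGraph V) (s : Sym2 V → ℤˣ) (x : V × ℤˣ → ℝ) :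
    G.adjMatrix ℝ *ᵥ sheetSum x = sheetSum ((signedCover G s).adjMatrix ℝ *ᵥ x) := by
  ext v
  simp only [sheetSum, adjMatrix_signedCover_mulVec_apply]
  rw [Finset.sum_comm, SimpleGraph.adjMatrix_mulVec_apply, SimpleGraph.neighborFinset_eq_filter,
    Finset.sum_filter]
  refine Finset.sum_congr rfl fun u _ ↦ ?_
  split_ifs
  · exact (Equiv.sum_comp (Equiv.mulLeft (s s(v, u))) fun a ↦ x (u, a)).symm
  · exact Finset.sum_const_zero.symm

lemma signedAdj_mulVec_signedSheetSum (G : SimpleGraph V) (s : Sym2 V → ℤˣ)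
    (x : V × ℤˣ → ℝ) :
    signedAdj G s *ᵥ signedSheetSum x =
      signedSheetSum ((signedCover G s).adjMatrix ℝ *ᵥ x) := by
  ext v
  simp only [signedSheetSum, adjMatrix_signedCover_mulVec_apply, Finset.mul_sum]
  rw [Finset.sum_comm]
  refine Finset.sum_congr rfl fun u _ ↦ ?_
  simp only [signedAdj_apply, signedSheetSum]
  split_ifs
  · rw [← Equiv.sum_comp (Equiv.mulLeft (s s(v, u))), Finset.mul_sum]
    refine Finset.sum_congr rfl fun a _ ↦ ?_
    rw [Equiv.coe_mulLeft, Units.val_mul, Int.cast_mul, ← mul_assoc, ← mul_assoc, ← Int.cast_mul,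
      Int.units_coe_mul_self, Int.cast_one, one_mul]
  · simp only [zero_mul, mul_zero, Finset.sum_const_zero]

variable {G : SimpleGraph V} {s : Sym2 V → ℤˣ} {μ : ℝ} {x : V × ℤˣ → ℝ}

lemma adjMatrix_mulVec_sheetSum_eq_smul (hx : (signedCover G s).adjMatrix ℝ *ᵥ x = μ • x) :
    G.adjMatrix ℝ *ᵥ sheetSum x = μ • sheetSum x := by
  rw [adjMatrix_mulVec_sheetSum G s, hx, sheetSum_smul]

lemma signedAdj_mulVec_signedSheetSum_eq_smul
    (hx : (signedCover G s).adjMatrix ℝ *ᵥ x = μ • x) :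
    signedAdj G s *ᵥ signedSheetSum x = μ • signedSheetSum x := by
  rw [signedAdj_mulVec_signedSheetSum, hx, signedSheetSum_smul]

lemma isRegularOfDegree_signedCover {d : ℕ} (hG : G.IsRegularOfDegree d) :
    (signedCover G s).IsRegularOfDegree d := by
  rw [isRegularOfDegree_iff_mulVec_one] at hG ⊢
  ext ⟨v, a⟩
  rw [adjMatrix_signedCover_mulVec_apply]
  simpa [SimpleGraph.adjMatrix_mulVec_apply, SimpleGraph.neighborFinset_eq_filter,
    ← SimpleGraph.card_neighborFinset_eq_degree] using congrFun hG v

lemma connected_signedCover {d : ℕ} (hG : G.IsRegularOfDegree d) (hconn : G.Connected)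
    (hs : ∀ y, signedAdj G s *ᵥ y = (d : ℝ) • y → y = 0) : (signedCover G s).Connected := by
  have := hconn.nonempty
  refine ⟨(preconnected_iff_forall_mulVec_eq_degree_smul (isRegularOfDegree_signedCover hG)).2
    fun x hx ↦ ?_⟩
  have hsheet := (preconnected_iff_forall_mulVec_eq_degree_smul hG).1 hconn.preconnected _
    (adjMatrix_mulVec_sheetSum_eq_smul hx)
  have hsigned := hs _ (signedAdj_mulVec_signedSheetSum_eq_smul hx)
  have htwo (v : V) (a : ℤˣ) : 2 * x (v, a) = sheetSum x v := by
    rw [two_mul_eq_sheetSum_add_mul_signedSheetSum, hsigned, Pi.zero_apply, mul_zero, add_zero]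
  rintro ⟨u, a⟩ ⟨v, b⟩
  linarith [htwo u a, htwo v b, hsheet u v]

end SignedCover

section CompleteBipartite

variable {V W : Type*}

lemma adjMatrix_completeBipartiteGraph :
    (completeBipartiteGraph V W).adjMatrix ℝ =
      fromBlocks 0 (of fun _ _ ↦ 1) (of fun _ _ ↦ 1) 0 := by
  ext (i | i) (j | j) <;> simp

lemma completeBipartiteGraph_connected [Nonempty V] [Nonempty W] :
    (completeBipartiteGraph V W).Connected := by
  have v₀ := Classical.arbitrary V
  have w₀ := Classical.arbitrary W
  have hadj (v : V) (w : W) : (completeBipartiteGraph V W).Reachable (.inl v) (.inr w) :=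
    SimpleGraph.Adj.reachable (by simp)
  refine SimpleGraph.connected_iff_exists_forall_reachable _ |>.2 ⟨.inl v₀, ?_⟩
  rintro (v | w)
  · exact (hadj v₀ w₀).trans (hadj v w₀).symm
  · exact hadj v₀ w

variable [Fintype V] [Fintype W]

lemma adjMatrix_completeBipartiteGraph_mulVec_s4 (x : V ⊕ W → ℝ) :
    (completeBipartiteGraph V W).adjMatrix ℝ *ᵥ x =
      Sum.elim (fun _ ↦ ∑ w, x (.inr w)) (fun _ ↦ ∑ v, x (.inl v)) := by
  rw [adjMatrix_completeBipartiteGraph, fromBlocks_mulVec]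
  ext (v | w) <;> simp [mulVec, dotProduct]

lemma sq_eq_card_mul_card_of_adjMatrix_completeBipartiteGraph_mulVec_eq_smul {μ : ℝ} (hμ : μ ≠ 0)
    {x : V ⊕ W → ℝ} (hx : x ≠ 0)
    (hAx : (completeBipartiteGraph V W).adjMatrix ℝ *ᵥ x = μ • x) :
    μ ^ 2 = Fintype.card V * Fintype.card W := by
  rw [adjMatrix_completeBipartiteGraph_mulVec_s4] at hAx
  have hinl (v : V) : ∑ w, x (.inr w) = μ * x (.inl v) := congrFun hAx (.inl v)
  have hinr (w : W) : ∑ v, x (.inl v) = μ * x (.inr w) := congrFun hAx (.inr w)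
  have hsum_inl : Fintype.card V * ∑ w, x (.inr w) = μ * ∑ v, x (.inl v) := by
    rw [Finset.mul_sum (s := .univ) (a := μ), ← Finset.sum_congr rfl fun v _ ↦ hinl v,
      Finset.sum_const, Finset.card_univ, nsmul_eq_mul]
  have hsum_inr : Fintype.card W * ∑ v, x (.inl v) = μ * ∑ w, x (.inr w) := by
    rw [Finset.mul_sum (s := .univ) (a := μ), ← Finset.sum_congr rfl fun w _ ↦ hinr w,
      Finset.sum_const, Finset.card_univ, nsmul_eq_mul]
  obtain ⟨i, hi⟩ := Function.ne_iff.1 hx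
  have hμi : μ * x i ≠ 0 := mul_ne_zero hμ hi
  rcases i with v | w
  · rw [← hinl] at hμi
    refine mul_right_cancel₀ hμi ?_
    linear_combination (-μ) * hsum_inr - Fintype.card W * hsum_inl
  · rw [← hinr] at hμi
    refine mul_right_cancel₀ hμi ?_
    linear_combination (-μ) * hsum_inl - Fintype.card V * hsum_inr

end CompleteBipartite

section BipartiteRamanujan

variable {V W : Type*} {q : ℕ} {G : SimpleGraph V}

lemma exists_sign_of_isBipartite (hG : G.IsBipartite) :
    ∃ c : V → ℝ, (∀ v, c v ≠ 0) ∧ ∀ u v, G.Adj u v → c u = -c v := by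
  obtain ⟨C⟩ := hG
  refine ⟨fun v ↦ if C v = 0 then 1 else -1, fun v ↦ by dsimp only; split_ifs <;> norm_num,
    fun u v huv ↦ ?_⟩
  have hC := C.valid huv
  dsimp only
  split_ifs <;> first | omega | norm_num

variable [Fintype V] [Fintype W]

/-- Bipartite `(q + 1)`-regular Ramanujan graphs; the Ramanujan condition is stated for
eigenvectors of the adjacency matrix. -/
structure IsBipartiteRamanujan (q : ℕ) (G : SimpleGraph V) : Prop where
  connected : G.Connected
  isBipartite : G.IsBipartite
  isRegularOfDegree : G.IsRegularOfDegree (q + 1)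
  abs_eigenvalue : ∀ (μ : ℝ) (x : V → ℝ), x ≠ 0 → G.adjMatrix ℝ *ᵥ x = μ • x →
    |μ| = q + 1 ∨ |μ| ≤ 2 * √q

lemma isBipartiteRamanujan_completeBipartiteGraph (q : ℕ) :
    IsBipartiteRamanujan q (completeBipartiteGraph (Fin (q + 1)) (Fin (q + 1))) where
  connected := completeBipartiteGraph_connected
  isBipartite := (SimpleGraph.CompleteBipartiteGraph.bicoloring _ _).colorable
  isRegularOfDegree := by
    rw [isRegularOfDegree_iff_mulVec_one, adjMatrix_completeBipartiteGraph_mulVec_s4]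
    ext (i | i) <;> simp
  abs_eigenvalue μ x hx hAx := by
    rcases eq_or_ne μ 0 with rfl | hμ
    · exact .inr (by simp)
    · have hsq := sq_eq_card_mul_card_of_adjMatrix_completeBipartiteGraph_mulVec_eq_smul hμ hx hAx
      rw [Fintype.card_fin, Nat.cast_succ, ← sq, sq_eq_sq_iff_abs_eq_abs,
        abs_of_nonneg (by positivity : (0 : ℝ) ≤ q + 1)] at hsq
      exact .inl hsq

lemma IsBipartiteRamanujan.of_iso {H : SimpleGraph W} (hG : IsBipartiteRamanujan q G)
    (e : G ≃g H) : IsBipartiteRamanujan q H where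
  connected := e.connected_iff.1 hG.connected
  isBipartite := hG.isBipartite.of_hom e.symm.toHom
  isRegularOfDegree w := by
    rw [← e.symm.degree_eq]
    exact hG.isRegularOfDegree.degree_eq _
  abs_eigenvalue μ x hx hAx := by
    refine hG.abs_eigenvalue μ (x ∘ e) ?_ ?_
    · exact fun h ↦ hx (e.surjective.injective_comp_right h)
    · rw [adjMatrix_mulVec_comp, hAx]
      rfl

lemma abs_le_of_signedAdj_mulVec_eq_smul (hG : G.IsBipartite) {s : Sym2 V → ℤˣ} {b : ℝ}
    (hs : ∀ z > b, 0 < (signedAdj G s).charpoly.eval z) {μ : ℝ} {x : V → ℝ} (hx : x ≠ 0)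
    (hμ : signedAdj G s *ᵥ x = μ • x) : |μ| ≤ b := by
  obtain ⟨c, hc0, hc⟩ := exists_sign_of_isBipartite hG
  have hsymm : signedAdj G s *ᵥ (c * x) = (-μ) • (c * x) := by
    rw [mulVec_mul_eq_neg fun i j hij ↦ hc i j (of_not_not fun hadj ↦ hij ?_), hμ, neg_smul,
      mul_smul_comm]
    rw [signedAdj_apply, if_neg hadj]
  have hcx : c * x ≠ 0 := by
    obtain ⟨v, hv⟩ := Function.ne_iff.1 hx
    exact Function.ne_iff.2 ⟨v, mul_ne_zero (hc0 v) hv⟩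
  exact abs_le'.2 ⟨le_of_mulVec_eq_smul_of_charpoly_eval_pos hs hx hμ,
    le_of_mulVec_eq_smul_of_charpoly_eval_pos hs hcx hsymm⟩

lemma two_mul_lt_sq_add_one {r : ℝ} (hr : 1 < r) : 2 * r < r ^ 2 + 1 := by
  nlinarith [sq_pos_of_pos (sub_pos.2 hr)]

lemma IsBipartiteRamanujan.exists_signedCover (hq : 2 ≤ q) (hG : IsBipartiteRamanujan q G) :
    ∃ s, IsBipartiteRamanujan q (signedCover G s) := by
  have hsqrt_sq : √(q : ℝ) ^ 2 = q := Real.sq_sqrt q.cast_nonneg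
  have hsqrt : 1 < √(q : ℝ) := Real.lt_sqrt_of_sq_lt (by exact_mod_cast hq)
  have hlt : 2 * √(q : ℝ) < (q + 1 : ℕ) := by
    simpa [hsqrt_sq] using two_mul_lt_sq_add_one hsqrt
  obtain ⟨s, hs⟩ := exists_forall_gt_charpoly_signedAdj_eval_pos G hsqrt.le fun v ↦ by
    simp [hG.isRegularOfDegree.degree_eq, hsqrt_sq]
  have hbound {μ : ℝ} {y : V → ℝ} : y ≠ 0 → signedAdj G s *ᵥ y = μ • y → |μ| ≤ 2 * √q :=
    abs_le_of_signedAdj_mulVec_eq_smul hG.isBipartite hs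
  refine ⟨s, ?_, ?_, isRegularOfDegree_signedCover hG.isRegularOfDegree, fun μ x hx hAx ↦ ?_⟩
  · refine connected_signedCover hG.isRegularOfDegree hG.connected fun y hy ↦ ?_
    by_contra hy0
    exact hlt.not_ge ((le_abs_self _).trans (hbound hy0 hy))
  · exact hG.isBipartite.of_hom ⟨Prod.fst, fun h ↦ (signedCover_adj.1 h).1⟩
  · rcases eq_or_ne (signedSheetSum x) 0 with hsigned | hsigned
    · refine hG.abs_eigenvalue μ (sheetSum x) (fun hsheet ↦ hx (funext fun ⟨v, a⟩ ↦ ?_))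
        (adjMatrix_mulVec_sheetSum_eq_smul hAx)
      simpa [hsheet, hsigned] using two_mul_eq_sheetSum_add_mul_signedSheetSum x v a
    · exact .inr (hbound hsigned (signedAdj_mulVec_signedSheetSum_eq_smul hAx))

lemma exists_isBipartiteRamanujan (hq : 2 ≤ q) (N : ℕ) :
    ∃ (V : Type) (_ : Fintype V) (G : SimpleGraph V),
      N < Fintype.card V ∧ IsBipartiteRamanujan q G := by
  induction N with
  | zero => exact ⟨_, _, _, Fintype.card_pos, isBipartiteRamanujan_completeBipartiteGraph q⟩
  | succ N ih =>
    obtain ⟨V, _, G, hN, hG⟩ := ih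
    obtain ⟨s, hs⟩ := hG.exists_signedCover hq
    refine ⟨_, _, _, ?_, hs⟩
    rw [Fintype.card_prod, Fintype.card_units_int]
    omega

end BipartiteRamanujan

theorem exists_ramanujan_prime_power_general (q : ℕ) (hq : 2 ≤ q) (N : ℕ) :
    ∃ (n : ℕ) (G : SimpleGraph (Fin n)),
      n > N ∧ G.Connected ∧ G.IsBipartite ∧ G.IsRegularOfDegree (q + 1) ∧
      ∀ lam : ℝ, (∃ x : Fin n → ℝ, x ≠ 0 ∧ G.adjMatrix ℝ *ᵥ x = lam • x) →
        |lam| = (q : ℝ) + 1 ∨ |lam| ≤ 2 * Real.sqrt (q : ℝ) := by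
  obtain ⟨V, _, G, hN, hG⟩ := exists_isBipartiteRamanujan hq N
  have hH := hG.of_iso (G.overFinIso rfl)
  exact ⟨_, _, hN, hH.connected, hH.isBipartite, hH.isRegularOfDegree,
    fun μ ⟨x, hx, hAx⟩ ↦ hH.abs_eigenvalue μ x hx hAx⟩

/-- **Lubotzky–Phillips–Sarnak, Margulis, Morgenstern**: for every prime power `q` there
exist infinitely many finite connected `(q+1)`-regular Ramanujan graphs. -/
theorem exists_ramanujan_prime_power (q : ℕ) (hq : IsPrimePow q) (N : ℕ) :
    ∃ (n : ℕ) (G : SimpleGraph (Fin n)),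
      n > N ∧ G.Connected ∧ G.IsRegularOfDegree (q + 1) ∧
      ∀ lam : ℝ, (∃ x : Fin n → ℝ, x ≠ 0 ∧ G.adjMatrix ℝ *ᵥ x = lam • x) →
        |lam| = (q : ℝ) + 1 ∨ |lam| ≤ 2 * Real.sqrt (q : ℝ) := by
  obtain ⟨n, G, hN, hconn, -, hreg, heig⟩ := exists_ramanujan_prime_power_general q hq.two_le N
  exact ⟨n, G, hN, hconn, hreg, heig⟩
end
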